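/- arXiv:2406.19350 — 2 statements merged into one kernel-verified Lean document; each statement's English description precedes it below -/
import Mathlib

section
/- Let U : ℝ² → ℝ² be a continuously differentiable vector field such that the divergence ∂U₁/∂x + ∂U₂/∂y is nonzero at every point of ℝ². Let x : ℝ → ℝ² be a solution of the autonomous system x'(t) = U(x(t)) whose forward orbit {x(t) : t ≥ 0} is bounded. Then there exists a point p ∈ ℝ² with U(p) = 0 such that x(t) → p as t → ∞ (i.e., the ω-limit set of the orbit is a single equilibrium). -/
/-!
For a bounded orbit `x`, close the arc `x|[0, T]` by the cone over it with apex `0`, and let `W` be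
a mollification of the winding function of this loop. The gradient of `W` is the mollified loop
rotated by a right angle, and `U` is tangent to the orbit, so in `∫ |DW(U)|` only the two closing
segments survive as the mollification is refined, and they contribute an amount independent of `T`.
Integrating `div U`, which has constant sign, against a smooth version of `|W|` then bounds `∫ |W|`;
this replaces the Jordan curve theorem. Green's formula for `U` rotated by a right angle turns that
into a bound for `∫₀ᵀ |U(x(t))|² dt`, so `U(x(t)) → 0` and all limit points are equilibria.

If `DU` is invertible at a limit point, that point is isolated among the equilibria and the orbit
converges to it. Otherwise `tr DU ≠ 0` gives `DU` the form `(u, v) ↦ (0, τ v)`. If there are several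
limit points, they project onto an interval of the `u`-axis, and near one over the interior of this
interval the second component of `U(x(t))` dominates `‖U(x(t))‖` while its absolute value is
monotone at a rate comparable with `‖U(x(t))‖`. So the remaining length of the orbit is controlled
by the change of that absolute value, and the orbit converges.
-/

open Filter MeasureTheory Metric Set Topology
open scoped Convolution

namespace PoincareBendixson

/-- The plane `ℝ²`, with the coordinates and the (sup) norm of the main theorem. -/
abbrev Plane : Type := Fin 2 → ℝ

/-- The signed area `a ∧ b` of the parallelogram spanned by `a` and `b`. -/
def wedge (a b : Plane) : ℝ := a 0 * b 1 - a 1 * b 0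

/-- The divergence `∑ᵢ ∂Vᵢ/∂xᵢ` of a vector field in coordinates. -/
noncomputable def divergence {ι : Type*} [Fintype ι] [DecidableEq ι]
    (V : (ι → ℝ) → (ι → ℝ)) (p : ι → ℝ) : ℝ :=
  ∑ i, fderiv ℝ V p (Pi.single i 1) i

/-- The function `z ↦ ∫_K ρ(y(ω) - z) k(ω) dν(ω)`: for an even `ρ`, the mollification by `ρ` of the
image under `y` of the signed measure `k ν` on `K`. -/
noncomputable def mollifiedPushforward {E Ω : Type*} [AddGroup E] [MeasurableSpace Ω]
    (ν : Measure Ω) (K : Set Ω) (y : Ω → E) (k : Ω → ℝ) (ρ : E → ℝ) (z : E) : ℝ :=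
  ∫ ω in K, ρ (y ω - z) * k ω ∂ν

theorem continuous_of_forall_hasDerivAt {E : Type*} [NormedAddCommGroup E] [NormedSpace ℝ E]
    {x x' : ℝ → E} (hx : ∀ t, HasDerivAt x (x' t) t) : Continuous x :=
  continuous_iff_continuousAt.2 fun t => (hx t).continuousAt

section Wedge

theorem wedge_smul_left (c : ℝ) (a b : Plane) : wedge (c • a) b = c * wedge a b := by
  simp only [wedge, Pi.smul_apply, smul_eq_mul]; ring

theorem wedge_smul_right (c : ℝ) (a b : Plane) : wedge a (c • b) = c * wedge a b := by
  simp only [wedge, Pi.smul_apply, smul_eq_mul]; ring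

theorem abs_wedge_le (a b : Plane) : |wedge a b| ≤ 2 * ‖a‖ * ‖b‖ := by
  have ha (i : Fin 2) : |a i| ≤ ‖a‖ := norm_le_pi_norm a i
  have hb (i : Fin 2) : |b i| ≤ ‖b‖ := norm_le_pi_norm b i
  calc |a 0 * b 1 - a 1 * b 0| ≤ |a 0 * b 1| + |a 1 * b 0| := abs_sub _ _
    _ = |a 0| * |b 1| + |a 1| * |b 0| := by rw [abs_mul, abs_mul]
    _ ≤ ‖a‖ * ‖b‖ + ‖a‖ * ‖b‖ := by gcongr; exacts [ha 0, hb 1, ha 1, hb 0]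
    _ = 2 * ‖a‖ * ‖b‖ := by ring

theorem eq_smul_single_add_smul_single (a : Plane) :
    a = a 0 • Pi.single 0 1 + a 1 • Pi.single 1 1 := by
  ext i; fin_cases i <;> simp

theorem wedge_map_add_wedge_map (A : Plane →L[ℝ] Plane) (a b : Plane) :
    wedge (A a) b + wedge a (A b) = (∑ i, A (Pi.single i 1) i) * wedge a b := by
  have hA (v : Plane) : A v = v 0 • A (Pi.single 0 1) + v 1 • A (Pi.single 1 1) := by
    conv_lhs => rw [eq_smul_single_add_smul_single v, map_add, map_smul, map_smul]
  rw [hA a, hA b, Fin.sum_univ_two]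
  simp only [wedge, Pi.add_apply, Pi.smul_apply, smul_eq_mul]
  ring

@[fun_prop]
theorem continuous_wedge {X : Type*} [TopologicalSpace X] {f g : X → Plane} (hf : Continuous f)
    (hg : Continuous g) : Continuous fun x => wedge (f x) (g x) := by
  unfold wedge; fun_prop

theorem hasDerivAt_wedge {f g : ℝ → Plane} {f' g' : Plane} {t : ℝ} (hf : HasDerivAt f f' t)
    (hg : HasDerivAt g g' t) :
    HasDerivAt (fun s => wedge (f s) (g s)) (wedge f' (g t) + wedge (f t) g') t := by
  rw [hasDerivAt_pi] at hf hg
  exact (((hf 0).mul (hg 1)).sub ((hf 1).mul (hg 0))).congr_deriv (by unfold wedge; ring)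

end Wedge

section Divergence

variable {ι : Type*} [Fintype ι] [DecidableEq ι] {V : (ι → ℝ) → (ι → ℝ)}

theorem continuous_divergence (hV : ContDiff ℝ 1 V) : Continuous (divergence V) := by
  unfold divergence; fun_prop

theorem divergence_neg (p : ι → ℝ) : divergence (fun q => -V q) p = -divergence V p := by
  simp [divergence, fderiv_fun_neg]

theorem integral_mul_divergence (hV : ContDiff ℝ 1 V) {g : (ι → ℝ) → ℝ} (hg : ContDiff ℝ 1 g)
    (hgs : HasCompactSupport g) :
    ∫ z, g z * divergence V z = -∫ z, fderiv ℝ g z (V z) := by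
  have hgc := hg.continuous
  have hVc := hV.continuous
  have hVi (i : ι) : ContDiff ℝ 1 fun z => V z i := contDiff_pi.1 hV i
  have int_left (i : ι) (v : ι → ℝ) : Integrable fun z => g z * fderiv ℝ V z v i :=
    Continuous.integrable_of_hasCompactSupport (by fun_prop) hgs.mul_right
  have int_right (i : ι) (v : ι → ℝ) : Integrable fun z => fderiv ℝ g z v * V z i :=
    Continuous.integrable_of_hasCompactSupport (by fun_prop) (hgs.fderiv_apply ℝ v).mul_right
  have component (i : ι) (v : ι → ℝ) :
      ∫ z, g z * fderiv ℝ V z v i = -∫ z, fderiv ℝ g z v * V z i := by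
    have hcomp (z : ι → ℝ) : fderiv ℝ (fun q => V q i) z v = fderiv ℝ V z v i := by
      rw [fderiv_apply (hV.differentiable one_ne_zero z) i]; rfl
    have := integral_mul_fderiv_eq_neg_fderiv_mul_of_integrable (μ := volume)
      (int_right i v) (by simpa only [hcomp] using int_left i v)
      (Continuous.integrable_of_hasCompactSupport (by fun_prop) hgs.mul_right)
      (fun z _ => hg.differentiable one_ne_zero z) fun z _ => (hVi i).differentiable one_ne_zero z
    simpa only [hcomp] using this
  have expand (z : ι → ℝ) :
      fderiv ℝ g z (V z) = ∑ i, fderiv ℝ g z (Pi.single i 1) * V z i := by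
    conv_lhs => rw [pi_eq_sum_univ' (V z), map_sum]
    simp [mul_comm]
  simp_rw [divergence, Finset.mul_sum, expand]
  rw [integral_finsetSum _ fun i _ => int_left i _, integral_finsetSum _ fun i _ => int_right i _,
    ← Finset.sum_neg_distrib]
  exact Finset.sum_congr rfl fun i _ => component i _

end Divergence

theorem norm_normed_convolution_le {E : Type*} [NormedAddCommGroup E] [NormedSpace ℝ E]
    [FiniteDimensional ℝ E] [MeasurableSpace E] [BorelSpace E] {μ : Measure E}
    [μ.IsAddHaarMeasure] (φ : ContDiffBump (0 : E)) {f : E → ℝ} {p : E} {F : ℝ}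
    (hF : ∀ q ∈ ball p φ.rOut, ‖f q‖ ≤ F) :
    ‖(φ.normed μ ⋆[ContinuousLinearMap.lsmul ℝ ℝ, μ] f) p‖ ≤ F := by
  have hmass : ∫ q, φ.normed μ q * F ∂μ = F := by
    rw [integral_mul_const, φ.integral_normed, one_mul]
  refine (norm_integral_le_of_norm_le (φ.integrable_normed.mul_const F) ?_).trans_eq hmass
  refine Eventually.of_forall fun q => ?_
  rw [ContinuousLinearMap.lsmul_apply, norm_smul, Real.norm_of_nonneg (φ.nonneg_normed q)]
  by_cases hq : q ∈ ball 0 φ.rOut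
  · exact mul_le_mul_of_nonneg_left (hF _ (by simpa [mem_ball_iff_norm] using hq))
      (φ.nonneg_normed q)
  · rw [← φ.support_normed_eq (μ := μ), Function.notMem_support] at hq
    simp [hq]

section MollifiedPushforward

variable {E : Type*} [NormedAddCommGroup E] {Ω : Type*} [MeasurableSpace Ω] {ν : Measure Ω}
  {K : Set Ω} {y : Ω → E} {k : Ω → ℝ} {ρ : E → ℝ}

theorem mollifiedPushforward_eq_zero {R ε : ℝ} (hyR : ∀ ω ∈ K, ‖y ω‖ ≤ R)
    (hρε : Function.support ρ ⊆ ball 0 ε) {z : E} (hz : R + ε ≤ ‖z‖) :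
    mollifiedPushforward ν K y k ρ z = 0 := by
  refine setIntegral_eq_zero_of_forall_eq_zero fun ω hω => ?_
  have : ρ (y ω - z) = 0 := by
    by_contra h
    linarith [hyR ω hω, mem_ball_zero_iff.1 (hρε h), norm_sub_norm_le z (y ω),
      norm_sub_rev z (y ω)]
  rw [this, zero_mul]

variable [TopologicalSpace Ω]

theorem hasCompactSupport_mollifiedPushforward [ProperSpace E] (hK : IsCompact K)
    (hy : Continuous y) (hρs : HasCompactSupport ρ) :
    HasCompactSupport (mollifiedPushforward ν K y k ρ) := by
  obtain ⟨R, hR⟩ := (hK.image hy).isBounded.exists_norm_le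
  obtain ⟨ε, hε⟩ := hρs.isCompact.isBounded.subset_ball 0
  refine HasCompactSupport.intro (isCompact_closedBall 0 (R + ε)) fun z hz => ?_
  refine mollifiedPushforward_eq_zero (fun ω hω => hR _ (mem_image_of_mem y hω))
    ((subset_tsupport ρ).trans hε) ?_
  simpa using (not_le.1 fun h => hz (mem_closedBall_zero_iff.2 h)).le

variable [T2Space Ω] [BorelSpace Ω] [IsFiniteMeasureOnCompacts ν]

theorem integral_mollifiedPushforward_mul [MeasurableSpace E] [BorelSpace E] {μ : Measure E}
    [IsFiniteMeasureOnCompacts μ] [SFinite μ] [SFinite ν] [SecondCountableTopology Ω]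
    (hK : IsCompact K) (hy : Continuous y) (hk : Continuous k) (hρ : Continuous ρ)
    (hρs : HasCompactSupport ρ) {f : E → ℝ} (hf : Continuous f) :
    ∫ z, mollifiedPushforward ν K y k ρ z * f z ∂μ =
      ∫ ω in K, k ω * (∫ z, ρ (y ω - z) * f z ∂μ) ∂ν := by
  let g : E → Ω → ℝ := fun z ω => ρ (y ω - z) * k ω * f z
  have hg : Continuous (Function.uncurry g) := by
    simp only [g, Function.uncurry_def]; fun_prop
  let S : Set E := (fun p : E × E => p.1 - p.2) '' ((y '' K) ×ˢ tsupport ρ)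
  have hS : IsCompact S := ((hK.image hy).prod hρs.isCompact).image continuous_sub
  have hgS (z : E) (ω : Ω) (hω : ω ∈ K) (hz : z ∉ S) : g z ω = 0 := by
    have : ρ (y ω - z) = 0 := by
      by_contra h
      exact hz ⟨(y ω, y ω - z), ⟨mem_image_of_mem y hω, subset_tsupport ρ h⟩, by simp⟩
    simp [g, this]
  have hint : Integrable (Function.uncurry g) (μ.prod (ν.restrict K)) := by
    rw [← Measure.restrict_univ (μ := μ), Measure.prod_restrict, ← IntegrableOn]
    refine (hg.continuousOn.integrableOn_compact (hS.prod hK)).of_forall_sdiff_eq_zero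
      (MeasurableSet.univ.prod hK.measurableSet) ?_
    rintro ⟨z, ω⟩ ⟨⟨_, hω⟩, hz⟩
    exact hgS z ω hω fun h => hz ⟨h, hω⟩
  simp_rw [mollifiedPushforward, ← integral_mul_const, ← integral_const_mul]
  rw [integral_integral_swap hint]
  exact integral_congr_ae <| Eventually.of_forall fun ω =>
    integral_congr_ae <| Eventually.of_forall fun z => by simp only; ring

variable [NormedSpace ℝ E] [FiniteDimensional ℝ E]

theorem hasFDerivAt_mollifiedPushforward (hK : IsCompact K) (hy : Continuous y)
    (hk : Continuous k) (hρ : ContDiff ℝ 1 ρ) (hρs : HasCompactSupport ρ) (z : E) :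
    HasFDerivAt (mollifiedPushforward ν K y k ρ)
      (∫ ω in K, -(k ω • fderiv ℝ ρ (y ω - z)) ∂ν) z := by
  have hρc := hρ.continuous
  have hDρ := hρ.continuous_fderiv one_ne_zero
  obtain ⟨C, hC⟩ := (hρs.fderiv ℝ).exists_bound_of_continuous hDρ
  refine hasFDerivAt_integral_of_dominated_of_fderiv_le (s := univ) (bound := fun ω => |k ω| * C)
    (F := fun z ω => ρ (y ω - z) * k ω) (F' := fun z ω => -(k ω • fderiv ℝ ρ (y ω - z)))
    univ_mem ?_ ?_ ?_ ?_ ?_ ?_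
  · exact Eventually.of_forall fun z => Continuous.aestronglyMeasurable (by fun_prop)
  · exact Continuous.continuousOn (by fun_prop) |>.integrableOn_compact hK
  · exact Continuous.aestronglyMeasurable (by fun_prop)
  · refine Eventually.of_forall fun ω z _ => ?_
    rw [norm_neg, norm_smul, Real.norm_eq_abs]
    gcongr
    exact hC _
  · exact Continuous.continuousOn (by fun_prop) |>.integrableOn_compact hK
  · refine Eventually.of_forall fun ω z _ => ?_
    have hsub : HasFDerivAt (fun z => y ω - z) (-ContinuousLinearMap.id ℝ E) z :=
      (hasFDerivAt_id z).const_sub _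
    have hcomp := (hρ.differentiable one_ne_zero (y ω - z)).hasFDerivAt.comp z hsub
    simpa using hcomp.mul_const (k ω)

theorem fderiv_mollifiedPushforward_apply (hK : IsCompact K) (hy : Continuous y)
    (hk : Continuous k) (hρ : ContDiff ℝ 1 ρ) (hρs : HasCompactSupport ρ) (z a : E) :
    fderiv ℝ (mollifiedPushforward ν K y k ρ) z a =
      -∫ ω in K, k ω * fderiv ℝ ρ (y ω - z) a ∂ν := by
  rw [(hasFDerivAt_mollifiedPushforward hK hy hk hρ hρs z).fderiv,
    integral_neg, neg_apply, ContinuousLinearMap.integral_apply]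
  · simp only [smul_apply, smul_eq_mul]
  · exact Continuous.continuousOn (by fun_prop) |>.integrableOn_compact hK

theorem contDiff_mollifiedPushforward (hK : IsCompact K) (hy : Continuous y)
    (hk : Continuous k) (hρ : ContDiff ℝ 1 ρ) (hρs : HasCompactSupport ρ) :
    ContDiff ℝ 1 (mollifiedPushforward ν K y k ρ) := by
  have hDρ := hρ.continuous_fderiv one_ne_zero
  obtain ⟨C, hC⟩ := (hρs.fderiv ℝ).exists_bound_of_continuous hDρ
  have hderiv := hasFDerivAt_mollifiedPushforward (ν := ν) hK hy hk hρ hρs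
  rw [contDiff_one_iff_fderiv]
  refine ⟨fun z => (hderiv z).differentiableAt, ?_⟩
  simp_rw [funext fun z => (hderiv z).fderiv]
  refine continuous_of_dominated (bound := fun ω => |k ω| * C) ?_ ?_ ?_ ?_
  · exact fun z => Continuous.aestronglyMeasurable (by fun_prop)
  · refine fun z => Eventually.of_forall fun ω => ?_
    rw [norm_neg, norm_smul, Real.norm_eq_abs]
    gcongr
    exact hC _
  · exact Continuous.continuousOn (by fun_prop) |>.integrableOn_compact hK
  · exact Eventually.of_forall fun ω => by fun_prop

variable [MeasurableSpace E] [BorelSpace E] {μ : Measure E} [μ.IsAddHaarMeasure]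

theorem tendsto_integral_mollifiedPushforward_mul [SecondCountableTopology Ω] [SFinite ν]
    (hK : IsCompact K) (hy : Continuous y) (hk : Continuous k) {f : E → ℝ} (hf : Continuous f)
    {φ : ℕ → ContDiffBump (0 : E)} (hφ : Tendsto (fun n => (φ n).rOut) atTop (𝓝 0)) :
    Tendsto (fun n => ∫ z, mollifiedPushforward ν K y k ((φ n).normed μ) z * f z ∂μ) atTop
      (𝓝 (∫ ω in K, k ω * f (y ω) ∂ν)) := by
  have hconv (n : ℕ) : ∫ z, mollifiedPushforward ν K y k ((φ n).normed μ) z * f z ∂μ =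
      ∫ ω in K, k ω * ((φ n).normed μ ⋆[ContinuousLinearMap.lsmul ℝ ℝ, μ] f) (y ω) ∂ν := by
    rw [integral_mollifiedPushforward_mul hK hy hk (φ n).continuous_normed
      (φ n).hasCompactSupport_normed hf]
    simp [convolution_eq_swap]
  have hconv_cont (n : ℕ) :
      Continuous ((φ n).normed μ ⋆[ContinuousLinearMap.lsmul ℝ ℝ, μ] f) :=
    (φ n).hasCompactSupport_normed.continuous_convolution_left _ (φ n).continuous_normed
      hf.locallyIntegrable
  simp_rw [hconv]
  obtain ⟨R, hR⟩ := (hK.image hy).isBounded.exists_norm_le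
  obtain ⟨F, hF⟩ := (isCompact_closedBall (0 : E) (R + 1)).exists_bound_of_continuousOn
    hf.continuousOn
  refine tendsto_integral_filter_of_dominated_convergence (fun ω => |k ω| * F) ?_ ?_ ?_ ?_
  · exact Eventually.of_forall fun n =>
      (hk.mul ((hconv_cont n).comp hy)).aestronglyMeasurable
  · filter_upwards [hφ.eventually_le_const one_pos] with n hn
    filter_upwards [ae_restrict_mem hK.measurableSet] with ω hω
    rw [norm_mul, Real.norm_eq_abs (k ω)]
    gcongr
    refine norm_normed_convolution_le (φ n) fun p hp => hF p (mem_closedBall_zero_iff.2 ?_)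
    linarith [hR _ (mem_image_of_mem y hω), mem_ball_iff_norm.1 hp,
      norm_le_norm_add_norm_sub' p (y ω)]
  · exact Continuous.continuousOn (by fun_prop) |>.integrableOn_compact hK
  · exact Eventually.of_forall fun ω =>
      (ContDiffBump.convolution_tendsto_right_of_continuous hφ hf (y ω)).const_mul _

end MollifiedPushforward

theorem integral_integral_deriv_add_deriv {F G F' G' : ℝ → ℝ → ℝ} {a b c d : ℝ}
    (hF : ∀ t r, HasDerivAt (F t) (F' t r) r) (hG : ∀ t r, HasDerivAt (G · r) (G' t r) t)
    (hF' : Continuous (Function.uncurry F')) (hG' : Continuous (Function.uncurry G')) :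
    ∫ t in a..b, ∫ r in c..d, (F' t r + G' t r) =
      (∫ t in a..b, (F t d - F t c)) + ∫ r in c..d, (G b r - G a r) := by
  have hF't (t : ℝ) : Continuous (F' t) := hF'.comp (by fun_prop : Continuous fun r => (t, r))
  have hG't (t : ℝ) : Continuous (G' t) := hG'.comp (by fun_prop : Continuous fun r => (t, r))
  have hG'r (r : ℝ) : Continuous (G' · r) := hG'.comp (by fun_prop : Continuous fun t => (t, r))
  have hcont {H : ℝ → ℝ → ℝ} (hH : Continuous (Function.uncurry H)) :
      IntervalIntegrable (fun t => ∫ r in c..d, H t r) volume a b :=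
    (intervalIntegral.continuous_parametric_intervalIntegral_of_continuous' hH c d
      ).intervalIntegrable _ _
  simp_rw [fun t => intervalIntegral.integral_add ((hF't t).intervalIntegrable (μ := volume) c d)
    ((hG't t).intervalIntegrable c d)]
  rw [intervalIntegral.integral_add (hcont hF') (hcont hG')]
  congr 1
  · exact intervalIntegral.integral_congr fun t _ =>
      intervalIntegral.integral_eq_sub_of_hasDerivAt (fun r _ => hF t r)
        ((hF't t).intervalIntegrable _ _)
  · rw [intervalIntegral_intervalIntegral_swap
      ((hG'.continuousOn.integrableOn_compact (isCompact_uIcc.prod isCompact_uIcc)).mono_set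
        (prod_mono uIoc_subset_uIcc uIoc_subset_uIcc))]
    exact intervalIntegral.integral_congr fun r _ =>
      intervalIntegral.integral_eq_sub_of_hasDerivAt (fun t _ => hG t r)
        ((hG'r r).intervalIntegrable _ _)

/-- The parameter rectangle `(t, r) ∈ [0, T] × [0, 1]` of the cone over an arc. -/
def coneRectangle (T : ℝ) : Set (ℝ × ℝ) := Icc 0 T ×ˢ Icc 0 1

/-- The cone with apex `0` over the curve `x`, in the coordinates `ω = (t, r)`. -/
def cone (x : ℝ → Plane) (ω : ℝ × ℝ) : Plane := ω.2 • x ω.1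

/-- The signed Jacobian determinant of `cone x`, where `x'` stands for the derivative of `x`. -/
def coneJacobian (x x' : ℝ → Plane) (ω : ℝ × ℝ) : ℝ := ω.2 * wedge (x ω.1) (x' ω.1)

section Cone

variable {x x' : ℝ → Plane} {T : ℝ}

theorem isCompact_coneRectangle : IsCompact (coneRectangle T) := isCompact_Icc.prod isCompact_Icc

@[fun_prop]
theorem continuous_cone (hx : Continuous x) : Continuous (cone x) := by
  unfold cone; fun_prop

@[fun_prop]
theorem continuous_coneJacobian (hx : Continuous x) (hx' : Continuous x') :
    Continuous (coneJacobian x x') := by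
  unfold coneJacobian; fun_prop

theorem norm_smul_le_of_mem_Icc {E : Type*} [SeminormedAddCommGroup E] [NormedSpace ℝ E] {r : ℝ}
    (hr : r ∈ Icc 0 1) {a : E} {R : ℝ} (ha : ‖a‖ ≤ R) : ‖r • a‖ ≤ R := by
  rw [norm_smul, Real.norm_of_nonneg hr.1]
  exact (mul_le_of_le_one_left (norm_nonneg a) hr.2).trans ha

theorem norm_cone_le {R : ℝ} (hR : ∀ t, 0 ≤ t → ‖x t‖ ≤ R) {ω : ℝ × ℝ}
    (hω : ω ∈ coneRectangle T) : ‖cone x ω‖ ≤ R :=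
  norm_smul_le_of_mem_Icc hω.2 (hR _ hω.1.1)

theorem setIntegral_coneRectangle (hT : 0 ≤ T) {g : ℝ × ℝ → ℝ} (hg : Continuous g) :
    ∫ ω in coneRectangle T, g ω = ∫ t in (0 : ℝ)..T, ∫ r in (0 : ℝ)..1, g (t, r) := by
  rw [coneRectangle, Measure.volume_eq_prod, setIntegral_prod _
    (hg.continuousOn.integrableOn_compact isCompact_coneRectangle)]
  simp_rw [intervalIntegral.integral_of_le hT, intervalIntegral.integral_of_le zero_le_one,
    integral_Icc_eq_integral_Ioc]

theorem setIntegral_coneJacobian_mul_divergence {V : Plane → Plane} (hV : ContDiff ℝ 1 V)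
    (hx : ∀ t, HasDerivAt x (x' t) t) (hx' : Continuous x') (hT : 0 ≤ T) :
    ∫ ω in coneRectangle T, coneJacobian x x' ω * divergence V (cone x ω) =
      (∫ t in (0 : ℝ)..T, wedge (V (x t)) (x' t)) +
        ((∫ r in (0 : ℝ)..1, wedge (x T) (V (r • x T))) -
          ∫ r in (0 : ℝ)..1, wedge (x 0) (V (r • x 0))) := by
  have hxc : Continuous x := continuous_of_forall_hasDerivAt hx
  have hVc := hV.continuous
  have hdivc := continuous_divergence hV
  have hV' (p : Plane) := (hV.differentiable one_ne_zero p).hasFDerivAt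
  let F' (t r : ℝ) : ℝ :=
    wedge (V (r • x t)) (x' t) + r * wedge (fderiv ℝ V (r • x t) (x t)) (x' t)
  let G' (t r : ℝ) : ℝ :=
    wedge (x' t) (V (r • x t)) + wedge (x t) (fderiv ℝ V (r • x t) (r • x' t))
  have hF (t r : ℝ) : HasDerivAt (fun r => r * wedge (V (r • x t)) (x' t)) (F' t r) r := by
    have hray : HasDerivAt (fun r : ℝ => r • x t) (x t) r := by
      simpa using (hasDerivAt_id r).smul_const (x t)
    refine ((hasDerivAt_id r).mul (hasDerivAt_wedge ((hV' (r • x t)).comp_hasDerivAt r hray)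
      (hasDerivAt_const r (x' t)))).congr_deriv ?_
    simp [F', wedge]
  have hG (t r : ℝ) : HasDerivAt (fun t => wedge (x t) (V (r • x t))) (G' t r) t :=
    hasDerivAt_wedge (hx t) ((hV' (r • x t)).comp_hasDerivAt t ((hx t).const_smul r))
  have hsum (t r : ℝ) : coneJacobian x x' (t, r) * divergence V (cone x (t, r)) =
      F' t r + G' t r := by
    have := wedge_map_add_wedge_map (fderiv ℝ V (r • x t)) (x t) (x' t)
    rw [coneJacobian, cone, divergence, mul_assoc, mul_comm (wedge _ _), ← this]
    simp only [F', G', map_smul, wedge, Pi.smul_apply, smul_eq_mul]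
    ring
  rw [setIntegral_coneRectangle hT (by fun_prop)]
  simp_rw [hsum]
  rw [integral_integral_deriv_add_deriv hF hG
    (by simp only [F', Function.uncurry_def]; fun_prop)
    (by simp only [G', Function.uncurry_def]; fun_prop),
    ← intervalIntegral.integral_sub (Continuous.intervalIntegrable (by fun_prop) _ _)
      (Continuous.intervalIntegrable (by fun_prop) _ _)]
  simp

end Cone

/-- The mollified winding function of the arc `x|[0, T]` closed up by the segments joining its
end points to `0`. -/
noncomputable def windingFunction (ρ : Plane → ℝ) (x x' : ℝ → Plane) (T : ℝ) : Plane → ℝ :=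
  mollifiedPushforward volume (coneRectangle T) (cone x) (coneJacobian x x') ρ

/-- The mollification by `ρ` of the image under the curve `y` of Lebesgue measure on `[a, b]`. -/
noncomputable def curveDensity (ρ : Plane → ℝ) (y : ℝ → Plane) (a b : ℝ) (z : Plane) : ℝ :=
  ∫ t in a..b, ρ (y t - z)

section CurveDensity

variable {ρ : Plane → ℝ} {y : ℝ → Plane} {a b : ℝ}

theorem curveDensity_eq_mollifiedPushforward (hab : a ≤ b) :
    curveDensity ρ y a b = mollifiedPushforward volume (Icc a b) y 1 ρ := by
  ext z
  simp [curveDensity, mollifiedPushforward, intervalIntegral.integral_of_le hab,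
    integral_Icc_eq_integral_Ioc]

theorem integrable_curveDensity (hy : Continuous y) (hρ : ContDiff ℝ 1 ρ)
    (hρs : HasCompactSupport ρ) (hab : a ≤ b) : Integrable (curveDensity ρ y a b) := by
  rw [curveDensity_eq_mollifiedPushforward hab]
  exact (contDiff_mollifiedPushforward isCompact_Icc hy continuous_one hρ
    hρs).continuous.integrable_of_hasCompactSupport
    (hasCompactSupport_mollifiedPushforward isCompact_Icc hy hρs)

theorem integral_curveDensity (hy : Continuous y) (hρ : Continuous ρ)
    (hρs : HasCompactSupport ρ) (hρ1 : ∫ z, ρ z = 1) (hab : a ≤ b) :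
    ∫ z, curveDensity ρ y a b z = b - a := by
  have h := integral_mollifiedPushforward_mul (ν := volume) (μ := volume) (isCompact_Icc (a := a)
    (b := b)) hy continuous_one hρ hρs (continuous_const (y := (1 : ℝ)))
  simp only [mul_one, integral_sub_left_eq_self ρ, hρ1] at h
  rw [curveDensity_eq_mollifiedPushforward hab, h]
  simp [hab]

theorem abs_integral_mul_le_mul_curveDensity (hy : Continuous y) (hρ : Continuous ρ)
    (hρ0 : ∀ z, 0 ≤ ρ z) (hab : a ≤ b) {g : ℝ → ℝ} {C : ℝ} {z : Plane}
    (hg : ∀ t ∈ Ioc a b, ρ (y t - z) ≠ 0 → |g t| ≤ C) :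
    |∫ t in a..b, ρ (y t - z) * g t| ≤ C * curveDensity ρ y a b z := by
  rw [curveDensity, ← intervalIntegral.integral_const_mul, ← Real.norm_eq_abs]
  refine intervalIntegral.norm_integral_le_of_norm_le hab (Eventually.of_forall fun t ht => ?_)
    (Continuous.intervalIntegrable (by fun_prop) _ _)
  rw [norm_mul, Real.norm_of_nonneg (hρ0 _), Real.norm_eq_abs, mul_comm C]
  by_cases h : ρ (y t - z) = 0
  · simp [h]
  · exact mul_le_mul_of_nonneg_left (hg t ht h) (hρ0 _)

end CurveDensity

section WindingFunction

variable {ρ : Plane → ℝ} {x x' : ℝ → Plane} {T : ℝ}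

theorem divergence_smul_const_sub (hρ : Differentiable ℝ ρ) (z a p : Plane) :
    divergence (fun q => ρ (q - z) • a) p = fderiv ℝ ρ (p - z) a := by
  have h := ((hρ (p - z)).hasFDerivAt.comp p ((hasFDerivAt_id p).sub_const z)).smul_const a
  rw [divergence, HasFDerivAt.fderiv (f := fun q => ρ (q - z) • a) h]
  conv_rhs => rw [eq_smul_single_add_smul_single a]
  simp [mul_comm]

theorem fderiv_windingFunction_apply (hρ : ContDiff ℝ 1 ρ) (hρs : HasCompactSupport ρ)
    (hx : ∀ t, HasDerivAt x (x' t) t) (hx' : Continuous x') (hT : 0 ≤ T) (z a : Plane) :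
    fderiv ℝ (windingFunction ρ x x' T) z a =
      -((∫ t in (0 : ℝ)..T, ρ (x t - z) * wedge a (x' t)) +
        ((∫ r in (0 : ℝ)..1, ρ (r • x T - z) * wedge (x T) a) -
          ∫ r in (0 : ℝ)..1, ρ (r • x 0 - z) * wedge (x 0) a)) := by
  have hxc : Continuous x := continuous_of_forall_hasDerivAt hx
  have green := setIntegral_coneJacobian_mul_divergence (V := fun q => ρ (q - z) • a)
    ((hρ.comp (contDiff_id.sub contDiff_const)).smul contDiff_const) hx hx' hT
  simp only [divergence_smul_const_sub (hρ.differentiable one_ne_zero), wedge_smul_left,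
    wedge_smul_right] at green
  rw [windingFunction, fderiv_mollifiedPushforward_apply isCompact_coneRectangle (by fun_prop)
    (by fun_prop) hρ hρs, green]

theorem abs_fderiv_windingFunction_apply_le {U : Plane → Plane} (hU : Continuous U)
    (hx : ∀ t, HasDerivAt x (U (x t)) t) {R M ε : ℝ} {L : NNReal}
    (hR : ∀ t, 0 ≤ t → ‖x t‖ ≤ R) (hM : ∀ z ∈ closedBall 0 (R + 1), ‖U z‖ ≤ M)
    (hL : LipschitzOnWith L U (closedBall 0 (R + 1))) (hρ : ContDiff ℝ 1 ρ) (hρ0 : ∀ z, 0 ≤ ρ z)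
    (hρε : Function.support ρ ⊆ ball 0 ε) (hε : ε ≤ 1) (hT : 0 ≤ T) (z : Plane) :
    |fderiv ℝ (windingFunction ρ x (fun t => U (x t)) T) z (U z)| ≤
      2 * (L * ε) * M * curveDensity ρ x 0 T z +
        (2 * R * M * curveDensity ρ (fun r => r • x T) 0 1 z +
          2 * R * M * curveDensity ρ (fun r => r • x 0) 0 1 z) := by
  have hxc : Continuous x := continuous_of_forall_hasDerivAt hx
  have hρs : HasCompactSupport ρ := HasCompactSupport.of_support_subset_isCompact
    (isCompact_closedBall 0 ε) (hρε.trans ball_subset_closedBall)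
  have near {p : Plane} (hp : ‖p‖ ≤ R) (hpz : ρ (p - z) ≠ 0) :
      ‖z - p‖ ≤ ε ∧ p ∈ closedBall 0 (R + 1) ∧ z ∈ closedBall 0 (R + 1) := by
    have hε' : ‖z - p‖ ≤ ε := norm_sub_rev z p ▸ (mem_ball_zero_iff.1 (hρε hpz)).le
    rw [mem_closedBall_zero_iff, mem_closedBall_zero_iff]
    exact ⟨hε', by linarith, by linarith [norm_le_norm_add_norm_sub' z p]⟩
  have segment {s : ℝ} (hs : 0 ≤ s) : |∫ r in (0 : ℝ)..1, ρ (r • x s - z) * wedge (x s) (U z)| ≤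
      2 * R * M * curveDensity ρ (fun r => r • x s) 0 1 z := by
    refine abs_integral_mul_le_mul_curveDensity (by fun_prop) hρ.continuous hρ0 zero_le_one
      fun r hr h => (abs_wedge_le _ _).trans ?_
    obtain ⟨-, -, hz⟩ := near (norm_smul_le_of_mem_Icc (Ioc_subset_Icc_self hr) (hR s hs)) h
    have hR0 : 0 ≤ R := (norm_nonneg _).trans (hR s hs)
    gcongr
    exacts [hR s hs, hM z hz]
  rw [fderiv_windingFunction_apply hρ hρs hx (hU.comp hxc) hT, abs_neg]
  refine (abs_add_le _ _).trans (add_le_add ?_ ((abs_sub _ _).trans (add_le_add ?_ ?_)))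
  · refine abs_integral_mul_le_mul_curveDensity hxc hρ.continuous hρ0 hT fun t ht h => ?_
    obtain ⟨hε', hp, hz⟩ := near (hR t ht.1.le) h
    calc |wedge (U z) (U (x t))| = |wedge (U z - U (x t)) (U (x t))| := by
          congr 1; simp only [wedge, Pi.sub_apply]; ring
      _ ≤ 2 * ‖U z - U (x t)‖ * ‖U (x t)‖ := abs_wedge_le _ _
      _ ≤ 2 * (L * ε) * M := by
          gcongr
          · exact mul_nonneg zero_le_two (mul_nonneg L.2 ((norm_nonneg _).trans hε'))
          · exact (hL.norm_sub_le hz hp).trans (by gcongr)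
          · exact hM _ hp
  · exact segment hT
  · exact segment le_rfl

end WindingFunction

/-- A smooth substitute for `|s|`, vanishing at `0` and differing from `|s|` by at most `1`. -/
noncomputable def smoothAbs (s : ℝ) : ℝ := √(s ^ 2 + 1) - 1

section SmoothAbs

theorem smoothAbs_zero : smoothAbs 0 = 0 := by simp [smoothAbs]

theorem smoothAbs_nonneg (s : ℝ) : 0 ≤ smoothAbs s :=
  sub_nonneg.2 (Real.one_le_sqrt.2 (by nlinarith [sq_nonneg s]))

theorem abs_le_smoothAbs_add_one (s : ℝ) : |s| ≤ smoothAbs s + 1 := by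
  rw [smoothAbs, sub_add_cancel]
  exact Real.abs_le_sqrt (by linarith)

theorem contDiff_smoothAbs {n : WithTop ℕ∞} : ContDiff ℝ n smoothAbs :=
  (((contDiff_id.pow 2).add contDiff_const).sqrt fun s => by positivity).sub contDiff_const

theorem abs_deriv_smoothAbs_le_one (s : ℝ) : |deriv smoothAbs s| ≤ 1 := by
  have h : HasDerivAt smoothAbs (s / √(s ^ 2 + 1)) s := by
    refine ((((hasDerivAt_pow 2 s).add_const 1).sqrt (by positivity)).sub_const 1).congr_deriv ?_
    push_cast
    field_simp
  rw [h.deriv, abs_div, abs_of_nonneg (Real.sqrt_nonneg _), div_le_one (by positivity)]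
  exact Real.abs_le_sqrt (by linarith)

end SmoothAbs

section DivergenceEstimate

variable {ι : Type*} [Fintype ι] [DecidableEq ι] {U : (ι → ℝ) → (ι → ℝ)} {B : Set (ι → ℝ)}

theorem integral_smoothAbs_mul_divergence_le (hU : ContDiff ℝ 1 U) {W : (ι → ℝ) → ℝ}
    (hW : ContDiff ℝ 1 W) (hWs : HasCompactSupport W) :
    ∫ z, smoothAbs (W z) * divergence U z ≤ ∫ z, |fderiv ℝ W z (U z)| := by
  have hUc := hU.continuous
  have hDWint : Integrable fun z => |fderiv ℝ W z (U z)| := by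
    refine Continuous.integrable_of_hasCompactSupport (by fun_prop) ((hWs.fderiv ℝ).mono ?_)
    intro z hz h
    simp [h] at hz
  rw [integral_mul_divergence (g := fun z => smoothAbs (W z)) hU (contDiff_smoothAbs.comp hW)
    (hWs.comp_left smoothAbs_zero)]
  refine (neg_le_abs _).trans ?_
  rw [← Real.norm_eq_abs]
  refine norm_integral_le_of_norm_le hDWint (Eventually.of_forall fun z => ?_)
  have chain := (contDiff_smoothAbs.differentiable one_ne_zero (W z)).hasDerivAt.comp_hasFDerivAt z
    (hW.differentiable one_ne_zero z).hasFDerivAt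
  rw [HasFDerivAt.fderiv (f := fun z => smoothAbs (W z)) chain, smul_apply, norm_smul]
  exact mul_le_of_le_one_left (norm_nonneg _) (abs_deriv_smoothAbs_le_one _)

theorem mul_integral_abs_le_of_le_divergence (hU : ContDiff ℝ 1 U) (hB : IsCompact B) {c : ℝ}
    (hc : 0 ≤ c) (hcB : ∀ z ∈ B, c ≤ divergence U z) {W : (ι → ℝ) → ℝ} (hW : ContDiff ℝ 1 W)
    (hWB : Function.support W ⊆ B) :
    c * ∫ z, |W z| ≤ (∫ z, |fderiv ℝ W z (U z)|) + c * volume.real B := by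
  have hWs : HasCompactSupport W := HasCompactSupport.of_support_subset_isCompact hB hWB
  have hWc := hW.continuous
  have hdivc := continuous_divergence hU
  have hsc : Continuous smoothAbs := contDiff_smoothAbs (n := 0).continuous
  have hgs : HasCompactSupport fun z => smoothAbs (W z) := hWs.comp_left smoothAbs_zero
  have hBint : Integrable (B.indicator fun _ => (1 : ℝ)) :=
    (integrable_indicator_iff hB.measurableSet).2 (integrableOn_const hB.measure_lt_top.ne)
  have hgint : Integrable fun z => smoothAbs (W z) * divergence U z :=
    Continuous.integrable_of_hasCompactSupport (by fun_prop) hgs.mul_right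
  calc c * ∫ z, |W z| = ∫ z, c * |W z| := (integral_const_mul _ _).symm
    _ ≤ ∫ z, (smoothAbs (W z) * divergence U z + c * B.indicator (fun _ => 1) z) := by
        refine integral_mono ((hWc.integrable_of_hasCompactSupport hWs).abs.const_mul c)
          (hgint.add (hBint.const_mul c)) fun z => ?_
        by_cases hz : z ∈ B
        · have h := mul_le_mul_of_nonneg_left (abs_le_smoothAbs_add_one (W z)) hc
          have h' := mul_le_mul_of_nonneg_left (hcB z hz) (smoothAbs_nonneg (W z))
          simp only [indicator_of_mem hz]
          linarith
        · have hWz : W z = 0 := Function.notMem_support.1 fun h => hz (hWB h)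
          simp [hz, hWz, smoothAbs_zero]
    _ = (∫ z, smoothAbs (W z) * divergence U z) + c * volume.real B := by
        rw [integral_add hgint (hBint.const_mul c), integral_const_mul,
          integral_indicator hB.measurableSet, setIntegral_const, smul_eq_mul, mul_one]
    _ ≤ _ := add_le_add_left (integral_smoothAbs_mul_divergence_le hU hW hWs) _

theorem exists_pos_forall_le_or_forall_le_neg {X : Type*} [TopologicalSpace X]
    [PreconnectedSpace X] {f : X → ℝ} (hf : Continuous f) (hf0 : ∀ p, f p ≠ 0) {K : Set X}
    (hK : IsCompact K) : ∃ c > 0, (∀ p ∈ K, c ≤ f p) ∨ ∀ p ∈ K, c ≤ -f p := by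
  obtain ⟨c, hc, hcK⟩ := hK.exists_forall_le' hf.abs.continuousOn fun p _ => abs_pos.2 (hf0 p)
  refine ⟨c, hc, ?_⟩
  by_cases hsign : ∀ p, 0 ≤ f p
  · exact Or.inl fun p hp => abs_of_nonneg (hsign p) ▸ hcK p hp
  · push Not at hsign
    obtain ⟨q, hq⟩ := hsign
    have hneg (p : X) : f p ≤ 0 := by
      by_contra! hp
      obtain ⟨p₀, hp₀⟩ := mem_range_of_exists_le_of_exists_ge hf ⟨q, hq.le⟩ ⟨p, hp.le⟩
      exact hf0 p₀ hp₀
    exact Or.inr fun p hp => abs_of_nonpos (hneg p) ▸ hcK p hp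

theorem exists_pos_mul_integral_abs_le (hU : ContDiff ℝ 1 U) (hdiv : ∀ p, divergence U p ≠ 0)
    (hB : IsCompact B) :
    ∃ c > 0, ∀ W : (ι → ℝ) → ℝ, ContDiff ℝ 1 W → Function.support W ⊆ B →
      c * ∫ z, |W z| ≤ (∫ z, |fderiv ℝ W z (U z)|) + c * volume.real B := by
  obtain ⟨c, hc, hpos | hneg⟩ :=
    exists_pos_forall_le_or_forall_le_neg (continuous_divergence hU) hdiv hB
  · exact ⟨c, hc, fun W => mul_integral_abs_le_of_le_divergence hU hB hc.le hpos⟩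
  · refine ⟨c, hc, fun W hW hWB => ?_⟩
    simp_rw [← divergence_neg] at hneg
    simpa using mul_integral_abs_le_of_le_divergence hU.neg hB hc.le hneg hW hWB

end DivergenceEstimate

section Energy

variable {U : Plane → Plane} {x : ℝ → Plane} {R : ℝ}

theorem integral_abs_fderiv_windingFunction_le (hU : ContDiff ℝ 1 U)
    (hx : ∀ t, HasDerivAt x (U (x t)) t) (hR : ∀ t, 0 ≤ t → ‖x t‖ ≤ R) {M : ℝ} {L : NNReal}
    (hM : ∀ z ∈ closedBall 0 (R + 1), ‖U z‖ ≤ M) (hL : LipschitzOnWith L U (closedBall 0 (R + 1)))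
    {T : ℝ} (hT : 0 ≤ T) (φ : ContDiffBump (0 : Plane)) (hφ : φ.rOut ≤ 1) :
    ∫ z, |fderiv ℝ (windingFunction (φ.normed volume) x (fun t => U (x t)) T) z (U z)| ≤
      2 * L * M * T * φ.rOut + 4 * R * M := by
  have hxc : Continuous x := continuous_of_forall_hasDerivAt hx
  have hφ1 : ContDiff ℝ 1 (φ.normed (volume : Measure Plane)) := φ.contDiff_normed
  have hint {y : ℝ → Plane} (hy : Continuous y) {b : ℝ} (hb : 0 ≤ b) (C : ℝ) :
      Integrable fun z => C * curveDensity (φ.normed volume) y 0 b z :=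
    (integrable_curveDensity hy hφ1 φ.hasCompactSupport_normed hb).const_mul C
  have hmass {y : ℝ → Plane} (hy : Continuous y) {b : ℝ} (hb : 0 ≤ b) :=
    integral_curveDensity hy hφ1.continuous φ.hasCompactSupport_normed φ.integral_normed hb
  have hseg (s : ℝ) : Continuous fun r : ℝ => r • x s := by fun_prop
  refine (integral_mono_of_nonneg (Eventually.of_forall fun z => abs_nonneg _) ?_
    (Eventually.of_forall (abs_fderiv_windingFunction_apply_le hU.continuous hx hR hM hL hφ1
      φ.nonneg_normed φ.support_normed_eq.subset hφ hT))).trans_eq ?_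
  · exact (hint hxc hT _).add ((hint (hseg T) zero_le_one _).add (hint (hseg 0) zero_le_one _))
  · rw [integral_add (hint hxc hT _)
        (by exact (hint (hseg T) zero_le_one _).add (hint (hseg 0) zero_le_one _)),
      integral_add (hint (hseg T) zero_le_one _) (hint (hseg 0) zero_le_one _),
      integral_const_mul, integral_const_mul, integral_const_mul, hmass hxc hT,
      hmass (hseg T) zero_le_one, hmass (hseg 0) zero_le_one]
    ring

theorem contDiff_windingFunction {ρ : Plane → ℝ} {x' : ℝ → Plane} (hρ : ContDiff ℝ 1 ρ)
    (hρs : HasCompactSupport ρ) (hx : Continuous x) (hx' : Continuous x') (T : ℝ) :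
    ContDiff ℝ 1 (windingFunction ρ x x' T) :=
  contDiff_mollifiedPushforward isCompact_coneRectangle (continuous_cone hx)
    (continuous_coneJacobian hx hx') hρ hρs

theorem support_windingFunction_subset {ρ : Plane → ℝ} {x' : ℝ → Plane} {ε T : ℝ}
    (hR : ∀ t, 0 ≤ t → ‖x t‖ ≤ R) (hρε : Function.support ρ ⊆ ball 0 ε) :
    Function.support (windingFunction ρ x x' T) ⊆ closedBall 0 (R + ε) := fun z hz => by
  by_contra h
  exact hz (mollifiedPushforward_eq_zero (fun ω => norm_cone_le hR) hρε
    (by simpa using (not_le.1 (mt mem_closedBall_zero_iff.2 h)).le))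

theorem exists_integral_abs_windingFunction_le (hU : ContDiff ℝ 1 U)
    (hdiv : ∀ p, divergence U p ≠ 0) (hx : ∀ t, HasDerivAt x (U (x t)) t)
    (hR : ∀ t, 0 ≤ t → ‖x t‖ ≤ R) :
    ∃ C D : ℝ, ∀ T, 0 ≤ T → ∀ φ : ContDiffBump (0 : Plane), φ.rOut ≤ 1 →
      ∫ z, |windingFunction (φ.normed volume) x (fun t => U (x t)) T z| ≤
        C + D * T * φ.rOut := by
  have hxc : Continuous x := continuous_of_forall_hasDerivAt hx
  have hB := isCompact_closedBall (0 : Plane) (R + 1)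
  obtain ⟨M, hM⟩ := hB.exists_bound_of_continuousOn hU.continuous.continuousOn
  obtain ⟨L, hL⟩ := hU.contDiffOn.exists_lipschitzOnWith one_ne_zero (convex_closedBall _ _) hB
  obtain ⟨c, hc, hcW⟩ := exists_pos_mul_integral_abs_le hU hdiv hB
  refine ⟨4 * R * M / c + volume.real (closedBall (0 : Plane) (R + 1)), 2 * L * M / c,
    fun T hT φ hφ => ?_⟩
  have h := (hcW _ (contDiff_windingFunction φ.contDiff_normed φ.hasCompactSupport_normed hxc
    (hU.continuous.comp hxc) T) ((support_windingFunction_subset hR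
      φ.support_normed_eq.subset).trans (closedBall_subset_closedBall (by gcongr)))).trans
    (add_le_add_left (integral_abs_fderiv_windingFunction_le hU hx hR hM hL hT φ hφ) _)
  rw [← le_div_iff₀' hc] at h
  refine h.trans_eq ?_
  field_simp
  ring

theorem exists_abs_setIntegral_coneJacobian_mul_le (hU : ContDiff ℝ 1 U)
    (hdiv : ∀ p, divergence U p ≠ 0) (hx : ∀ t, HasDerivAt x (U (x t)) t)
    (hR : ∀ t, 0 ≤ t → ‖x t‖ ≤ R) :
    ∃ C : ℝ, ∀ (f : Plane → ℝ) (F : ℝ), Continuous f → 0 ≤ F →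
      (∀ z ∈ closedBall 0 (R + 1), |f z| ≤ F) → ∀ T, 0 ≤ T →
        |∫ ω in coneRectangle T, coneJacobian x (fun t => U (x t)) ω * f (cone x ω)| ≤ F * C := by
  have hxc : Continuous x := continuous_of_forall_hasDerivAt hx
  have hx'c := hU.continuous.comp hxc
  obtain ⟨C, D, hCD⟩ := exists_integral_abs_windingFunction_le hU hdiv hx hR
  refine ⟨C, fun f F hf hF0 hF T hT => ?_⟩
  let φ (n : ℕ) : ContDiffBump (0 : Plane) :=
    ⟨1 / (n + 1) / 2, 1 / (n + 1), by positivity, half_lt_self (by positivity)⟩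
  have hφ : Tendsto (fun n => (φ n).rOut) atTop (𝓝 0) := tendsto_one_div_add_atTop_nhds_zero_nat
  have hlim : Tendsto (fun n => F * (C + D * T * (φ n).rOut)) atTop (𝓝 (F * C)) := by
    simpa using ((hφ.const_mul (D * T)).const_add C).const_mul F
  refine le_of_tendsto_of_tendsto (tendsto_integral_mollifiedPushforward_mul (μ := volume)
    isCompact_coneRectangle (continuous_cone hxc) (continuous_coneJacobian hxc hx'c) hf hφ).abs
    hlim ?_
  filter_upwards [hφ.eventually_le_const one_pos] with n hn
  set W := windingFunction ((φ n).normed volume) x (fun t => U (x t)) T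
  have hWc : Continuous W := (contDiff_windingFunction (φ n).contDiff_normed
    (φ n).hasCompactSupport_normed hxc hx'c T).continuous
  have hWs : Function.support W ⊆ closedBall 0 (R + 1) :=
    (support_windingFunction_subset hR (φ n).support_normed_eq.subset).trans
      (closedBall_subset_closedBall (by gcongr))
  have hWint : Integrable W := hWc.integrable_of_hasCompactSupport
    (HasCompactSupport.of_support_subset_isCompact (isCompact_closedBall _ _) hWs)
  calc |∫ z, W z * f z| ≤ ∫ z, F * |W z| := by
        rw [← Real.norm_eq_abs]
        refine norm_integral_le_of_norm_le (hWint.abs.const_mul F)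
          (Eventually.of_forall fun z => ?_)
        by_cases hz : W z = 0
        · simp [hz]
        · rw [norm_mul, mul_comm F]
          exact mul_le_mul_of_nonneg_left (hF z (hWs hz)) (abs_nonneg _)
    _ = F * ∫ z, |W z| := integral_const_mul _ _
    _ ≤ F * (C + D * T * (φ n).rOut) := mul_le_mul_of_nonneg_left (hCD T hT (φ n) hn) hF0

theorem abs_integral_wedge_smul_le {V : Plane → Plane} {M : ℝ}
    (hM : ∀ z ∈ closedBall 0 R, ‖V z‖ ≤ M) {p : Plane} (hp : ‖p‖ ≤ R) :
    |∫ r in (0 : ℝ)..1, wedge p (V (r • p))| ≤ 2 * R * M := by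
  have hR0 : 0 ≤ R := (norm_nonneg p).trans hp
  have h := intervalIntegral.norm_integral_le_of_norm_le_const (a := 0) (b := 1)
    (f := fun r => wedge p (V (r • p))) (C := 2 * R * M) fun r hr => ?_
  · simpa using h
  · rw [uIoc_of_le zero_le_one] at hr
    refine (abs_wedge_le _ _).trans ?_
    gcongr
    exact hM _ (mem_closedBall_zero_iff.2 (norm_smul_le_of_mem_Icc (Ioc_subset_Icc_self hr) hp))

theorem exists_integral_sq_add_sq_le (hU : ContDiff ℝ 1 U) (hdiv : ∀ p, divergence U p ≠ 0)
    (hx : ∀ t, HasDerivAt x (U (x t)) t) (hR : ∀ t, 0 ≤ t → ‖x t‖ ≤ R) :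
    ∃ C : ℝ, ∀ T, 0 ≤ T → ∫ t in (0 : ℝ)..T, (U (x t) 0 ^ 2 + U (x t) 1 ^ 2) ≤ C := by
  have hxc : Continuous x := continuous_of_forall_hasDerivAt hx
  let V (z : Plane) : Plane := ![U z 1, -U z 0]
  have hV : ContDiff ℝ 1 V := by
    refine contDiff_pi.2 fun i => ?_
    fin_cases i
    exacts [contDiff_pi.1 hU 1, (contDiff_pi.1 hU 0).neg]
  have hVU (t : ℝ) : wedge (V (x t)) (U (x t)) = U (x t) 0 ^ 2 + U (x t) 1 ^ 2 := by
    simp only [wedge, V, Matrix.cons_val_zero, Matrix.cons_val_one]; ring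
  obtain ⟨M, hM⟩ := (isCompact_closedBall (0 : Plane) R).exists_bound_of_continuousOn
    hV.continuous.continuousOn
  obtain ⟨F, hF⟩ := (isCompact_closedBall (0 : Plane) (R + 1)).exists_bound_of_continuousOn
    (continuous_divergence hV).continuousOn
  have hF0 : 0 ≤ F := (norm_nonneg _).trans <| hF (x 0) <| mem_closedBall_zero_iff.2 <|
    (hR 0 le_rfl).trans (by simp)
  obtain ⟨C, hC⟩ := exists_abs_setIntegral_coneJacobian_mul_le hU hdiv hx hR
  refine ⟨F * C + 4 * R * M, fun T hT => ?_⟩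
  have hcone := abs_le.1 (hC _ F (continuous_divergence hV) hF0 hF T hT)
  have hend := abs_le.1 (abs_integral_wedge_smul_le hM (hR T hT))
  have hstart := abs_le.1 (abs_integral_wedge_smul_le hM (hR 0 le_rfl))
  rw [setIntegral_coneJacobian_mul_divergence hV hx (hU.continuous.comp hxc) hT] at hcone
  simp_rw [hVU] at hcone
  linarith [hcone.2, hend.1, hstart.2]

end Energy

section SquareIntegrable

theorem tendsto_zero_of_integrableOn_sq {f f' : ℝ → ℝ} {M M' : ℝ}
    (hf : ∀ t, HasDerivAt f (f' t) t) (hM : ∀ t, 0 < t → |f t| ≤ M)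
    (hM' : ∀ t, 0 < t → |f' t| ≤ M') (hint : IntegrableOn (fun t => f t ^ 2) (Ioi 0)) :
    Tendsto f atTop (𝓝 0) := by
  have hfc : Continuous f := continuous_of_forall_hasDerivAt hf
  have hf'm : Measurable f' := by
    simpa only [← funext fun t => (hf t).deriv] using measurable_deriv f
  have hcube (t : ℝ) : HasDerivAt (fun t => f t ^ 3) (3 * f' t * f t ^ 2) t :=
    ((hf t).fun_pow 3).congr_deriv (by push_cast; ring)
  have hcube_int : IntegrableOn (fun t => f t ^ 3) (Ioi 0) := by
    simp_rw [pow_succ' _ 2]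
    exact Integrable.bdd_mul hint hfc.aestronglyMeasurable
      (ae_restrict_of_forall_mem measurableSet_Ioi hM)
  have hcube'_int : IntegrableOn (fun t => 3 * f' t * f t ^ 2) (Ioi 0) :=
    Integrable.bdd_mul (c := 3 * M') hint (hf'm.const_mul 3).aestronglyMeasurable
      (ae_restrict_of_forall_mem measurableSet_Ioi fun t ht => by
        rw [norm_mul, Real.norm_eq_abs, Real.norm_eq_abs, abs_of_pos three_pos]
        gcongr
        exact hM' t ht)
  have hlim := tendsto_zero_of_hasDerivAt_of_integrableOn_Ioi (fun t _ => hcube t) hcube'_int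
    hcube_int
  rw [tendsto_zero_iff_abs_tendsto_zero]
  have hroot := hlim.abs.rpow_const (p := ((3 : ℕ) : ℝ)⁻¹) (Or.inr (by positivity))
  simpa only [Function.comp_def, abs_pow, Real.pow_rpow_inv_natCast (abs_nonneg _) three_ne_zero,
    abs_zero, Real.zero_rpow (by norm_num : ((3 : ℕ) : ℝ)⁻¹ ≠ 0)] using hroot

theorem tendsto_zero_of_divergence_ne_zero {U : Plane → Plane} {x : ℝ → Plane} {R : ℝ}
    (hU : ContDiff ℝ 1 U) (hdiv : ∀ p, divergence U p ≠ 0) (hx : ∀ t, HasDerivAt x (U (x t)) t)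
    (hR : ∀ t, 0 ≤ t → ‖x t‖ ≤ R) : Tendsto (fun t => U (x t)) atTop (𝓝 0) := by
  have hxc : Continuous x := continuous_of_forall_hasDerivAt hx
  have hUc := hU.continuous
  have hball (t : ℝ) (ht : 0 < t) : x t ∈ closedBall 0 R := by simpa using hR t ht.le
  obtain ⟨C, hC⟩ := exists_integral_sq_add_sq_le hU hdiv hx hR
  obtain ⟨M, hM⟩ := (isCompact_closedBall (0 : Plane) R).exists_bound_of_continuousOn
    hUc.continuousOn
  obtain ⟨M', hM'⟩ := (isCompact_closedBall (0 : Plane) R).exists_bound_of_continuousOn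
    ((hU.continuous_fderiv one_ne_zero).clm_apply hUc).continuousOn
  have hderiv (t : ℝ) : HasDerivAt (fun t => U (x t)) (fderiv ℝ U (x t) (U (x t))) t :=
    (hU.differentiable one_ne_zero (x t)).hasFDerivAt.comp_hasDerivAt t (hx t)
  have hint : IntegrableOn (fun t => U (x t) 0 ^ 2 + U (x t) 1 ^ 2) (Ioi 0) := by
    refine integrableOn_Ioi_of_intervalIntegral_norm_bounded C 0
      (fun T => Continuous.integrableOn_Ioc (by fun_prop)) tendsto_id ?_
    filter_upwards [eventually_ge_atTop 0] with T hT
    simp_rw [Real.norm_of_nonneg (add_nonneg (sq_nonneg _) (sq_nonneg _))]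
    exact hC T hT
  refine tendsto_pi_nhds.2 fun i => tendsto_zero_of_integrableOn_sq
    (fun t => hasDerivAt_pi.1 (hderiv t) i)
    (fun t ht => (norm_le_pi_norm _ i).trans (hM _ (hball t ht)))
    (fun t ht => (norm_le_pi_norm _ i).trans (hM' _ (hball t ht)))
    (hint.mono' (Continuous.aestronglyMeasurable (by fun_prop)) (Eventually.of_forall fun t => ?_))
  rw [Real.norm_of_nonneg (sq_nonneg _)]
  fin_cases i
  exacts [le_add_of_nonneg_right (sq_nonneg _), le_add_of_nonneg_left (sq_nonneg _)]

end SquareIntegrable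

section LimitSet

theorem eq_of_mapClusterPt_of_tendsto {ι X : Type*} [TopologicalSpace X] [T2Space X] {l : Filter ι}
    {f : ι → X} {p q : X} (hp : MapClusterPt p l f) (hq : Tendsto f l (𝓝 q)) : p = q :=
  eq_of_nhds_neBot (NeBot.mono hp (inf_le_inf_left _ hq))

theorem exists_mapClusterPt_eq {X : Type*} [TopologicalSpace X] {x : ℝ → X} (hx : Continuous x)
    {K : Set X} (hK : IsCompact K) (hxK : ∀ᶠ t in atTop, x t ∈ K) {g : X → ℝ} (hg : Continuous g)
    {c : ℝ} {p : X} (hp : MapClusterPt p atTop x) (hpc : g p < c)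
    (hfreq : ∃ᶠ t in atTop, c ≤ g (x t)) : ∃ k, MapClusterPt k atTop x ∧ g k = c := by
  have hlt : ∃ᶠ t in atTop, g (x t) < c :=
    hp.frequently (hg.continuousAt.eventually (gt_mem_nhds hpc))
  have heq : ∃ᶠ t in atTop, g (x t) = c := by
    rw [frequently_atTop] at *
    intro a
    obtain ⟨t₁, ht₁, hlt₁⟩ := hlt a
    obtain ⟨t₂, ht₂, hge₂⟩ := hfreq t₁
    obtain ⟨t, ht, htc⟩ := intermediate_value_Icc ht₂ (hg.comp hx).continuousOn ⟨hlt₁.le, hge₂⟩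
    exact ⟨t, ht₁.trans ht.1, htc⟩
  obtain ⟨k, hk, hkx⟩ := (hK.inter_right (isClosed_singleton.preimage hg))
    |>.exists_mapClusterPt_of_frequently ((heq.and_eventually hxK).mono fun t ht => ⟨ht.2, ht.1⟩)
  exact ⟨k, hkx, hk.2⟩

variable {X : Type*} [PseudoMetricSpace X] {x : ℝ → X} {K : Set X} {p : X}

theorem exists_pos_forall_exists_mapClusterPt_dist_eq (hx : Continuous x) (hK : IsCompact K)
    (hxK : ∀ᶠ t in atTop, x t ∈ K) (hp : MapClusterPt p atTop x)
    (hlim : ¬Tendsto x atTop (𝓝 p)) :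
    ∃ m > 0, ∀ s ∈ Ioc 0 m, ∃ k, MapClusterPt k atTop x ∧ dist k p = s := by
  rw [Metric.tendsto_nhds] at hlim
  push Not at hlim
  obtain ⟨m, hm, hfreq⟩ := hlim
  exact ⟨m, hm, fun s hs => exists_mapClusterPt_eq hx hK hxK (g := fun z => dist z p)
    (by fun_prop) hp (by simpa using hs.1) (hfreq.mono fun t ht => hs.2.trans ht)⟩

theorem tendsto_of_eventually_not_mapClusterPt (hx : Continuous x) (hK : IsCompact K)
    (hxK : ∀ᶠ t in atTop, x t ∈ K) (hp : MapClusterPt p atTop x)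
    (hisol : ∀ᶠ k in 𝓝[≠] p, ¬MapClusterPt k atTop x) : Tendsto x atTop (𝓝 p) := by
  by_contra hlim
  obtain ⟨m, hm, hmk⟩ := exists_pos_forall_exists_mapClusterPt_dist_eq hx hK hxK hp hlim
  obtain ⟨η, hη, hball⟩ := Metric.eventually_nhds_iff.1 (eventually_nhdsWithin_iff.1 hisol)
  obtain ⟨k, hk, hkp⟩ := hmk (min m (η / 2)) ⟨by positivity, min_le_left _ _⟩
  have hkη : dist k p < η := hkp ▸ (min_le_right _ _).trans_lt (half_lt_self hη)
  refine hball hkη (fun h => ?_) hk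
  have hpos : 0 < dist k p := hkp ▸ by positivity
  simp [mem_singleton_iff.1 h] at hpos

end LimitSet

section Trapping

variable {E : Type*} [NormedAddCommGroup E] [NormedSpace ℝ E] {x x' : ℝ → E} {φ φ' : ℝ → ℝ}

theorem norm_sub_le_sub_of_norm_deriv_le {a b : ℝ} (hab : a ≤ b)
    (hx : ∀ t, HasDerivAt x (x' t) t) (hφ : Continuous φ)
    (hφ' : ∀ t ∈ Ico a b, HasDerivAt φ (φ' t) t) (hle : ∀ t ∈ Ico a b, ‖x' t‖ ≤ φ' t) :
    ‖x b - x a‖ ≤ φ b - φ a := by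
  have hxc : Continuous x := continuous_of_forall_hasDerivAt hx
  exact image_norm_le_of_norm_deriv_right_le_deriv_boundary' (f := fun t => x t - x a)
    (B := fun t => φ t - φ a) (by fun_prop)
    (fun t _ => ((hx t).sub_const _).hasDerivWithinAt) (by simp) (by fun_prop)
    (fun t ht => ((hφ' t ht).sub_const _).hasDerivWithinAt) hle (right_mem_Icc.2 hab)

theorem tendsto_of_norm_deriv_le {p : E} {a r : ℝ} (hr : 0 < r)
    (hx : ∀ t, HasDerivAt x (x' t) t) (hp : MapClusterPt p atTop x) (hφ : Continuous φ)
    (hlim : Tendsto φ atTop (𝓝 a)) (hφ' : ∀ t, x t ∈ ball p r → HasDerivAt φ (φ' t) t)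
    (hle : ∀ t, x t ∈ ball p r → ‖x' t‖ ≤ φ' t) : Tendsto x atTop (𝓝 p) := by
  have hxc : Continuous x := continuous_of_forall_hasDerivAt hx
  refine Metric.tendsto_atTop.2 fun ε' hε' => ?_
  obtain ⟨ε, hε, hεε', hεr⟩ : ∃ ε > 0, ε ≤ ε' ∧ ε ≤ r :=
    ⟨min ε' r, by positivity, min_le_left _ _, min_le_right _ _⟩
  obtain ⟨T, hT⟩ := eventually_atTop.1
    (hlim.eventually (ball_mem_nhds a (show 0 < ε / 4 by positivity)))
  obtain ⟨t₀, ht₀, hxt₀⟩ := frequently_atTop.1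
    (hp.frequently (ball_mem_nhds p (show 0 < ε / 2 by positivity))) T
  refine ⟨t₀, fun t₁ ht₁ => lt_of_lt_of_le ?_ hεε'⟩
  by_contra! hexit
  obtain ⟨t₂, ⟨⟨ht₀₂, ht₂₁⟩, hεt₂⟩, hfirst⟩ := ((isCompact_Icc (a := t₀) (b := t₁)).inter_right
    (isClosed_le continuous_const (hxc.dist continuous_const))).exists_isLeast
    ⟨t₁, ⟨ht₁, le_rfl⟩, hexit⟩
  have hin (t : ℝ) (ht : t ∈ Ico t₀ t₂) : x t ∈ ball p r := by
    by_contra h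
    exact ht.2.not_ge (hfirst ⟨⟨ht.1, ht.2.le.trans ht₂₁⟩, hεr.trans (not_lt.1 h)⟩)
  have hlen := norm_sub_le_sub_of_norm_deriv_le ht₀₂ hx hφ (fun t ht => hφ' t (hin t ht))
    fun t ht => hle t (hin t ht)
  have hosc : φ t₂ - φ t₀ < ε / 2 := by
    have h₀ := abs_lt.1 (hT t₀ ht₀)
    have h₂ := abs_lt.1 (hT t₂ (ht₀.trans ht₀₂))
    linarith [h₀.1, h₂.2]
  have hεt₂' : ε ≤ dist (x t₂) p := hεt₂
  have htri := dist_triangle (x t₂) (x t₀) p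
  rw [dist_eq_norm (x t₂) (x t₀)] at htri
  linarith [mem_ball.1 hxt₀]

end Trapping

section RealFunctions

theorem hasDerivAt_abs_comp {u : ℝ → ℝ} {u' t : ℝ} (hu : HasDerivAt u u' t)
    (hu' : u t = 0 → u' = 0) :
    HasDerivAt (fun s => |u s|) (SignType.sign (u t) * u') t := by
  by_cases h : u t = 0
  · simpa [hasDerivAt_iff_isLittleO, h, hu' h] using hu
  · exact (hasDerivAt_abs h).comp t hu

theorem nonempty_interior_of_forall_add_mem_or_sub_mem {S : Set ℝ} (hS : IsClosed S) {a m : ℝ}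
    (hm : 0 < m) (h : ∀ s ∈ Ioo 0 m, a + s ∈ S ∨ a - s ∈ S) : (interior S).Nonempty := by
  by_cases hall : ∀ s ∈ Ioo 0 m, a - s ∈ S
  · refine ⟨a - m / 2, mem_interior_iff_mem_nhds.2 ?_⟩
    filter_upwards [Ioo_mem_nhds (show a - m < a - m / 2 by linarith)
      (show a - m / 2 < a by linarith)] with y hy
    simpa using hall (a - y) ⟨by linarith [hy.2], by linarith [hy.1]⟩
  · push Not at hall
    obtain ⟨s₀, hs₀, has₀⟩ := hall
    have hV : IsOpen (Ioo a (a + m) ∩ (fun y => 2 * a - y) ⁻¹' Sᶜ) :=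
      isOpen_Ioo.inter (hS.isOpen_compl.preimage (by fun_prop))
    refine ⟨a + s₀, mem_interior.2 ⟨_, fun y hy => ?_, hV, ?_⟩⟩
    · have hya : a - (y - a) ∉ S := by
        rw [show a - (y - a) = 2 * a - y by ring]
        exact hy.2
      simpa using (h (y - a) ⟨by linarith [hy.1.1], by linarith [hy.1.2]⟩).resolve_right hya
    · refine ⟨⟨by linarith [hs₀.1], by linarith [hs₀.2]⟩, ?_⟩
      rwa [mem_preimage, mem_compl_iff, show 2 * a - (a + s₀) = a - s₀ by ring]

end RealFunctions

section DegenerateEquilibrium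

/-- The linear map `(u, v) ↦ (0, τ v)`, the normal form of a singular planar matrix of
trace `τ ≠ 0`. -/
noncomputable def verticalScaling (τ : ℝ) : ℝ × ℝ →L[ℝ] ℝ × ℝ :=
  (0 : ℝ →L[ℝ] ℝ).prodMap (τ • ContinuousLinearMap.id ℝ ℝ)

@[simp]
theorem verticalScaling_apply (τ : ℝ) (v : ℝ × ℝ) : verticalScaling τ v = (0, τ * v.2) := rfl

variable {F : ℝ × ℝ → ℝ × ℝ} {τ : ℝ} {B : Set (ℝ × ℝ)} {z k : ℝ × ℝ}

theorem norm_sub_sub_verticalScaling_le (hF : Differentiable ℝ F) (hB : Convex ℝ B)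
    (hτB : ∀ z ∈ B, ‖fderiv ℝ F z - verticalScaling τ‖ ≤ |τ| / 4) (hz : z ∈ B) (hk : k ∈ B)
    (hFk : F k = 0) : ‖F z - (0, τ * (z - k).2)‖ ≤ |τ| / 4 * ‖z - k‖ := by
  simpa [hFk] using hB.norm_image_sub_le_of_norm_fderiv_le' (fun w _ => hF w) hτB hk hz

theorem dist_eq_abs_fst_sub_fst (hτ : τ ≠ 0) (hF : Differentiable ℝ F) (hB : Convex ℝ B)
    (hτB : ∀ z ∈ B, ‖fderiv ℝ F z - verticalScaling τ‖ ≤ |τ| / 4) (hz : z ∈ B) (hk : k ∈ B)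
    (hFz : F z = 0) (hFk : F k = 0) : dist z k = |z.1 - k.1| := by
  have h := (norm_snd_le _).trans (norm_sub_sub_verticalScaling_le hF hB hτB hz hk hFk)
  have hτ' := abs_pos.2 hτ
  rw [hFz, Prod.snd_sub, Prod.snd_zero, zero_sub, norm_neg, norm_mul, Prod.norm_def,
    Real.norm_eq_abs, Real.norm_eq_abs, Real.norm_eq_abs, Prod.snd_sub, Prod.fst_sub] at h
  rw [dist_eq_norm, Prod.norm_def, Real.norm_eq_abs, Real.norm_eq_abs, Prod.fst_sub, Prod.snd_sub,
    max_eq_left]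
  by_contra! hlt
  rw [max_eq_right hlt.le] at h
  nlinarith [(abs_nonneg _).trans_lt hlt]

theorem norm_le_abs_snd (hF : Differentiable ℝ F) (hB : Convex ℝ B)
    (hτB : ∀ z ∈ B, ‖fderiv ℝ F z - verticalScaling τ‖ ≤ |τ| / 4) (hz : z ∈ B) (hk : k ∈ B)
    (hFk : F k = 0) (hzk : k.1 = z.1) : ‖F z‖ ≤ |(F z).2| := by
  have h := norm_sub_sub_verticalScaling_le hF hB hτB hz hk hFk
  have hnorm : ‖z - k‖ = |z.2 - k.2| := by simp [Prod.norm_def, hzk]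
  have h₁ : |(F z).1| ≤ |τ| / 4 * |z.2 - k.2| := by simpa [hnorm] using (norm_fst_le _).trans h
  have h₂ : |(F z).2 - τ * (z.2 - k.2)| ≤ |τ| / 4 * |z.2 - k.2| := by
    simpa [hnorm] using (norm_snd_le _).trans h
  have htri := abs_sub_abs_le_abs_sub (τ * (z.2 - k.2)) (F z).2
  rw [abs_sub_comm, abs_mul] at htri
  rw [Prod.norm_def, Real.norm_eq_abs, Real.norm_eq_abs, max_eq_right]
  nlinarith [mul_nonneg (abs_nonneg τ) (abs_nonneg (z.2 - k.2))]

theorem norm_le_mul_sign_mul (hτ : τ ≠ 0) {A : ℝ × ℝ →L[ℝ] ℝ × ℝ}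
    (hA : ‖A - verticalScaling τ‖ ≤ |τ| / 4) {w : ℝ × ℝ} (hw : ‖w‖ ≤ |w.2|) :
    ‖w‖ ≤ 4 / (3 * τ) * (SignType.sign w.2 * (A w).2) := by
  have h : |(A w).2 - τ * w.2| ≤ |τ| / 4 * |w.2| :=
    calc |(A w).2 - τ * w.2| ≤ ‖(A - verticalScaling τ) w‖ :=
          norm_snd_le ((A - verticalScaling τ) w)
      _ ≤ |τ| / 4 * ‖w‖ := (A - verticalScaling τ).le_of_opNorm_le hA w
      _ ≤ |τ| / 4 * |w.2| := by gcongr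
  obtain ⟨e, he⟩ : ∃ e, (A w).2 = τ * (w.2 + e) := ⟨(A w).2 / τ - w.2, by field_simp; ring⟩
  have he' : |e| ≤ |w.2| / 4 := by
    rw [he, mul_add, add_sub_cancel_left, abs_mul, div_mul_eq_mul_div, mul_div_assoc] at h
    exact le_of_mul_le_mul_left h (abs_pos.2 hτ)
  have hsign : -|e| ≤ SignType.sign w.2 * e := by
    rcases lt_trichotomy w.2 0 with hneg | hzero | hpos
    · simpa [sign_neg hneg] using le_abs_self e
    · simp [hzero]
    · simpa [sign_pos hpos] using neg_abs_le e
  calc ‖w‖ ≤ |w.2| := hw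
    _ ≤ 4 / 3 * (|w.2| + SignType.sign w.2 * e) := by linarith
    _ = 4 / (3 * τ) * (SignType.sign w.2 * (A w).2) := by
        rw [he, ← sign_mul_self]
        field_simp

theorem exists_mem_eventually_exists_fst_eq {Y : Type*} [TopologicalSpace Y] {L : Set (ℝ × Y)}
    (hL : IsCompact L) {a m : ℝ} (hm : 0 < m) (hLm : ∀ s ∈ Ioo 0 m, ∃ k ∈ L, |k.1 - a| = s) :
    ∃ p ∈ L, ∀ᶠ z in 𝓝 p, ∃ k ∈ L, k.1 = z.1 := by
  have hside (s : ℝ) (hs : s ∈ Ioo 0 m) : a + s ∈ Prod.fst '' L ∨ a - s ∈ Prod.fst '' L := by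
    obtain ⟨k, hk, hks⟩ := hLm s hs
    rcases (abs_eq hs.1.le).1 hks with h | h
    · exact Or.inl ⟨k, hk, by linarith⟩
    · exact Or.inr ⟨k, hk, by linarith⟩
  obtain ⟨y, hy⟩ := nonempty_interior_of_forall_add_mem_or_sub_mem
    (hL.image continuous_fst).isClosed hm hside
  obtain ⟨p, hp, rfl⟩ := interior_subset hy
  exact ⟨p, hp, continuous_fst.continuousAt.eventually (mem_interior_iff_mem_nhds.1 hy)⟩

variable {ξ : ℝ → ℝ × ℝ} {K : Set (ℝ × ℝ)} {p₀ : ℝ × ℝ}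

theorem exists_mapClusterPt_eventually_norm_le_abs_snd (hτ : τ ≠ 0) (hF : ContDiff ℝ 1 F)
    (hξ : Continuous ξ) (hK : IsCompact K) (hξK : ∀ᶠ t in atTop, ξ t ∈ K)
    (hF0 : Tendsto (fun t => F (ξ t)) atTop (𝓝 0)) (hp₀ : MapClusterPt p₀ atTop ξ)
    (hlim : ¬Tendsto ξ atTop (𝓝 p₀)) (hFp₀ : fderiv ℝ F p₀ = verticalScaling τ) :
    ∃ p, MapClusterPt p atTop ξ ∧
      ∀ᶠ z in 𝓝 p, ‖fderiv ℝ F z - verticalScaling τ‖ ≤ |τ| / 4 ∧ ‖F z‖ ≤ |(F z).2| := by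
  have hFd := hF.differentiable one_ne_zero
  have hzero {k : ℝ × ℝ} (hk : MapClusterPt k atTop ξ) : F k = 0 :=
    eq_of_mapClusterPt_of_tendsto (hk.continuousAt_comp hF.continuous.continuousAt) hF0
  have hnear : ∀ᶠ z in 𝓝 p₀, ‖fderiv ℝ F z - verticalScaling τ‖ ≤ |τ| / 4 := by
    simpa only [hFp₀, mem_closedBall_iff_norm] using
      ((hF.continuous_fderiv one_ne_zero).tendsto p₀).eventually_mem
        (closedBall_mem_nhds _ (show 0 < |τ| / 4 by positivity))
  obtain ⟨η, hη, hτB⟩ := Metric.eventually_nhds_iff_ball.1 hnear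
  have hB := convex_ball p₀ η
  obtain ⟨m, hm, hmk⟩ := exists_pos_forall_exists_mapClusterPt_dist_eq hξ hK hξK hp₀ hlim
  have hhalf : closedBall p₀ (η / 2) ⊆ ball p₀ η := closedBall_subset_ball (half_lt_self hη)
  have hL : IsCompact ({k | MapClusterPt k atTop ξ} ∩ closedBall p₀ (η / 2)) :=
    (isCompact_closedBall p₀ (η / 2)).inter_left isClosed_setOfPred_clusterPt
  obtain ⟨p, ⟨hp, hpB⟩, hev⟩ := exists_mem_eventually_exists_fst_eq hL (a := p₀.1)
    (m := min m (η / 2)) (by positivity) fun s hs => by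
      obtain ⟨k, hk, hks⟩ := hmk s ⟨hs.1, hs.2.le.trans (min_le_left _ _)⟩
      have hkB : k ∈ closedBall p₀ (η / 2) :=
        mem_closedBall.2 (hks.trans_le (hs.2.le.trans (min_le_right _ _)))
      exact ⟨k, ⟨hk, hkB⟩, hks ▸ (dist_eq_abs_fst_sub_fst hτ hFd hB hτB (hhalf hkB)
        (mem_ball_self hη) (hzero hk) (hzero hp₀)).symm⟩
  refine ⟨p, hp, ?_⟩
  filter_upwards [hev, isOpen_ball.mem_nhds (hhalf hpB)] with z ⟨k, hk, hkz⟩ hz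
  exact ⟨hτB z hz, norm_le_abs_snd hFd hB hτB hz (hhalf hk.2) (hzero hk.1) hkz⟩

theorem exists_tendsto_of_fderiv_eq_verticalScaling (hτ : τ ≠ 0) (hF : ContDiff ℝ 1 F)
    (hξ : ∀ t, HasDerivAt ξ (F (ξ t)) t) (hK : IsCompact K) (hξK : ∀ᶠ t in atTop, ξ t ∈ K)
    (hF0 : Tendsto (fun t => F (ξ t)) atTop (𝓝 0)) (hp₀ : MapClusterPt p₀ atTop ξ)
    (hFp₀ : fderiv ℝ F p₀ = verticalScaling τ) : ∃ p, Tendsto ξ atTop (𝓝 p) := by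
  by_cases hlim : Tendsto ξ atTop (𝓝 p₀)
  · exact ⟨p₀, hlim⟩
  have hFc := hF.continuous
  have hξc : Continuous ξ := continuous_of_forall_hasDerivAt hξ
  obtain ⟨p, hp, hev⟩ := exists_mapClusterPt_eventually_norm_le_abs_snd hτ hF hξc hK hξK hF0 hp₀
    hlim hFp₀
  obtain ⟨r, hr, hball⟩ := Metric.eventually_nhds_iff_ball.1 hev
  have hderiv (t : ℝ) :
      HasDerivAt (fun t => (F (ξ t)).2) (fderiv ℝ F (ξ t) (F (ξ t))).2 t :=
    ((hF.differentiable one_ne_zero (ξ t)).hasFDerivAt.comp_hasDerivAt t (hξ t)).snd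
  refine ⟨p, tendsto_of_norm_deriv_le (φ := fun t => 4 / (3 * τ) * |(F (ξ t)).2|)
    (a := 4 / (3 * τ) * |(0 : ℝ × ℝ).2|) hr hξ hp (by fun_prop)
    (((continuous_snd.tendsto 0).comp hF0).abs.const_mul _)
    (fun t ht => (hasDerivAt_abs_comp (hderiv t) fun h0 => ?_).const_mul _)
    fun t ht => norm_le_mul_sign_mul hτ (hball _ ht).1 (hball _ ht).2⟩
  have hF : F (ξ t) = 0 := by simpa [h0] using (hball _ ht).2
  simp [hF]

end DegenerateEquilibrium

section Equilibria

theorem tendsto_of_injective_fderiv {E : Type*} [NormedAddCommGroup E] [NormedSpace ℝ E]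
    [FiniteDimensional ℝ E] {U : E → E} {x : ℝ → E} {K : Set E} {p : E} (hU : Differentiable ℝ U)
    (hx : Continuous x) (hK : IsCompact K) (hxK : ∀ᶠ t in atTop, x t ∈ K)
    (hU0 : Tendsto (fun t => U (x t)) atTop (𝓝 0)) (hp : MapClusterPt p atTop x)
    (hinj : Function.Injective (fderiv ℝ U p)) : Tendsto x atTop (𝓝 p) := by
  obtain ⟨C, -, hC⟩ := LinearMap.exists_antilipschitzWith (fderiv ℝ U p : E →ₗ[ℝ] E)
    (LinearMap.ker_eq_bot.2 hinj)
  refine tendsto_of_eventually_not_mapClusterPt hx hK hxK hp ?_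
  filter_upwards [(hU p).hasFDerivAt.eventually_ne ⟨C, hC⟩ (c := 0)] with k hUk hk
  exact hUk (eq_of_mapClusterPt_of_tendsto (hk.continuousAt_comp (hU k).continuousAt) hU0)

theorem wedge_smul_eq_wedge_smul_add_wedge_smul (a b z : Plane) :
    wedge a b • z = wedge z b • a + wedge a z • b := by
  ext i
  fin_cases i <;> simp [wedge] <;> ring

theorem exists_wedge_eq_one {e : Plane} (he : e ≠ 0) : ∃ f, wedge e f = 1 := by
  have hpos : e 0 ^ 2 + e 1 ^ 2 ≠ 0 := fun h => he <| by
    ext i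
    fin_cases i <;> simp <;> nlinarith [sq_nonneg (e 0), sq_nonneg (e 1)]
  refine ⟨(e 0 ^ 2 + e 1 ^ 2)⁻¹ • ![-e 1, e 0], ?_⟩
  rw [wedge_smul_right]
  simp only [wedge, Matrix.cons_val_zero, Matrix.cons_val_one]
  field_simp
  ring

theorem exists_equiv_apply_eq_verticalScaling {A : Plane →L[ℝ] Plane} {e : Plane} (he : e ≠ 0)
    (hAe : A e = 0) (hA : ∑ i, A (Pi.single i 1) i ≠ 0) :
    ∃ Φ : Plane ≃L[ℝ] ℝ × ℝ, ∀ z,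
      Φ (A z) = verticalScaling (∑ i, A (Pi.single i 1) i) (Φ z) := by
  set τ := ∑ i, A (Pi.single i 1) i
  have hwedge (z : Plane) : wedge e (A z) = τ * wedge e z := by
    have h := wedge_map_add_wedge_map A e z
    rwa [hAe, ← zero_smul ℝ (0 : Plane), wedge_smul_left, zero_mul, zero_add] at h
  obtain ⟨f, hef⟩ := exists_wedge_eq_one he
  have hAz (z : Plane) : A z = wedge e z • A f := by
    have h := congrArg A (wedge_smul_eq_wedge_smul_add_wedge_smul e f z)
    simpa [hef, hAe] using h
  let φ : Plane →ₗ[ℝ] ℝ × ℝ :=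
    { toFun z := (wedge z (A f), wedge e z)
      map_add' z w := by simp only [wedge, Pi.add_apply, Prod.mk_add_mk]; congr 1 <;> ring
      map_smul' c z := by
        simp only [wedge_smul_left, wedge_smul_right, RingHom.id_apply, Prod.smul_mk, smul_eq_mul] }
  have hφ : Function.Injective φ := by
    refine (injective_iff_map_eq_zero φ).2 fun z hz => ?_
    obtain ⟨hzf, hez⟩ : wedge z (A f) = 0 ∧ wedge e z = 0 := Prod.ext_iff.1 hz
    have h := wedge_smul_eq_wedge_smul_add_wedge_smul e (A f) z
    rw [hwedge, hef, hzf, hez, mul_one, zero_smul, zero_smul, add_zero] at h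
    exact (smul_eq_zero.1 h).resolve_left hA
  refine ⟨(φ.linearEquivOfInjective hφ (by simp)).toContinuousLinearEquiv, fun z => ?_⟩
  have hfst : wedge (A z) (A f) = 0 := by
    rw [hAz z, wedge_smul_left]
    simp only [wedge, mul_comm (A f 0), sub_self, mul_zero]
  exact Prod.ext hfst (hwedge z)

theorem exists_tendsto_of_fderiv_apply_eq_zero {U : Plane → Plane} {x : ℝ → Plane} {K : Set Plane}
    {p e : Plane} (hU : ContDiff ℝ 1 U) (hx : ∀ t, HasDerivAt x (U (x t)) t) (hK : IsCompact K)
    (hxK : ∀ᶠ t in atTop, x t ∈ K) (hU0 : Tendsto (fun t => U (x t)) atTop (𝓝 0))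
    (hp : MapClusterPt p atTop x) (hdiv : divergence U p ≠ 0) (he : e ≠ 0)
    (hUe : fderiv ℝ U p e = 0) : ∃ q, Tendsto x atTop (𝓝 q) := by
  obtain ⟨Φ, hΦ⟩ := exists_equiv_apply_eq_verticalScaling he hUe hdiv
  have hF : fderiv ℝ (fun w => Φ (U (Φ.symm w))) (Φ p) = verticalScaling (divergence U p) := by
    have hderiv := Φ.hasFDerivAt.comp (Φ p)
      ((hU.differentiable one_ne_zero (Φ.symm (Φ p))).hasFDerivAt.comp (Φ p) Φ.symm.hasFDerivAt)
    refine hderiv.fderiv.trans (ContinuousLinearMap.ext fun v => ?_)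
    simpa [divergence] using hΦ (Φ.symm v)
  obtain ⟨q, hq⟩ := exists_tendsto_of_fderiv_eq_verticalScaling (ξ := fun t => Φ (x t)) hdiv
    (Φ.contDiff.comp (hU.comp Φ.symm.contDiff))
    (fun t => by simpa [Function.comp_def] using Φ.hasFDerivAt.comp_hasDerivAt t (hx t))
    (hK.image Φ.continuous) (hxK.mono fun t => mem_image_of_mem Φ)
    (by simpa [Function.comp_def] using (Φ.continuous.tendsto 0).comp hU0)
    (hp.continuousAt_comp Φ.continuous.continuousAt) hF
  exact ⟨Φ.symm q, by simpa [Function.comp_def] using (Φ.symm.continuous.tendsto q).comp hq⟩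

end Equilibria

end PoincareBendixson

open PoincareBendixson

/-- Poincaré–Bendixson refinement under the Bendixson criterion:
if a C¹ planar vector field has nowhere-vanishing divergence, then every
solution of `x' = U x` with bounded forward orbit converges to an
equilibrium point of `U`. -/
theorem poincare_bendixson_refinement
    (U : (Fin 2 → ℝ) → (Fin 2 → ℝ))
    (hU : ContDiff ℝ 1 U)
    (hdiv : ∀ p : Fin 2 → ℝ,
      fderiv ℝ U p (Pi.single 0 1) 0 + fderiv ℝ U p (Pi.single 1 1) 1 ≠ 0)
    (x : ℝ → (Fin 2 → ℝ))
    (hx : ∀ t : ℝ, HasDerivAt x (U (x t)) t)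
    (hbdd : Bornology.IsBounded (x '' Set.Ici (0 : ℝ))) :
    ∃ p : Fin 2 → ℝ, U p = 0 ∧
      Filter.Tendsto x Filter.atTop (nhds p) := by
  have hdiv' (p : Fin 2 → ℝ) : divergence U p ≠ 0 := by
    simpa [divergence, Fin.sum_univ_two] using hdiv p
  have hxc : Continuous x := continuous_of_forall_hasDerivAt hx
  obtain ⟨R, hR⟩ := hbdd.exists_norm_le
  rw [Set.forall_mem_image] at hR
  have hK := isCompact_closedBall (0 : Fin 2 → ℝ) R
  have hxK : ∀ᶠ t in atTop, x t ∈ closedBall 0 R := by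
    filter_upwards [eventually_ge_atTop 0] with t ht
    simpa using hR ht
  have hU0 := tendsto_zero_of_divergence_ne_zero hU hdiv' hx fun t => @hR t
  obtain ⟨p₀, -, hp₀⟩ := hK.exists_mapClusterPt_of_frequently hxK.frequently
  obtain ⟨p, hp⟩ : ∃ p, Tendsto x atTop (nhds p) := by
    by_cases hinj : Function.Injective (fderiv ℝ U p₀)
    · exact ⟨p₀, tendsto_of_injective_fderiv
        (hU.differentiable one_ne_zero) hxc hK hxK hU0 hp₀ hinj⟩
    · rw [injective_iff_map_eq_zero] at hinj
      push Not at hinj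
      obtain ⟨e, hUe, he⟩ := hinj
      exact exists_tendsto_of_fderiv_apply_eq_zero hU hx hK hxK hU0 hp₀ (hdiv' p₀) he hUe
  exact ⟨p, tendsto_nhds_unique ((hU.continuous.tendsto p).comp hp) hU0, hp⟩
end

section
/- Let U : ℝ² → ℝ² be a continuously differentiable vector field such that (i) for each i ∈ {1,2} and every m ∈ ℝ² with mᵢ > 1, the partial derivative ∂Uᵢ/∂mᵢ(m) < 0, and (ii) Uᵢ(m) ≥ 0 whenever mᵢ = 1. Let m : [0,∞) → ℝ² be a solution of m'(t) = U(m(t)) with m(0) ∈ (1,∞)² and with bounded forward orbit. Then m(t) converges as t → ∞ to a point p ∈ [1,∞)² with U(p) = 0. -/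
open Set Filter Topology MeasureTheory

/-!
The argument is a quantitative Bendixson–Dulac criterion. Close an orbit segment of `U` by a
horizontal and a vertical step, and let `χ` be a mollification of the winding number of this loop.
For every vector field `V`, integration by parts gives `∫ dχ(V) = -∫ χ div V`. Up to small errors,
the left side is `∫ V × U dt` along the orbit, plus a flux through the two steps which is bounded
independently of the length of the segment. For `V = U` the orbit does not contribute, and
testing with `sign χ` in addition bounds `∫ |χ| (-div U)`. If `V` is supported where `div U < 0`,
then `|div V| ≤ C (-div U)`, and hence `∫ V × U dt` is bounded along the whole orbit. Choosing for
`V` a bump times `U` rotated by a right angle shows that `|U|²` is integrable in time near each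
limit point of the orbit with `div U < 0`, so such a limit point is an equilibrium. The only other
candidate is the corner `(1, 1)`, at which `U ≥ 0`; there `U > 0` in some coordinate is impossible
because the orbit would have come from outside the quadrant.

As `U p i` is strictly decreasing in `p i`, two equilibria which share one coordinate coincide, and
the limit set is a graph over each axis. If it had two points, it would cross some box
from corner to corner. By the same monotonicity, `U` points into such a box, so the orbit
would be trapped in it and could not return to the limit points outside.
-/

noncomputable section

section Divergence

variable {ι : Type*} [Fintype ι] {U V : (ι → ℝ) → ι → ℝ} {χ : (ι → ℝ) → ℝ}

lemma integrable_fderiv_apply (hV : Continuous V) (hχ : ContDiff ℝ 1 χ)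
    (hc : HasCompactSupport χ) : Integrable fun p => fderiv ℝ χ p (V p) :=
  Continuous.integrable_of_hasCompactSupport ((hχ.continuous_fderiv one_ne_zero).clm_apply hV)
    (hc.fderiv ℝ |>.mono' fun p hp => subset_tsupport _ fun h => hp (by simp [h]))

variable [DecidableEq ι]

/-- The divergence `∑ᵢ ∂Vᵢ/∂pᵢ` of a vector field on `ℝ^ι`; it is meaningful where `V` is
differentiable. -/
def divergence (V : (ι → ℝ) → ι → ℝ) (p : ι → ℝ) : ℝ :=
  ∑ i, fderiv ℝ V p (Pi.single i 1) i

lemma continuous_divergence (hV : ContDiff ℝ 1 V) : Continuous (divergence V) := by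
  have := hV.continuous_fderiv one_ne_zero
  unfold divergence
  fun_prop

lemma divergence_eq_zero_of_notMem_tsupport {p : ι → ℝ} (hp : p ∉ tsupport V) :
    divergence V p = 0 := by
  have hfderiv : fderiv ℝ V p = 0 :=
    image_eq_zero_of_notMem_tsupport fun h => hp (tsupport_fderiv_subset ℝ h)
  simp [divergence, hfderiv]

lemma fderiv_apply_eq_sum (χ : (ι → ℝ) → ℝ) (p v : ι → ℝ) :
    fderiv ℝ χ p v = ∑ i, v i * fderiv ℝ χ p (Pi.single i 1) := by
  conv_lhs => rw [pi_eq_sum_univ' v]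
  simp only [map_sum, map_smul, smul_eq_mul]

lemma integral_fderiv_apply_eq_neg_integral_mul_divergence (hV : ContDiff ℝ 1 V)
    (hχ : ContDiff ℝ 1 χ) (hc : HasCompactSupport χ) :
    ∫ p, fderiv ℝ χ p (V p) = -∫ p, χ p * divergence V p := by
  have := hV.continuous_fderiv one_ne_zero
  have := hχ.continuous_fderiv one_ne_zero
  have hVc := hV.continuous
  have hχc := hχ.continuous
  have hVi (i : ι) (p v : ι → ℝ) : fderiv ℝ (fun q => V q i) p v = fderiv ℝ V p v i := by
    rw [fderiv_apply (hV.differentiable one_ne_zero p)]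
    rfl
  have integrable_left (i : ι) :
      Integrable fun p => V p i * fderiv ℝ χ p (Pi.single i 1) :=
    Continuous.integrable_of_hasCompactSupport (by fun_prop) (hc.fderiv_apply ℝ _).mul_left
  have integrable_right (i : ι) :
      Integrable fun p => fderiv ℝ V p (Pi.single i 1) i * χ p :=
    Continuous.integrable_of_hasCompactSupport (by fun_prop) hc.mul_left
  have by_parts (i : ι) : ∫ p, V p i * fderiv ℝ χ p (Pi.single i 1) =
      -∫ p, fderiv ℝ V p (Pi.single i 1) i * χ p := by
    simp only [← hVi]
    refine integral_mul_fderiv_eq_neg_fderiv_mul_of_integrable ?_ (integrable_left i) ?_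
      (fun p _ => (contDiff_pi.1 hV i).differentiable one_ne_zero p)
      (fun p _ => hχ.differentiable one_ne_zero p)
    · simpa only [hVi] using integrable_right i
    · exact Continuous.integrable_of_hasCompactSupport (by fun_prop) hc.mul_left
  calc ∫ p, fderiv ℝ χ p (V p)
      = ∑ i, ∫ p, V p i * fderiv ℝ χ p (Pi.single i 1) := by
        simp only [fderiv_apply_eq_sum χ _ (V _)]
        exact integral_finsetSum _ fun i _ => integrable_left i
    _ = -∑ i, ∫ p, fderiv ℝ V p (Pi.single i 1) i * χ p := by
        simp only [by_parts, Finset.sum_neg_distrib]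
    _ = -∫ p, χ p * divergence V p := by
        rw [← integral_finsetSum _ fun i _ => integrable_right i]
        simp only [divergence, Finset.mul_sum, mul_comm]

/-- A smooth approximation from below of the absolute value, within `δ` of it. -/
def smoothAbs (δ r : ℝ) : ℝ := √(r ^ 2 + δ ^ 2) - δ

lemma smoothAbs_zero {δ : ℝ} (hδ : 0 ≤ δ) : smoothAbs δ 0 = 0 := by
  simp [smoothAbs, Real.sqrt_sq hδ]

lemma abs_sub_le_smoothAbs (δ r : ℝ) : |r| - δ ≤ smoothAbs δ r :=
  sub_le_sub_right (Real.abs_le_sqrt (le_add_of_nonneg_right (sq_nonneg δ))) δ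

lemma contDiff_smoothAbs {δ : ℝ} (hδ : 0 < δ) : ContDiff ℝ 1 (smoothAbs δ) :=
  ((contDiff_id.pow 2).add contDiff_const).sqrt (fun r => by positivity) |>.sub contDiff_const

lemma abs_deriv_smoothAbs_le_one {δ : ℝ} (hδ : 0 < δ) (r : ℝ) : |deriv (smoothAbs δ) r| ≤ 1 := by
  have hderiv : HasDerivAt (smoothAbs δ) (r / √(r ^ 2 + δ ^ 2)) r := by
    have h := (((hasDerivAt_pow 2 r).add_const (δ ^ 2)).sqrt (by positivity)).sub_const δ
    refine h.congr_deriv ?_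
    field_simp
    ring
  rw [hderiv.deriv, abs_div, abs_of_nonneg (Real.sqrt_nonneg _)]
  exact div_le_one_of_le₀ (Real.abs_le_sqrt (le_add_of_nonneg_right (sq_nonneg δ)))
    (Real.sqrt_nonneg _)

lemma integral_smoothAbs_mul_neg_divergence_le {δ : ℝ} (hδ : 0 < δ) (hU : ContDiff ℝ 1 U)
    (hχ : ContDiff ℝ 1 χ) (hc : HasCompactSupport χ) :
    ∫ p, smoothAbs δ (χ p) * -divergence U p ≤ ∫ p, |fderiv ℝ χ p (U p)| := by
  have hS : ContDiff ℝ 1 fun p => smoothAbs δ (χ p) := (contDiff_smoothAbs hδ).comp hχ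
  have hSc : HasCompactSupport fun p => smoothAbs δ (χ p) := hc.comp_left (smoothAbs_zero hδ.le)
  have hSderiv (p : ι → ℝ) : fderiv ℝ (fun q => smoothAbs δ (χ q)) p (U p) =
      deriv (smoothAbs δ) (χ p) * fderiv ℝ χ p (U p) := by
    have h := ((contDiff_smoothAbs hδ).differentiable one_ne_zero (χ p)).hasDerivAt.comp_hasFDerivAt
      p (hχ.differentiable one_ne_zero p).hasFDerivAt
    exact congrArg (· (U p)) h.fderiv
  calc ∫ p, smoothAbs δ (χ p) * -divergence U p
      = ∫ p, fderiv ℝ (fun q => smoothAbs δ (χ q)) p (U p) := by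
        simp only [mul_neg, integral_neg]
        exact (integral_fderiv_apply_eq_neg_integral_mul_divergence hU hS hSc).symm
    _ ≤ ∫ p, |fderiv ℝ χ p (U p)| := by
        refine integral_mono (integrable_fderiv_apply hU.continuous hS hSc)
          (integrable_fderiv_apply hU.continuous hχ hc).abs fun p => ?_
        simp only [hSderiv]
        calc _ ≤ |deriv (smoothAbs δ) (χ p)| * |fderiv ℝ χ p (U p)| :=
              (le_abs_self _).trans_eq (abs_mul _ _)
          _ ≤ _ := mul_le_of_le_one_left (abs_nonneg _) (abs_deriv_smoothAbs_le_one hδ _)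

lemma integral_abs_mul_neg_divergence_le (hU : ContDiff ℝ 1 U) (hχ : ContDiff ℝ 1 χ)
    (hc : HasCompactSupport χ) (hdiv : ∀ p, χ p ≠ 0 → divergence U p ≤ 0) :
    ∫ p, |χ p| * -divergence U p ≤ ∫ p, |fderiv ℝ χ p (U p)| := by
  have hdivc := continuous_divergence hU
  have hχc := hχ.continuous
  set I := ∫ p in tsupport χ, |divergence U p|
  have approx {δ : ℝ} (hδ : 0 < δ) :
      ∫ p, |χ p| * -divergence U p ≤ (∫ p, |fderiv ℝ χ p (U p)|) + δ * I := by
    have integrable_smooth : Integrable fun p => smoothAbs δ (χ p) * -divergence U p :=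
      Continuous.integrable_of_hasCompactSupport
        (((contDiff_smoothAbs hδ).continuous.comp hχc).mul hdivc.neg)
        (hc.comp_left (smoothAbs_zero hδ.le)).mul_right
    have integrable_error :
        Integrable ((tsupport χ).indicator fun p => δ * |divergence U p|) :=
      ((continuous_const.mul hdivc.abs).continuousOn.integrableOn_compact hc).integrable_indicator
        (isClosed_tsupport χ).measurableSet
    calc ∫ p, |χ p| * -divergence U p
        ≤ ∫ p, (smoothAbs δ (χ p) * -divergence U p +
            (tsupport χ).indicator (fun p => δ * |divergence U p|) p) := by
          refine integral_mono (Continuous.integrable_of_hasCompactSupport (by fun_prop)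
            (hc.comp_left (g := fun r => |r|) abs_zero).mul_right)
            (integrable_smooth.add integrable_error) fun p => ?_
          by_cases hp : χ p = 0
          · simpa [hp, smoothAbs_zero hδ.le] using
              indicator_nonneg (fun p _ => mul_nonneg hδ.le (abs_nonneg (divergence U p))) p
          · have := hdiv p hp
            simp only [indicator_of_mem (subset_tsupport χ hp), abs_of_nonpos this]
            nlinarith [abs_sub_le_smoothAbs δ (χ p)]
      _ = (∫ p, smoothAbs δ (χ p) * -divergence U p) + δ * I := by
          rw [integral_add integrable_smooth integrable_error,
            integral_indicator (isClosed_tsupport χ).measurableSet, integral_const_mul]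
      _ ≤ _ := add_le_add (integral_smoothAbs_mul_neg_divergence_le hδ hU hχ hc) le_rfl
  have limit : Tendsto (fun δ => (∫ p, |fderiv ℝ χ p (U p)|) + δ * I) (𝓝[>] 0)
      (𝓝 (∫ p, |fderiv ℝ χ p (U p)|)) := by
    refine tendsto_nhdsWithin_of_tendsto_nhds ?_
    simpa using (Continuous.tendsto (f := fun δ => (∫ p, |fderiv ℝ χ p (U p)|) + δ * I)
      (by fun_prop) 0)
  exact ge_of_tendsto limit (eventually_mem_nhdsWithin.mono fun δ hδ => approx hδ)

lemma abs_integral_fderiv_apply_le_of_abs_divergence_le {C : ℝ} (hU : ContDiff ℝ 1 U)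
    (hV : ContDiff ℝ 1 V) (hχ : ContDiff ℝ 1 χ) (hc : HasCompactSupport χ) (hC : 0 ≤ C)
    (hUdiv : ∀ p, χ p ≠ 0 → divergence U p ≤ 0)
    (hVdiv : ∀ p, χ p ≠ 0 → |divergence V p| ≤ C * -divergence U p) :
    |∫ p, fderiv ℝ χ p (V p)| ≤ C * ∫ p, |fderiv ℝ χ p (U p)| := by
  have hUc := continuous_divergence hU
  have hVc := continuous_divergence hV
  have hχc := hχ.continuous
  have habs : HasCompactSupport fun p => |χ p| := hc.comp_left (g := fun r => |r|) abs_zero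
  calc |∫ p, fderiv ℝ χ p (V p)| = |∫ p, χ p * divergence V p| := by
        rw [integral_fderiv_apply_eq_neg_integral_mul_divergence hV hχ hc, abs_neg]
    _ ≤ ∫ p, |χ p| * |divergence V p| := by
        simpa only [abs_mul] using
          abs_integral_le_integral_abs (μ := volume) (f := fun p => χ p * divergence V p)
    _ ≤ ∫ p, C * (|χ p| * -divergence U p) := by
        refine integral_mono
          (Continuous.integrable_of_hasCompactSupport (by fun_prop) habs.mul_right)
          (Continuous.integrable_of_hasCompactSupport (by fun_prop) habs.mul_right.mul_left)
          fun p => ?_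
        by_cases hp : χ p = 0
        · simp [hp]
        · simpa only [mul_left_comm C] using
            mul_le_mul_of_nonneg_left (hVdiv p hp) (abs_nonneg (χ p))
    _ ≤ C * ∫ p, |fderiv ℝ χ p (U p)| := by
        rw [integral_const_mul]
        exact mul_le_mul_of_nonneg_left (integral_abs_mul_neg_divergence_le hU hχ hc hUdiv) hC

lemma exists_abs_divergence_le_mul_neg_divergence (hU : ContDiff ℝ 1 U) (hV : ContDiff ℝ 1 V)
    (hVc : HasCompactSupport V) (hneg : ∀ p ∈ tsupport V, divergence U p < 0) :
    ∃ C, 0 ≤ C ∧ ∀ p, divergence U p ≤ 0 → |divergence V p| ≤ C * -divergence U p := by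
  have hratio : ContinuousOn (fun p => divergence V p / divergence U p) (tsupport V) :=
    (continuous_divergence hV).continuousOn.div (continuous_divergence hU).continuousOn
      fun p hp => (hneg p hp).ne
  obtain ⟨C, hC⟩ := hVc.isCompact.exists_bound_of_continuousOn hratio
  refine ⟨|C|, abs_nonneg C, fun p hp => ?_⟩
  by_cases hpV : p ∈ tsupport V
  · have hbound := (hC p hpV).trans (le_abs_self C)
    rwa [norm_div, Real.norm_eq_abs, Real.norm_eq_abs, abs_of_neg (hneg p hpV),
      div_le_iff₀ (neg_pos.2 (hneg p hpV))] at hbound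
  · rw [divergence_eq_zero_of_notMem_tsupport hpV, abs_zero]
    exact mul_nonneg (abs_nonneg C) (neg_nonneg.2 hp)

end Divergence

section Mollifier

variable (φ : ContDiffBump (0 : ℝ))

lemma normed_eq_zero_of_rOut_le_abs {u : ℝ} (hu : φ.rOut ≤ |u|) : φ.normed volume u = 0 := by
  rw [← Function.notMem_support, φ.support_normed_eq, mem_ball_zero_iff, Real.norm_eq_abs]
  exact hu.not_gt

lemma continuous_normed : Continuous (φ.normed volume) :=
  (φ.contDiff_normed (n := 0)).continuous

lemma hasDerivAt_normed (u : ℝ) :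
    HasDerivAt (φ.normed volume) (deriv (φ.normed volume) u) u :=
  ((φ.contDiff_normed (n := 1)).differentiable one_ne_zero u).hasDerivAt

lemma continuous_deriv_normed : Continuous (deriv (φ.normed volume)) :=
  (φ.contDiff_normed (n := 1)).continuous_deriv_one

/-- The primitive of a normalised bump: a smooth version of the Heaviside step, with which it
agrees at distance at least `φ.rOut` from the origin. -/
def mollifiedStep (y : ℝ) : ℝ := ∫ u in -φ.rOut..y, φ.normed volume u

lemma hasDerivAt_mollifiedStep (y : ℝ) :
    HasDerivAt (mollifiedStep φ) (φ.normed volume y) y :=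
  (continuous_normed φ).integral_hasStrictDerivAt _ y |>.hasDerivAt

@[fun_prop]
lemma continuous_mollifiedStep : Continuous (mollifiedStep φ) :=
  continuous_iff_continuousAt.2 fun y => (hasDerivAt_mollifiedStep φ y).continuousAt

lemma monotone_mollifiedStep : Monotone (mollifiedStep φ) :=
  monotone_of_hasDerivAt_nonneg (hasDerivAt_mollifiedStep φ) φ.nonneg_normed

lemma mollifiedStep_of_le {y : ℝ} (hy : y ≤ -φ.rOut) : mollifiedStep φ y = 0 := by
  refine intervalIntegral.integral_zero_ae (ae_of_all _ fun u hu => ?_)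
  rw [uIoc_of_ge hy] at hu
  exact normed_eq_zero_of_rOut_le_abs φ (by linarith [neg_le_abs u, hu.2])

lemma mollifiedStep_of_ge {y : ℝ} (hy : φ.rOut ≤ y) : mollifiedStep φ y = 1 := by
  rw [mollifiedStep, intervalIntegral.integral_eq_integral_of_support_subset, φ.integral_normed]
  rw [φ.support_normed_eq, Real.ball_eq_Ioo, zero_sub, zero_add]
  exact fun u hu => ⟨hu.1, hu.2.le.trans hy⟩

lemma mollifiedStep_nonneg (y : ℝ) : 0 ≤ mollifiedStep φ y := by
  rw [← mollifiedStep_of_le φ (min_le_right y (-φ.rOut))]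
  exact monotone_mollifiedStep φ (min_le_left _ _)

lemma mollifiedStep_le_one (y : ℝ) : mollifiedStep φ y ≤ 1 := by
  rw [← mollifiedStep_of_ge φ (le_max_right y φ.rOut)]
  exact monotone_mollifiedStep φ (le_max_left _ _)

lemma abs_mollifiedStep_sub_le_indicator (x y u : ℝ) :
    |mollifiedStep φ (u - x) - mollifiedStep φ (u - y)| ≤
      (Icc (min x y - φ.rOut) (max x y + φ.rOut)).indicator 1 u := by
  by_cases hu : u ∈ Icc (min x y - φ.rOut) (max x y + φ.rOut)
  · rw [indicator_of_mem hu, Pi.one_apply, abs_sub_le_iff]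
    constructor <;> linarith [mollifiedStep_nonneg φ (u - x), mollifiedStep_nonneg φ (u - y),
      mollifiedStep_le_one φ (u - x), mollifiedStep_le_one φ (u - y)]
  · rw [indicator_of_notMem hu]
    rw [mem_Icc, not_and_or, not_le, not_le] at hu
    rcases hu with hu | hu
    · rw [mollifiedStep_of_le φ (by linarith [min_le_left x y]),
        mollifiedStep_of_le φ (by linarith [min_le_right x y]), sub_self, abs_zero]
    · rw [mollifiedStep_of_ge φ (by linarith [le_max_left x y]),
        mollifiedStep_of_ge φ (by linarith [le_max_right x y]), sub_self, abs_zero]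

lemma integrable_mollifiedStep_sub (x y : ℝ) :
    Integrable fun u => mollifiedStep φ (u - x) - mollifiedStep φ (u - y) := by
  refine Integrable.mono' ((integrable_indicator_iff measurableSet_Icc).2
    (integrableOn_const measure_Icc_lt_top.ne (C := (1 : ℝ)))) ?_
    (ae_of_all _ (abs_mollifiedStep_sub_le_indicator φ x y))
  exact Continuous.aestronglyMeasurable (by fun_prop)

lemma integral_abs_mollifiedStep_sub_le (x y : ℝ) :
    ∫ u, |mollifiedStep φ (u - x) - mollifiedStep φ (u - y)| ≤ |x - y| + 2 * φ.rOut := by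
  have hr := φ.rOut_pos
  calc _ ≤ ∫ u, (Icc (min x y - φ.rOut) (max x y + φ.rOut)).indicator (1 : ℝ → ℝ) u :=
        integral_mono (integrable_mollifiedStep_sub φ x y).abs
          ((integrable_indicator_iff measurableSet_Icc).2
            (integrableOn_const measure_Icc_lt_top.ne (C := (1 : ℝ))))
          (abs_mollifiedStep_sub_le_indicator φ x y)
    _ = |x - y| + 2 * φ.rOut := by
        rw [integral_indicator_one measurableSet_Icc, Real.volume_real_Icc_of_le,
          ← max_sub_min_eq_abs' x y]
        · ring
        · linarith [min_le_max (a := x) (b := y)]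

variable {ι : Type*} [Fintype ι]

/-- The product mollifier on `ℝ^ι` built from a one-dimensional bump; it has integral one and
lives on the open sup-norm ball of radius `φ.rOut`. -/
def mollifier (p : ι → ℝ) : ℝ := ∏ i, φ.normed volume (p i)

@[fun_prop]
lemma continuous_mollifier : Continuous (mollifier φ : (ι → ℝ) → ℝ) :=
  continuous_finsetProd _ fun i _ => (continuous_normed φ).comp (continuous_apply i)

lemma mollifier_nonneg (p : ι → ℝ) : 0 ≤ mollifier φ p :=
  Finset.prod_nonneg fun _ _ => φ.nonneg_normed _

lemma mollifier_eq_zero_of_rOut_le_norm {p : ι → ℝ} (hp : φ.rOut ≤ ‖p‖) : mollifier φ p = 0 := by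
  obtain ⟨i, hi⟩ : ∃ i, φ.rOut ≤ |p i| := by
    by_contra! h
    exact hp.not_gt ((pi_norm_lt_iff φ.rOut_pos).2 h)
  exact Finset.prod_eq_zero (Finset.mem_univ i) (normed_eq_zero_of_rOut_le_abs φ hi)

lemma integral_mollifier_sub (q : ι → ℝ) : ∫ p, mollifier φ (p - q) = 1 := by
  rw [integral_sub_right_eq_self (mollifier φ) q]
  simp only [mollifier, integral_fintype_prod_volume_eq_prod, φ.integral_normed,
    Finset.prod_const_one]

lemma integrable_mollifier_sub (q : ι → ℝ) : Integrable fun p => mollifier φ (p - q) :=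
  .of_integral_ne_zero (by rw [integral_mollifier_sub φ q]; exact one_ne_zero)

variable {φ} {γ : ℝ → ι → ℝ} {a b : ℝ}

lemma integrable_mollifier_sub_mul {Φ : (ι → ℝ) → ℝ → ℝ} (hγ : Continuous γ)
    (hΦ : Continuous Φ.uncurry) :
    Integrable (fun x : (ι → ℝ) × ℝ => mollifier φ (x.1 - γ x.2) * Φ x.1 x.2)
      (volume.prod (volume.restrict (Ioc a b))) := by
  obtain ⟨R, hR⟩ := (isCompact_Icc (a := a) (b := b)).exists_bound_of_continuousOn hγ.continuousOn
  have hcompact : IsCompact (Metric.closedBall (0 : ι → ℝ) (R + φ.rOut) ×ˢ Icc a b) :=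
    (isCompact_closedBall _ _).prod isCompact_Icc
  have hF : Continuous fun x : (ι → ℝ) × ℝ => mollifier φ (x.1 - γ x.2) * Φ x.1 x.2 := by
    have : Continuous fun x : (ι → ℝ) × ℝ => Φ x.1 x.2 := hΦ
    fun_prop
  rw [← Measure.restrict_univ (μ := (volume : Measure (ι → ℝ))), Measure.prod_restrict]
  refine IntegrableOn.of_forall_sdiff_eq_zero (hF.continuousOn.integrableOn_compact hcompact)
    (MeasurableSet.univ.prod measurableSet_Ioc) fun x ⟨hx, hxK⟩ => ?_
  have hs : x.2 ∈ Icc a b := Ioc_subset_Icc_self hx.2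
  have hfar : R + φ.rOut < ‖x.1‖ := by
    by_contra! h
    exact hxK ⟨mem_closedBall_zero_iff.2 h, hs⟩
  rw [mollifier_eq_zero_of_rOut_le_norm φ, zero_mul]
  linarith [norm_sub_norm_le x.1 (γ x.2), hR x.2 hs]

lemma integral_mollifier_sub_mul_swap {h : ℝ → ℝ} (hγ : Continuous γ) (hh : Continuous h)
    (hab : a ≤ b) :
    ∫ p, ∫ s in a..b, mollifier φ (p - γ s) * h s = ∫ s in a..b, h s := by
  have hint := integrable_mollifier_sub_mul (φ := φ) (a := a) (b := b) (Φ := fun _ s => h s) hγ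
    (hh.comp continuous_snd)
  simp only [intervalIntegral.integral_of_le hab]
  rw [integral_integral_swap hint]
  simp only [integral_mul_const, integral_mollifier_sub, one_mul]

lemma integral_abs_mollifier_sub_mul_le {Φ : (ι → ℝ) → ℝ → ℝ} {c : ℝ} (hγ : Continuous γ)
    (hΦ : Continuous Φ.uncurry) (hab : a ≤ b)
    (hbound : ∀ s ∈ Icc a b, ∀ p, ‖p - γ s‖ < φ.rOut → |Φ p s| ≤ c) :
    ∫ p, |∫ s in a..b, mollifier φ (p - γ s) * Φ p s| ≤ c * (b - a) := by
  have hint := integrable_mollifier_sub_mul (φ := φ) (a := a) (b := b) hγ hΦ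
  have inner_le {s : ℝ} (hs : s ∈ Icc a b) :
      ∫ p, |mollifier φ (p - γ s) * Φ p s| ≤ c := by
    calc ∫ p, |mollifier φ (p - γ s) * Φ p s| ≤ ∫ p, mollifier φ (p - γ s) * c := by
          refine integral_mono_of_nonneg (ae_of_all _ fun p => abs_nonneg _)
            ((integrable_mollifier_sub φ _).mul_const c) (ae_of_all _ fun p => ?_)
          simp only [abs_mul, abs_of_nonneg (mollifier_nonneg φ (p - γ s))]
          rcases lt_or_ge ‖p - γ s‖ φ.rOut with hp | hp
          · exact mul_le_mul_of_nonneg_left (hbound s hs p hp) (mollifier_nonneg φ _)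
          · simp only [mollifier_eq_zero_of_rOut_le_norm φ hp, zero_mul, le_refl]
      _ = c := by rw [integral_mul_const, integral_mollifier_sub, one_mul]
  simp only [intervalIntegral.integral_of_le hab]
  calc ∫ p, |∫ s in Ioc a b, mollifier φ (p - γ s) * Φ p s|
      ≤ ∫ p, ∫ s in Ioc a b, |mollifier φ (p - γ s) * Φ p s| :=
        integral_mono hint.integral_prod_left.abs hint.abs.integral_prod_left
          fun p => abs_integral_le_integral_abs
    _ = ∫ s in Ioc a b, ∫ p, |mollifier φ (p - γ s) * Φ p s| := integral_integral_swap hint.abs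
    _ ≤ ∫ _ in Ioc a b, c :=
        setIntegral_mono_on hint.abs.integral_prod_right (integrableOn_const measure_Ioc_lt_top.ne)
          measurableSet_Ioc fun s hs => inner_le (Ioc_subset_Icc_self hs)
    _ = c * (b - a) := by
        rw [setIntegral_const, Real.volume_real_Ioc_of_le hab, smul_eq_mul, mul_comm]

end Mollifier

section Winding

lemma hasFDerivAt_intervalIntegral_of_continuous {E G : Type*} [NormedAddCommGroup E]
    [NormedSpace ℝ E] [ProperSpace E] [NormedAddCommGroup G] [NormedSpace ℝ G]
    {F : E → ℝ → G} {F' : E → ℝ → E →L[ℝ] G} (hF : ∀ p, Continuous (F p))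
    (hF' : Continuous F'.uncurry) (hderiv : ∀ p s, HasFDerivAt (F · s) (F' p s) p)
    (a b : ℝ) (p : E) :
    HasFDerivAt (fun q => ∫ s in a..b, F q s) (∫ s in a..b, F' p s) p := by
  obtain ⟨B, hB⟩ := ((isCompact_closedBall p 1).prod (isCompact_uIcc (a := a) (b := b)))
    |>.exists_bound_of_continuousOn hF'.continuousOn
  refine intervalIntegral.hasFDerivAt_integral_of_dominated_of_fderiv_le
    (Metric.closedBall_mem_nhds p one_pos) (bound := fun _ => B)
    (.of_forall fun q => (hF q).aestronglyMeasurable) ((hF p).intervalIntegrable a b)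
    (Continuous.aestronglyMeasurable (by fun_prop)) (ae_of_all _ fun s hs q hq => ?_)
    (by simp) (ae_of_all _ fun s _ q _ => hderiv q s)
  exact hB (q, s) ⟨hq, uIoc_subset_uIcc hs⟩

/-- The planar cross product `v₀ w₁ - v₁ w₀`. -/
def planarCross (v w : Fin 2 → ℝ) : ℝ := v 0 * w 1 - v 1 * w 0

/-- The linear form `v ↦ planarCross v w`. -/
def planarCrossForm (w : Fin 2 → ℝ) : (Fin 2 → ℝ) →L[ℝ] ℝ :=
  w 1 • ContinuousLinearMap.proj 0 - w 0 • ContinuousLinearMap.proj 1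

lemma planarCrossForm_apply (v w : Fin 2 → ℝ) : planarCrossForm w v = planarCross v w := by
  simp only [planarCrossForm, planarCross, sub_apply, smul_apply,
    ContinuousLinearMap.proj_apply, smul_eq_mul, mul_comm]

variable (φ : ContDiffBump (0 : ℝ)) (γ γ' : ℝ → Fin 2 → ℝ) (a b : ℝ)

/-- The mollified winding number around `p` of the loop that follows the path `γ` (of velocity
`γ'`) from time `a` to time `b` and returns horizontally, then vertically, to `γ a`.
It is the integral over the loop of the form `H (p₀ - x) k (p₁ - y) dy`, where `k` is the
normalised bump and `H` its primitive; the horizontal return does not contribute, and the vertical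
one contributes the term with `γ a 0`. -/
def mollifiedWinding (p : Fin 2 → ℝ) : ℝ :=
  ∫ s in a..b, (mollifiedStep φ (p 0 - γ s 0) - mollifiedStep φ (p 0 - γ a 0)) *
    φ.normed volume (p 1 - γ s 1) * γ' s 1

/-- The derivative of `mollifiedWinding`: the first term is carried by the path, the other two by
the horizontal and vertical return. -/
def mollifiedWindingDeriv (p : Fin 2 → ℝ) : (Fin 2 → ℝ) →L[ℝ] ℝ :=
  (∫ s in a..b, mollifier φ (p - γ s) • planarCrossForm (γ' s)) +
    (φ.normed volume (p 0 - γ a 0) *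
      (mollifiedStep φ (p 1 - γ b 1) - mollifiedStep φ (p 1 - γ a 1))) •
        ContinuousLinearMap.proj 0 +
    ((mollifiedStep φ (p 0 - γ a 0) - mollifiedStep φ (p 0 - γ b 0)) *
      φ.normed volume (p 1 - γ b 1)) • ContinuousLinearMap.proj 1

variable {φ γ γ' a b}

lemma mem_Icc_of_mollifiedWinding_ne_zero {l u p : Fin 2 → ℝ} (hab : a ≤ b)
    (hγ : ∀ s ∈ Icc a b, γ s ∈ Icc l u) (hp : mollifiedWinding φ γ γ' a b p ≠ 0) :
    p ∈ Icc (l - fun _ => φ.rOut) (u + fun _ => φ.rOut) := by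
  obtain ⟨s, hs, hsp⟩ : ∃ s ∈ Icc a b, (mollifiedStep φ (p 0 - γ s 0) -
      mollifiedStep φ (p 0 - γ a 0)) * φ.normed volume (p 1 - γ s 1) * γ' s 1 ≠ 0 := by
    by_contra! h
    refine hp (intervalIntegral.integral_zero_ae (ae_of_all _ fun s hs => h s ?_))
    exact Ioc_subset_Icc_self (uIoc_of_le hab ▸ hs)
  have hstep := left_ne_zero_of_mul (left_ne_zero_of_mul hsp)
  have hbump : |p 1 - γ s 1| < φ.rOut :=
    lt_of_not_ge fun h => right_ne_zero_of_mul (left_ne_zero_of_mul hsp)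
      (normed_eq_zero_of_rOut_le_abs φ h)
  obtain ⟨hls, hsu⟩ := hγ s hs
  obtain ⟨hla, hau⟩ := hγ a (left_mem_Icc.2 hab)
  have hlow : l 0 - φ.rOut ≤ p 0 := by
    by_contra! h
    refine hstep ?_
    rw [mollifiedStep_of_le φ (by linarith [hls 0]), mollifiedStep_of_le φ (by linarith [hla 0]),
      sub_self]
  have hupp : p 0 ≤ u 0 + φ.rOut := by
    by_contra! h
    refine hstep ?_
    rw [mollifiedStep_of_ge φ (by linarith [hsu 0]), mollifiedStep_of_ge φ (by linarith [hau 0]),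
      sub_self]
  rw [abs_lt] at hbump
  refine ⟨Fin.forall_fin_two.2 ⟨hlow, ?_⟩, Fin.forall_fin_two.2 ⟨hupp, ?_⟩⟩
  · change l 1 - φ.rOut ≤ p 1
    linarith [hls 1]
  · change p 1 ≤ u 1 + φ.rOut
    linarith [hsu 1]

lemma hasCompactSupport_mollifiedWinding (hab : a ≤ b) (hγ : Continuous γ) :
    HasCompactSupport (mollifiedWinding φ γ γ' a b) := by
  obtain ⟨⟨l, hl⟩, u, hu⟩ := isBounded_iff_bddBelow_bddAbove.1
    ((isCompact_Icc (a := a) (b := b)).image hγ).isBounded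
  have hlu : γ '' Icc a b ⊆ Icc l u := fun _ h => ⟨hl h, hu h⟩
  refine HasCompactSupport.of_support_subset_isCompact isCompact_Icc
    fun p hp => mem_Icc_of_mollifiedWinding_ne_zero hab (fun s hs => hlu (mem_image_of_mem γ hs)) hp

lemma continuous_planarCrossForm : Continuous planarCrossForm := by
  unfold planarCrossForm
  fun_prop

lemma continuous_mollifiedWindingDeriv (hγ : Continuous γ) (hγ' : Continuous γ') :
    Continuous (mollifiedWindingDeriv φ γ γ' a b) := by
  have hk := continuous_normed φ
  have hpath : Continuous fun p : Fin 2 → ℝ =>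
      ∫ s in a..b, mollifier φ (p - γ s) • planarCrossForm (γ' s) := by
    refine intervalIntegral.continuous_parametric_intervalIntegral_of_continuous' ?_ a b
    have := continuous_planarCrossForm
    fun_prop
  unfold mollifiedWindingDeriv
  fun_prop

lemma hasFDerivAt_mollifiedWinding_integrand (p : Fin 2 → ℝ) (s : ℝ) :
    HasFDerivAt (fun q : Fin 2 → ℝ =>
      (mollifiedStep φ (q 0 - γ s 0) - mollifiedStep φ (q 0 - γ a 0)) *
        φ.normed volume (q 1 - γ s 1) * γ' s 1)
      (γ' s 1 • ((mollifiedStep φ (p 0 - γ s 0) - mollifiedStep φ (p 0 - γ a 0)) •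
          deriv (φ.normed volume) (p 1 - γ s 1) •
            (ContinuousLinearMap.proj 1 : (Fin 2 → ℝ) →L[ℝ] ℝ) +
        φ.normed volume (p 1 - γ s 1) •
          (φ.normed volume (p 0 - γ s 0) - φ.normed volume (p 0 - γ a 0)) •
            (ContinuousLinearMap.proj 0 : (Fin 2 → ℝ) →L[ℝ] ℝ))) p := by
  have coord (i : Fin 2) (c : ℝ) :
      HasFDerivAt (fun q : Fin 2 → ℝ => q i - c) (ContinuousLinearMap.proj i : _ →L[ℝ] ℝ) p :=
    (hasFDerivAt_apply i p).sub_const c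
  have hstep (c : ℝ) := (hasDerivAt_mollifiedStep φ (p 0 - c)).comp_hasFDerivAt p (coord 0 c)
  have hbump := (hasDerivAt_normed φ (p 1 - γ s 1)).comp_hasFDerivAt p (coord 1 (γ s 1))
  refine ((((hstep _).sub (hstep _)).mul hbump).mul_const (γ' s 1)).congr_fderiv ?_
  rw [← sub_smul]
  rfl

lemma integral_bump_mul_velocity (hab : a ≤ b) (hγ : Continuous γ) (hγ' : Continuous γ')
    (hderiv : ∀ s ∈ Ioo a b, HasDerivAt γ (γ' s) s) (y : ℝ) :
    ∫ s in a..b, φ.normed volume (y - γ s 1) * γ' s 1 =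
      mollifiedStep φ (y - γ a 1) - mollifiedStep φ (y - γ b 1) := by
  have hk := continuous_normed φ
  have hprimitive (s : ℝ) (hs : s ∈ Ioo a b) : HasDerivAt (fun s => -mollifiedStep φ (y - γ s 1))
      (φ.normed volume (y - γ s 1) * γ' s 1) s := by
    refine ((hasDerivAt_mollifiedStep φ (y - γ s 1)).comp s
      ((hasDerivAt_pi.1 (hderiv s hs) 1).const_sub y)).neg.congr_deriv ?_
    ring
  rw [intervalIntegral.integral_eq_sub_of_hasDerivAt_of_le hab
    (Continuous.continuousOn (by fun_prop)) hprimitive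
    (Continuous.intervalIntegrable (by fun_prop) _ _)]
  ring

lemma integral_deriv_bump_mul_velocity (hab : a ≤ b) (hγ : Continuous γ) (hγ' : Continuous γ')
    (hderiv : ∀ s ∈ Ioo a b, HasDerivAt γ (γ' s) s) (p : Fin 2 → ℝ) :
    ∫ s in a..b, ((mollifiedStep φ (p 0 - γ s 0) - mollifiedStep φ (p 0 - γ a 0)) *
        deriv (φ.normed volume) (p 1 - γ s 1) * γ' s 1 + mollifier φ (p - γ s) * γ' s 0) =
      (mollifiedStep φ (p 0 - γ a 0) - mollifiedStep φ (p 0 - γ b 0)) *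
        φ.normed volume (p 1 - γ b 1) := by
  have hk := continuous_normed φ
  have hk' := continuous_deriv_normed φ
  have hprimitive (s : ℝ) (hs : s ∈ Ioo a b) : HasDerivAt
      (fun s => (mollifiedStep φ (p 0 - γ a 0) - mollifiedStep φ (p 0 - γ s 0)) *
        φ.normed volume (p 1 - γ s 1))
      ((mollifiedStep φ (p 0 - γ s 0) - mollifiedStep φ (p 0 - γ a 0)) *
        deriv (φ.normed volume) (p 1 - γ s 1) * γ' s 1 + mollifier φ (p - γ s) * γ' s 0) s := by
    have hγi (i : Fin 2) := (hasDerivAt_pi.1 (hderiv s hs) i).const_sub (p i)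
    have hbump := (hasDerivAt_normed φ (p 1 - γ s 1)).comp s (hγi 1)
    refine ((((hasDerivAt_mollifiedStep φ (p 0 - γ s 0)).comp s (hγi 0)).const_sub _).mul
      hbump).congr_deriv ?_
    simp only [mollifier, Fin.prod_univ_two, Pi.sub_apply, Function.comp_apply]
    ring
  rw [intervalIntegral.integral_eq_sub_of_hasDerivAt_of_le hab
    (Continuous.continuousOn (by fun_prop)) hprimitive
    (Continuous.intervalIntegrable (by fun_prop) _ _)]
  ring

lemma hasFDerivAt_mollifiedWinding (hab : a ≤ b) (hγ : Continuous γ) (hγ' : Continuous γ')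
    (hderiv : ∀ s ∈ Ioo a b, HasDerivAt γ (γ' s) s) (p : Fin 2 → ℝ) :
    HasFDerivAt (mollifiedWinding φ γ γ' a b) (mollifiedWindingDeriv φ γ γ' a b p) p := by
  have hk := continuous_normed φ
  have hk' := continuous_deriv_normed φ
  have hcross := continuous_planarCrossForm
  refine (hasFDerivAt_intervalIntegral_of_continuous (fun q => by fun_prop) (by fun_prop)
    hasFDerivAt_mollifiedWinding_integrand a b p).congr_fderiv ?_
  have split (s : ℝ) : γ' s 1 • ((mollifiedStep φ (p 0 - γ s 0) - mollifiedStep φ (p 0 - γ a 0)) •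
        deriv (φ.normed volume) (p 1 - γ s 1) • ContinuousLinearMap.proj 1 +
      φ.normed volume (p 1 - γ s 1) •
        (φ.normed volume (p 0 - γ s 0) - φ.normed volume (p 0 - γ a 0)) •
          ContinuousLinearMap.proj 0) =
      mollifier φ (p - γ s) • planarCrossForm (γ' s) -
        (φ.normed volume (p 1 - γ s 1) * γ' s 1) •
          φ.normed volume (p 0 - γ a 0) • ContinuousLinearMap.proj 0 +
        ((mollifiedStep φ (p 0 - γ s 0) - mollifiedStep φ (p 0 - γ a 0)) *
          deriv (φ.normed volume) (p 1 - γ s 1) * γ' s 1 + mollifier φ (p - γ s) * γ' s 0) •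
          (ContinuousLinearMap.proj 1 : (Fin 2 → ℝ) →L[ℝ] ℝ) := by
    simp only [mollifier, Fin.prod_univ_two, Pi.sub_apply, planarCrossForm]
    module
  simp only [split]
  rw [intervalIntegral.integral_add, intervalIntegral.integral_sub,
    intervalIntegral.integral_smul_const, intervalIntegral.integral_smul_const,
    integral_bump_mul_velocity hab hγ hγ' hderiv,
    integral_deriv_bump_mul_velocity hab hγ hγ' hderiv, mollifiedWindingDeriv]
  · module
  all_goals exact Continuous.intervalIntegrable (by fun_prop) _ _

lemma contDiff_mollifiedWinding (hab : a ≤ b) (hγ : Continuous γ) (hγ' : Continuous γ')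
    (hderiv : ∀ s ∈ Ioo a b, HasDerivAt γ (γ' s) s) :
    ContDiff ℝ 1 (mollifiedWinding φ γ γ' a b) :=
  contDiff_one_iff_hasFDerivAt.2 ⟨_, continuous_mollifiedWindingDeriv hγ hγ',
    hasFDerivAt_mollifiedWinding hab hγ hγ' hderiv⟩

lemma fderiv_mollifiedWinding_apply (hab : a ≤ b) (hγ : Continuous γ) (hγ' : Continuous γ')
    (hderiv : ∀ s ∈ Ioo a b, HasDerivAt γ (γ' s) s) (p v : Fin 2 → ℝ) :
    fderiv ℝ (mollifiedWinding φ γ γ' a b) p v =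
      (∫ s in a..b, mollifier φ (p - γ s) * planarCross v (γ' s)) +
      φ.normed volume (p 0 - γ a 0) *
        (mollifiedStep φ (p 1 - γ b 1) - mollifiedStep φ (p 1 - γ a 1)) * v 0 +
      (mollifiedStep φ (p 0 - γ a 0) - mollifiedStep φ (p 0 - γ b 0)) *
        φ.normed volume (p 1 - γ b 1) * v 1 := by
  have hcross := continuous_planarCrossForm
  rw [(hasFDerivAt_mollifiedWinding hab hγ hγ' hderiv p).fderiv]
  simp only [mollifiedWindingDeriv, add_apply, smul_apply,
    ContinuousLinearMap.proj_apply, smul_eq_mul]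
  rw [ContinuousLinearMap.intervalIntegral_apply
    (Continuous.intervalIntegrable (by fun_prop) _ _)]
  simp only [smul_apply, smul_eq_mul, planarCrossForm_apply]

end Winding

section Flux

lemma planarCross_self (v : Fin 2 → ℝ) : planarCross v v = 0 := by
  rw [planarCross, mul_comm, sub_self]

lemma planarCross_sub_left (v v' w : Fin 2 → ℝ) :
    planarCross (v - v') w = planarCross v w - planarCross v' w := by
  simp only [planarCross, Pi.sub_apply]
  ring

lemma abs_planarCross_le (v w : Fin 2 → ℝ) : |planarCross v w| ≤ 2 * (‖v‖ * ‖w‖) := by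
  have hmul (i j : Fin 2) : |v i * w j| ≤ ‖v‖ * ‖w‖ := by
    rw [abs_mul]
    exact mul_le_mul (norm_le_pi_norm v i) (norm_le_pi_norm w j) (abs_nonneg _) (norm_nonneg _)
  rw [planarCross]
  linarith [abs_sub (v 0 * w 1) (v 1 * w 0), hmul 0 1, hmul 1 0]

lemma integrable_mul_coordinates {f g : ℝ → ℝ} (hf : Integrable f) (hg : Integrable g) :
    Integrable fun p : Fin 2 → ℝ => f (p 0) * g (p 1) := by
  have h := Integrable.fintype_prod (f := ![f, g]) (μ := fun _ => volume)
    (Fin.forall_fin_two.2 ⟨hf, hg⟩)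
  simp only [Fin.prod_univ_two] at h
  exact h

lemma integral_mul_coordinates (f g : ℝ → ℝ) :
    ∫ p : Fin 2 → ℝ, f (p 0) * g (p 1) = (∫ x, f x) * ∫ y, g y := by
  have h := integral_fintype_prod_volume_eq_prod ![f, g]
  simp only [Fin.prod_univ_two] at h
  exact h

lemma integral_abs_mul_coordinates_mul_le {f g : ℝ → ℝ} {w : (Fin 2 → ℝ) → ℝ} {S : ℝ}
    (hf : Integrable f) (hg : Integrable g) (hw : ∀ p, |w p| ≤ S) :
    ∫ p : Fin 2 → ℝ, |f (p 0) * g (p 1) * w p| ≤ (∫ x, |f x|) * (∫ y, |g y|) * S := by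
  rw [← integral_mul_coordinates, ← integral_mul_const]
  refine integral_mono_of_nonneg (ae_of_all _ fun p => abs_nonneg _)
    ((integrable_mul_coordinates hf.abs hg.abs).mul_const S) (ae_of_all _ fun p => ?_)
  simp only [abs_mul]
  exact mul_le_mul_of_nonneg_left (hw p) (by positivity)

variable {φ : ContDiffBump (0 : ℝ)} {γ γ' : ℝ → Fin 2 → ℝ} {a b : ℝ}

lemma integrable_normed_sub (x : ℝ) : Integrable fun u => φ.normed volume (u - x) :=
  φ.integrable_normed.comp_sub_right x

lemma integral_abs_normed_sub (x : ℝ) : ∫ u, |φ.normed volume (u - x)| = 1 := by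
  simp only [abs_of_nonneg (φ.nonneg_normed _)]
  rw [integral_sub_right_eq_self (φ.normed volume) x, φ.integral_normed]

lemma integral_abs_horizontal_return_le {w : (Fin 2 → ℝ) → ℝ} {S : ℝ} (hw : ∀ p, |w p| ≤ S)
    (x y z : ℝ) :
    ∫ p : Fin 2 → ℝ, |φ.normed volume (p 0 - x) *
      (mollifiedStep φ (p 1 - y) - mollifiedStep φ (p 1 - z)) * w p| ≤
      (|y - z| + 2 * φ.rOut) * S := by
  refine (integral_abs_mul_coordinates_mul_le (integrable_normed_sub x)
    (integrable_mollifiedStep_sub φ y z) hw).trans ?_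
  rw [integral_abs_normed_sub, one_mul]
  exact mul_le_mul_of_nonneg_right (integral_abs_mollifiedStep_sub_le φ y z)
    ((abs_nonneg _).trans (hw 0))

lemma integral_abs_vertical_return_le {w : (Fin 2 → ℝ) → ℝ} {S : ℝ} (hw : ∀ p, |w p| ≤ S)
    (x y z : ℝ) :
    ∫ p : Fin 2 → ℝ, |(mollifiedStep φ (p 0 - y) - mollifiedStep φ (p 0 - z)) *
      φ.normed volume (p 1 - x) * w p| ≤ (|y - z| + 2 * φ.rOut) * S := by
  refine (integral_abs_mul_coordinates_mul_le (integrable_mollifiedStep_sub φ y z)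
    (integrable_normed_sub x) hw).trans ?_
  rw [integral_abs_normed_sub, mul_one]
  exact mul_le_mul_of_nonneg_right (integral_abs_mollifiedStep_sub_le φ y z)
    ((abs_nonneg _).trans (hw 0))

lemma integral_abs_mollifier_mul_planarCross_sub_le {W : (Fin 2 → ℝ) → Fin 2 → ℝ} {L : NNReal}
    {M : ℝ} (hab : a ≤ b) (hγ : Continuous γ) (hγ' : Continuous γ') (hW : LipschitzWith L W)
    (hM : ∀ s ∈ Icc a b, ‖γ' s‖ ≤ M) :
    ∫ p, |∫ s in a..b, mollifier φ (p - γ s) * planarCross (W p - W (γ s)) (γ' s)| ≤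
      2 * (L * φ.rOut * M) * (b - a) := by
  have hWc := hW.continuous
  refine integral_abs_mollifier_sub_mul_le hγ ?_ hab fun s hs p hp => ?_
  · unfold planarCross Function.uncurry
    fun_prop
  · calc |planarCross (W p - W (γ s)) (γ' s)| ≤ 2 * (‖W p - W (γ s)‖ * ‖γ' s‖) :=
          abs_planarCross_le _ _
      _ ≤ 2 * (L * φ.rOut * M) := by
          have hr := φ.rOut_pos
          have hnear : ‖W p - W (γ s)‖ ≤ L * φ.rOut :=
            (hW.norm_sub_le p (γ s)).trans (by gcongr)
          gcongr
          exact hM s hs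

lemma integrable_integral_mollifier_mul_planarCross {W : (Fin 2 → ℝ) → ℝ → Fin 2 → ℝ}
    (hab : a ≤ b) (hγ : Continuous γ) (hγ' : Continuous γ') (hW : Continuous W.uncurry) :
    Integrable fun p => ∫ s in a..b, mollifier φ (p - γ s) * planarCross (W p s) (γ' s) := by
  simp only [intervalIntegral.integral_of_le hab]
  have hΦ : Continuous (fun p s => planarCross (W p s) (γ' s)).uncurry := by
    have hWp : Continuous fun x : (Fin 2 → ℝ) × ℝ => W x.1 x.2 := hW
    unfold planarCross Function.uncurry
    fun_prop
  exact (integrable_mollifier_sub_mul hγ hΦ).integral_prod_left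

lemma fderiv_mollifiedWinding_apply_sub {W : (Fin 2 → ℝ) → Fin 2 → ℝ} (hab : a ≤ b)
    (hγ : Continuous γ) (hγ' : Continuous γ') (hderiv : ∀ s ∈ Ioo a b, HasDerivAt γ (γ' s) s)
    (hW : Continuous W) (p : Fin 2 → ℝ) :
    fderiv ℝ (mollifiedWinding φ γ γ' a b) p (W p) -
        ∫ s in a..b, mollifier φ (p - γ s) * planarCross (W (γ s)) (γ' s) =
      (∫ s in a..b, mollifier φ (p - γ s) * planarCross (W p - W (γ s)) (γ' s)) +
      φ.normed volume (p 0 - γ a 0) *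
        (mollifiedStep φ (p 1 - γ b 1) - mollifiedStep φ (p 1 - γ a 1)) * W p 0 +
      (mollifiedStep φ (p 0 - γ a 0) - mollifiedStep φ (p 0 - γ b 0)) *
        φ.normed volume (p 1 - γ b 1) * W p 1 := by
  have hint (v : ℝ → Fin 2 → ℝ) (hv : Continuous v) : IntervalIntegrable
      (fun s => mollifier φ (p - γ s) * planarCross (v s) (γ' s)) volume a b :=
    Continuous.intervalIntegrable (by unfold planarCross; fun_prop) a b
  have hsub := intervalIntegral.integral_sub (hint (fun _ => W p) continuous_const)
    (hint (fun s => W (γ s)) (by fun_prop))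
  simp only [← mul_sub, ← planarCross_sub_left] at hsub
  rw [fderiv_mollifiedWinding_apply hab hγ hγ' hderiv, hsub]
  ring

lemma integral_abs_fderiv_mollifiedWinding_sub_le {W : (Fin 2 → ℝ) → Fin 2 → ℝ} {L : NNReal}
    {S M : ℝ} (hab : a ≤ b) (hγ : Continuous γ) (hγ' : Continuous γ')
    (hderiv : ∀ s ∈ Ioo a b, HasDerivAt γ (γ' s) s) (hWL : LipschitzWith L W)
    (hWS : ∀ p, ‖W p‖ ≤ S) (hM : ∀ s ∈ Icc a b, ‖γ' s‖ ≤ M) :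
    ∫ p, |fderiv ℝ (mollifiedWinding φ γ γ' a b) p (W p) -
        ∫ s in a..b, mollifier φ (p - γ s) * planarCross (W (γ s)) (γ' s)| ≤
      2 * (L * φ.rOut * M) * (b - a) + 2 * ((‖γ a - γ b‖ + 2 * φ.rOut) * S) := by
  have hWc := hWL.continuous
  have hS (i : Fin 2) (p : Fin 2 → ℝ) : |W p i| ≤ S := (norm_le_pi_norm _ i).trans (hWS p)
  have hWi (i : Fin 2) : AEStronglyMeasurable fun p => W p i :=
    Continuous.aestronglyMeasurable (by fun_prop)
  have hpath : Integrable fun p =>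
      ∫ s in a..b, mollifier φ (p - γ s) * planarCross (W p - W (γ s)) (γ' s) :=
    integrable_integral_mollifier_mul_planarCross (W := fun p s => W p - W (γ s)) hab hγ hγ'
      (by fun_prop)
  have hhor := (integrable_mul_coordinates (integrable_normed_sub (φ := φ) (γ a 0))
    (integrable_mollifiedStep_sub φ (γ b 1) (γ a 1))).mul_bdd (hWi 0) (ae_of_all _ (hS 0))
  have hver := (integrable_mul_coordinates (integrable_mollifiedStep_sub φ (γ a 0) (γ b 0))
    (integrable_normed_sub (φ := φ) (γ b 1))).mul_bdd (hWi 1) (ae_of_all _ (hS 1))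
  have hnear (i : Fin 2) : |γ a i - γ b i| ≤ ‖γ a - γ b‖ := norm_le_pi_norm (γ a - γ b) i
  simp only [fderiv_mollifiedWinding_apply_sub hab hγ hγ' hderiv hWc]
  calc _ ≤ _ := integral_mono ((hpath.add hhor).add hver).abs
          ((hpath.abs.add hhor.abs).add hver.abs) fun p => abs_add_three _ _ _
    _ = _ := (integral_add (hpath.abs.add hhor.abs) hver.abs).trans
          (congrArg (· + _) (integral_add hpath.abs hhor.abs))
    _ ≤ 2 * (L * φ.rOut * M) * (b - a) + (|γ b 1 - γ a 1| + 2 * φ.rOut) * S +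
          (|γ a 0 - γ b 0| + 2 * φ.rOut) * S :=
        add_le_add_three (integral_abs_mollifier_mul_planarCross_sub_le hab hγ hγ' hWL hM)
          (integral_abs_horizontal_return_le (hS 0) _ _ _)
          (integral_abs_vertical_return_le (hS 1) _ _ _)
    _ ≤ 2 * (L * φ.rOut * M) * (b - a) + 2 * ((‖γ a - γ b‖ + 2 * φ.rOut) * S) := by
        have hS₀ : 0 ≤ S := (norm_nonneg _).trans (hWS 0)
        rw [abs_sub_comm (γ b 1), add_assoc, two_mul ((‖γ a - γ b‖ + _) * S)]
        gcongr
        · exact hnear 1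
        · exact hnear 0

lemma abs_integral_planarCross_le {U V : (Fin 2 → ℝ) → Fin 2 → ℝ} {L : NNReal} {C S : ℝ}
    {l u : Fin 2 → ℝ} (hU : ContDiff ℝ 1 U) (hV : ContDiff ℝ 1 V) (hUL : LipschitzWith L U)
    (hVL : LipschitzWith L V) (hUS : ∀ p, ‖U p‖ ≤ S) (hVS : ∀ p, ‖V p‖ ≤ S) (hC : 0 ≤ C)
    (hUdiv : ∀ p ∈ Icc (l - fun _ => φ.rOut) (u + fun _ => φ.rOut), divergence U p ≤ 0)
    (hVdiv : ∀ p ∈ Icc (l - fun _ => φ.rOut) (u + fun _ => φ.rOut),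
      |divergence V p| ≤ C * -divergence U p)
    (hab : a ≤ b) (hγ : Continuous γ) (hderiv : ∀ s ∈ Ioo a b, HasDerivAt γ (U (γ s)) s)
    (hγlu : ∀ s ∈ Icc a b, γ s ∈ Icc l u) :
    |∫ s in a..b, planarCross (V (γ s)) (U (γ s))| ≤
      (C + 1) * (2 * (L * φ.rOut * S) * (b - a) + 2 * ((‖γ a - γ b‖ + 2 * φ.rOut) * S)) := by
  have hUc := hU.continuous
  have hVc := hV.continuous
  set χ := mollifiedWinding φ γ (fun s => U (γ s)) a b
  set E := 2 * (L * φ.rOut * S) * (b - a) + 2 * ((‖γ a - γ b‖ + 2 * φ.rOut) * S)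
  have hχ : ContDiff ℝ 1 χ := contDiff_mollifiedWinding hab hγ (by fun_prop) hderiv
  have hχc : HasCompactSupport χ := hasCompactSupport_mollifiedWinding hab hγ
  have hχlu (p : Fin 2 → ℝ) (hp : χ p ≠ 0) := mem_Icc_of_mollifiedWinding_ne_zero hab hγlu hp
  have tangential : ∫ p, |fderiv ℝ χ p (U p)| ≤ E := by
    simpa only [planarCross_self, mul_zero, intervalIntegral.integral_zero, sub_zero] using
      integral_abs_fderiv_mollifiedWinding_sub_le (φ := φ) hab hγ (by fun_prop) hderiv hUL hUS
        fun s _ => hUS (γ s)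
  have transverse : |(∫ p, fderiv ℝ χ p (V p)) -
      ∫ s in a..b, planarCross (V (γ s)) (U (γ s))| ≤ E := by
    have hh : Continuous fun s => planarCross (V (γ s)) (U (γ s)) := by
      unfold planarCross
      fun_prop
    rw [← integral_mollifier_sub_mul_swap (φ := φ) hγ hh hab, ← integral_sub
      (integrable_fderiv_apply hVc hχ hχc)
      (integrable_integral_mollifier_mul_planarCross (W := fun _ s => V (γ s)) hab hγ
        (by fun_prop) (by fun_prop))]
    exact (abs_integral_le_integral_abs).trans (integral_abs_fderiv_mollifiedWinding_sub_le
      hab hγ (by fun_prop) hderiv hVL hVS fun s _ => hUS (γ s))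
  calc |∫ s in a..b, planarCross (V (γ s)) (U (γ s))|
      ≤ |∫ p, fderiv ℝ χ p (V p)| + E := by
        rw [abs_sub_comm] at transverse
        linarith [abs_sub_abs_le_abs_sub (∫ s in a..b, planarCross (V (γ s)) (U (γ s)))
          (∫ p, fderiv ℝ χ p (V p))]
    _ ≤ C * (∫ p, |fderiv ℝ χ p (U p)|) + E :=
        add_le_add_left (abs_integral_fderiv_apply_le_of_abs_divergence_le hU hV hχ hχc hC
          (fun p hp => hUdiv p (hχlu p hp)) (fun p hp => hVdiv p (hχlu p hp))) E
    _ ≤ C * E + E := by gcongr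
    _ = (C + 1) * E := by ring

/-- `m` solves `m' = U m` at every time `t ≥ 0`. -/
def IsForwardSolution {E : Type*} [NormedAddCommGroup E] [NormedSpace ℝ E] (U : E → E)
    (m : ℝ → E) : Prop :=
  ∀ t, 0 ≤ t → HasDerivAt m (U (m t)) t

lemma IsForwardSolution.continuousOn {E : Type*} [NormedAddCommGroup E] [NormedSpace ℝ E]
    {U : E → E} {m : ℝ → E} (hm : IsForwardSolution U m) : ContinuousOn m (Ici 0) :=
  fun t ht => (hm t ht).continuousAt.continuousWithinAt

lemma exists_pos_le_forall_mem_Icc {ι : Type*} [Finite ι] {K : Set (ι → ℝ)} {l u : ι → ℝ}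
    (hK : IsCompact K) (hlu : ∀ p ∈ K, ∀ i, l i < p i ∧ p i < u i) :
    ∃ δ > 0, ∀ p ∈ K, p ∈ Icc (l + fun _ => δ) (u - fun _ => δ) := by
  have := Fintype.ofFinite ι
  have hopen : IsOpen {p : ι → ℝ | ∀ i, l i < p i ∧ p i < u i} := by
    simp only [Set.ofPred_forall]
    exact isOpen_iInter_of_finite fun i => (isOpen_lt continuous_const (continuous_apply i)).inter
      (isOpen_lt (continuous_apply i) continuous_const)
  obtain ⟨δ, hδ, hsub⟩ := hK.exists_cthickening_subset_open hopen hlu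
  have hshift {p : ι → ℝ} (hp : p ∈ K) {ε : ℝ} (hε : |ε| ≤ δ) (i : ι) :
      l i < p i + ε ∧ p i + ε < u i := by
    refine hsub (Metric.mem_cthickening_of_dist_le (p + fun _ => ε) p δ K hp ?_) i
    rw [dist_self_add_left]
    exact (pi_norm_const_le ε).trans hε
  refine ⟨δ, hδ, fun p hp => ⟨fun i => ?_, fun i => ?_⟩⟩
  · have := (hshift hp (ε := -δ) (by rw [abs_neg, abs_of_pos hδ]) i).1
    simp only [Pi.add_apply]
    linarith
  · have := (hshift hp (ε := δ) (by rw [abs_of_pos hδ]) i).2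
    simp only [Pi.sub_apply]
    linarith

lemma abs_integral_planarCross_le_of_forall_mem {U V : (Fin 2 → ℝ) → Fin 2 → ℝ} {L : NNReal}
    {C S : ℝ} {l u : Fin 2 → ℝ} (hU : ContDiff ℝ 1 U) (hV : ContDiff ℝ 1 V)
    (hUL : LipschitzWith L U) (hVL : LipschitzWith L V) (hUS : ∀ p, ‖U p‖ ≤ S)
    (hVS : ∀ p, ‖V p‖ ≤ S) (hC : 0 ≤ C) (hUdiv : ∀ p ∈ Icc l u, divergence U p ≤ 0)
    (hVdiv : ∀ p ∈ Icc l u, |divergence V p| ≤ C * -divergence U p) (hab : a ≤ b)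
    (hγ : Continuous γ) (hderiv : ∀ s ∈ Ioo a b, HasDerivAt γ (U (γ s)) s)
    (hγlu : ∀ s ∈ Icc a b, ∀ i, l i < γ s i ∧ γ s i < u i) :
    |∫ s in a..b, planarCross (V (γ s)) (U (γ s))| ≤ (C + 1) * (2 * (‖γ a - γ b‖ * S)) := by
  obtain ⟨δ, hδ, hδlu⟩ := exists_pos_le_forall_mem_Icc ((isCompact_Icc (a := a) (b := b)).image hγ)
    (forall_mem_image.2 hγlu)
  have approx {r : ℝ} (hr : r ∈ Ioc 0 δ) : |∫ s in a..b, planarCross (V (γ s)) (U (γ s))| ≤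
      (C + 1) * (2 * (L * r * S) * (b - a) + 2 * ((‖γ a - γ b‖ + 2 * r) * S)) := by
    let φ : ContDiffBump (0 : ℝ) := ⟨r / 2, r, half_pos hr.1, half_lt_self hr.1⟩
    have hsub : Icc (l + (fun _ => δ) - fun _ => φ.rOut) (u - (fun _ => δ) + fun _ => φ.rOut) ⊆
        Icc l u := by
      refine Icc_subset_Icc (fun i => ?_) (fun i => ?_) <;>
        simp only [φ, Pi.add_apply, Pi.sub_apply] <;> linarith [hr.2]
    exact abs_integral_planarCross_le (φ := φ) hU hV hUL hVL hUS hVS hC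
      (fun p hp => hUdiv p (hsub hp)) (fun p hp => hVdiv p (hsub hp)) hab hγ hderiv
      fun s hs => hδlu _ (mem_image_of_mem γ hs)
  have limit : Tendsto
      (fun r => (C + 1) * (2 * (L * r * S) * (b - a) + 2 * ((‖γ a - γ b‖ + 2 * r) * S)))
      (𝓝[>] 0) (𝓝 ((C + 1) * (2 * (‖γ a - γ b‖ * S)))) := by
    refine tendsto_nhdsWithin_of_tendsto_nhds (Continuous.tendsto' (by fun_prop) _ _ ?_)
    ring
  exact ge_of_tendsto limit (mem_of_superset (Ioc_mem_nhdsGT hδ) fun r => approx)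

lemma exists_contDiff_hasCompactSupport_eqOn {E F : Type*} [NormedAddCommGroup E]
    [NormedSpace ℝ E] [FiniteDimensional ℝ E] [NormedAddCommGroup F] [NormedSpace ℝ F]
    {f : E → F} (hf : ContDiff ℝ 1 f) {R : ℝ} (hR : 0 < R) :
    ∃ g, ContDiff ℝ 1 g ∧ HasCompactSupport g ∧ EqOn g f (Metric.ball 0 R) := by
  let ψ : ContDiffBump (0 : E) := ⟨R, R + 1, hR, lt_add_one R⟩
  refine ⟨fun p => ψ p • f p, ψ.contDiff.smul hf, ψ.hasCompactSupport.smul_right, fun p hp => ?_⟩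
  simp only [ψ.one_of_mem_closedBall (Metric.ball_subset_closedBall hp), one_smul]

lemma IsForwardSolution.exists_abs_integral_planarCross_le_of_hasCompactSupport
    {U V : (Fin 2 → ℝ) → Fin 2 → ℝ} {m : ℝ → Fin 2 → ℝ} {C : ℝ} {l u : Fin 2 → ℝ}
    (hm : IsForwardSolution U m) (hU : ContDiff ℝ 1 U) (hV : ContDiff ℝ 1 V)
    (hUc : HasCompactSupport U) (hVc : HasCompactSupport V) (hC : 0 ≤ C)
    (hUdiv : ∀ p ∈ Icc l u, divergence U p ≤ 0)
    (hVdiv : ∀ p ∈ Icc l u, |divergence V p| ≤ C * -divergence U p)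
    (hmlu : ∀ t, 0 ≤ t → ∀ i, l i < m t i ∧ m t i < u i) :
    ∃ B, ∀ T, 0 ≤ T → |∫ s in 0..T, planarCross (V (m s)) (U (m s))| ≤ B := by
  obtain ⟨L₁, hL₁⟩ := hU.lipschitzWith_of_hasCompactSupport hUc one_ne_zero
  obtain ⟨L₂, hL₂⟩ := hV.lipschitzWith_of_hasCompactSupport hVc one_ne_zero
  obtain ⟨S₁, hS₁⟩ := hUc.exists_bound_of_continuous hU.continuous
  obtain ⟨S₂, hS₂⟩ := hVc.exists_bound_of_continuous hV.continuous
  obtain ⟨D, hD⟩ := Metric.isBounded_iff.1 (isCompact_Icc (a := l) (b := u)).isBounded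
  have hS : 0 ≤ max S₁ S₂ := (norm_nonneg _).trans ((hS₁ 0).trans (le_max_left _ _))
  set γ : ℝ → Fin 2 → ℝ := fun t => m (max 0 t)
  have hγm {t : ℝ} (ht : 0 ≤ t) : γ t = m t := congrArg m (max_eq_right ht)
  have hγlu (t : ℝ) (i : Fin 2) : l i < γ t i ∧ γ t i < u i := hmlu _ (le_max_left 0 t) i
  have hγ : Continuous γ :=
    hm.continuousOn.comp_continuous (by fun_prop) fun t => le_max_left 0 t
  have hγderiv (t : ℝ) (ht : 0 < t) : HasDerivAt γ (U (γ t)) t := by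
    rw [hγm ht.le]
    exact (hm t ht.le).congr_of_eventuallyEq ((eventually_gt_nhds ht).mono fun s hs => hγm hs.le)
  refine ⟨(C + 1) * (2 * (D * max S₁ S₂)), fun T hT => ?_⟩
  have hcongr : ∫ s in 0..T, planarCross (V (m s)) (U (m s)) =
      ∫ s in 0..T, planarCross (V (γ s)) (U (γ s)) := by
    refine intervalIntegral.integral_congr fun s hs => ?_
    rw [uIcc_of_le hT] at hs
    simp only [hγm hs.1]
  have hclose : ‖γ 0 - γ T‖ ≤ D := by
    have hmem (t : ℝ) : γ t ∈ Icc l u := ⟨fun i => (hγlu t i).1.le, fun i => (hγlu t i).2.le⟩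
    exact dist_eq_norm (γ 0) (γ T) ▸ hD (hmem 0) (hmem T)
  rw [hcongr]
  refine (abs_integral_planarCross_le_of_forall_mem hU hV (hL₁.weaken (le_max_left L₁ L₂))
    (hL₂.weaken (le_max_right L₁ L₂)) (fun p => (hS₁ p).trans (le_max_left _ _))
    (fun p => (hS₂ p).trans (le_max_right _ _)) hC hUdiv hVdiv hT hγ
    (fun s hs => hγderiv s hs.1) fun s _ => hγlu s).trans ?_
  gcongr

lemma IsForwardSolution.exists_abs_integral_planarCross_le {U V : (Fin 2 → ℝ) → Fin 2 → ℝ}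
    {m : ℝ → Fin 2 → ℝ} {C : ℝ} {l u : Fin 2 → ℝ} (hm : IsForwardSolution U m)
    (hU : ContDiff ℝ 1 U) (hV : ContDiff ℝ 1 V) (hVc : HasCompactSupport V) (hC : 0 ≤ C)
    (hUdiv : ∀ p ∈ Icc l u, divergence U p ≤ 0)
    (hVdiv : ∀ p ∈ Icc l u, |divergence V p| ≤ C * -divergence U p)
    (hmlu : ∀ t, 0 ≤ t → ∀ i, l i < m t i ∧ m t i < u i) :
    ∃ B, ∀ T, 0 ≤ T → |∫ s in 0..T, planarCross (V (m s)) (U (m s))| ≤ B := by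
  obtain ⟨R, hR, hball⟩ := (isCompact_Icc (a := l) (b := u)).isBounded.subset_ball_lt 0 0
  obtain ⟨W, hW, hWc, hWU⟩ := exists_contDiff_hasCompactSupport_eqOn hU hR
  have hdiv {p : Fin 2 → ℝ} (hp : p ∈ Icc l u) : divergence W p = divergence U p := by
    simp only [divergence, (hWU.eventuallyEq_of_mem
      (Metric.isOpen_ball.mem_nhds (hball hp))).fderiv_eq]
  have hWm {t : ℝ} (ht : 0 ≤ t) : W (m t) = U (m t) :=
    hWU (hball ⟨fun i => (hmlu t ht i).1.le, fun i => (hmlu t ht i).2.le⟩)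
  obtain ⟨B, hB⟩ := IsForwardSolution.exists_abs_integral_planarCross_le_of_hasCompactSupport
    (U := W) (V := V) (m := m) (fun t ht => (hWm ht).symm ▸ hm t ht) hW hV hWc hVc hC
    (fun p hp => (hdiv hp).symm ▸ hUdiv p hp) (fun p hp => (hdiv hp).symm ▸ hVdiv p hp) hmlu
  refine ⟨B, fun T hT => ?_⟩
  convert hB T hT using 2
  refine intervalIntegral.integral_congr fun s hs => ?_
  rw [uIcc_of_le hT] at hs
  simp only [hWm hs.1]

end Flux

section Invariance

lemma le_exp_mul_of_neg_mul_le_deriv {z z' : ℝ → ℝ} {L T : ℝ} (hT : 0 ≤ T)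
    (hz : ∀ t ∈ Icc 0 T, HasDerivAt z (z' t) t) (hle : ∀ t ∈ Ioo 0 T, -(L * z t) ≤ z' t) :
    z 0 ≤ Real.exp (L * T) * z T := by
  have hderiv (t : ℝ) (ht : t ∈ Icc 0 T) : HasDerivAt (fun t => Real.exp (L * t) * z t)
      (Real.exp (L * t) * (L * z t + z' t)) t := by
    refine ((((hasDerivAt_id t).const_mul L).exp).mul (hz t ht)).congr_deriv ?_
    simp only [id]
    ring
  have hmono : MonotoneOn (fun t => Real.exp (L * t) * z t) (Icc 0 T) := by
    refine monotoneOn_of_deriv_nonneg (convex_Icc 0 T)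
      (fun t ht => (hderiv t ht).continuousAt.continuousWithinAt)
      (fun t ht => (hderiv t (interior_subset ht)).differentiableAt.differentiableWithinAt)
      fun t ht => ?_
    rw [(hderiv t (interior_subset ht)).deriv]
    rw [interior_Icc] at ht
    exact mul_nonneg (Real.exp_pos _).le (neg_le_iff_add_nonneg'.1 (hle t ht))
  simpa only [mul_zero, Real.exp_zero, one_mul] using
    hmono (left_mem_Icc.2 hT) (right_mem_Icc.2 hT) hT

lemma forall_pos_of_neg_mul_le_deriv {κ : Type*} [Finite κ] {z z' : κ → ℝ → ℝ} {L : ℝ}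
    (hz : ∀ j t, 0 ≤ t → HasDerivAt (z j) (z' j t) t)
    (hle : ∀ t, 0 ≤ t → (∀ k, 0 ≤ z k t) → ∀ j, -(L * z j t) ≤ z' j t) (h0 : ∀ j, 0 < z j 0)
    {t : ℝ} (ht : 0 ≤ t) (j : κ) : 0 < z j t := by
  have hzc (k : κ) : ContinuousOn (z k) (Ici 0) :=
    fun s hs => (hz k s hs).continuousAt.continuousWithinAt
  by_contra! hneg
  set A := ⋃ k, Ici 0 ∩ z k ⁻¹' Iic 0
  have hA : IsClosed A := isClosed_iUnion_of_finite fun k =>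
    (hzc k).preimage_isClosed_of_isClosed isClosed_Ici isClosed_Iic
  have hbdd : BddBelow A := ⟨0, fun s hs => (mem_iUnion.1 hs).elim fun _ h => h.1⟩
  obtain ⟨k, hexit₀, hexit⟩ :=
    mem_iUnion.1 (hA.csInf_mem ⟨t, mem_iUnion.2 ⟨j, ht, hneg⟩⟩ hbdd)
  set T := sInf A
  have hpos (s : ℝ) (hs : s ∈ Ioo 0 T) (i : κ) : 0 < z i s := by
    by_contra! h
    exact hs.2.not_ge (csInf_le hbdd (mem_iUnion.2 ⟨i, hs.1.le, h⟩))
  have hgrow : z k 0 ≤ Real.exp (L * T) * z k T :=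
    le_exp_mul_of_neg_mul_le_deriv hexit₀ (fun s hs => hz k s hs.1)
      fun s hs => hle s hs.1.le (fun i => (hpos s hs i).le) k
  exact ((h0 k).trans_le hgrow).not_ge (mul_nonpos_of_nonneg_of_nonpos (Real.exp_pos _).le hexit)

lemma update_mem_Icc {ι α : Type*} [DecidableEq ι] [Preorder α] {l u p : ι → α}
    (hp : p ∈ Icc l u) {i : ι} {x : α} (hx : x ∈ Icc (l i) (u i)) :
    Function.update p i x ∈ Icc l u :=
  ⟨le_update_iff.2 ⟨hx.1, fun j _ => hp.1 j⟩, update_le_iff.2 ⟨hx.2, fun j _ => hp.2 j⟩⟩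

variable {ι : Type*} [Fintype ι] {U : (ι → ℝ) → ι → ℝ} {m : ℝ → ι → ℝ} {l u : ι → ℝ}

lemma exists_lipschitzOnWith_Icc (hU : ContDiff ℝ 1 U) (l u : ι → ℝ) :
    ∃ L, LipschitzOnWith L U (Icc l u) :=
  hU.contDiffOn.exists_lipschitzOnWith one_ne_zero (convex_Icc l u) isCompact_Icc

lemma abs_apply_sub_apply_update_le [DecidableEq ι] {L : NNReal}
    (hU : LipschitzOnWith L U (Icc l u)) {p : ι → ℝ} (hp : p ∈ Icc l u) {i : ι} {x : ℝ}
    (hx : x ∈ Icc (l i) (u i)) :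
    |U p i - U (Function.update p i x) i| ≤ L * |p i - x| := by
  calc |U p i - U (Function.update p i x) i| ≤ ‖U p - U (Function.update p i x)‖ :=
        norm_le_pi_norm (U p - U (Function.update p i x)) i
    _ ≤ L * ‖p - Function.update p i x‖ := hU.norm_sub_le hp (update_mem_Icc hp hx)
    _ = L * |p i - x| := by
        congr 1
        have hsub : p - Function.update p i x = Pi.single i (p i - x) := by
          ext j
          by_cases hj : j = i
          · subst hj
            simp
          · simp [hj]
        rw [hsub, Pi.norm_single, Real.norm_eq_abs]

lemma neg_mul_sub_le_apply {L : NNReal} (hU : LipschitzOnWith L U (Icc l u)) {i : ι}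
    (hl : ∀ p ∈ Icc l u, p i = l i → 0 ≤ U p i) {p : ι → ℝ} (hp : p ∈ Icc l u) :
    -(L * (p i - l i)) ≤ U p i := by
  classical
  have hface : l i ∈ Icc (l i) (u i) := left_mem_Icc.2 ((hp.1 i).trans (hp.2 i))
  have hlip := abs_apply_sub_apply_update_le hU hp hface
  rw [abs_of_nonneg (sub_nonneg.2 (hp.1 i))] at hlip
  linarith [(abs_le.1 hlip).1, hl _ (update_mem_Icc hp hface) (Function.update_self i (l i) p)]

lemma neg_mul_sub_le_neg_apply {L : NNReal} (hU : LipschitzOnWith L U (Icc l u)) {i : ι}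
    (hu : ∀ p ∈ Icc l u, p i = u i → U p i ≤ 0) {p : ι → ℝ} (hp : p ∈ Icc l u) :
    -(L * (u i - p i)) ≤ -U p i := by
  classical
  have hface : u i ∈ Icc (l i) (u i) := right_mem_Icc.2 ((hp.1 i).trans (hp.2 i))
  have hlip := abs_apply_sub_apply_update_le hU hp hface
  rw [abs_sub_comm (p i), abs_of_nonneg (sub_nonneg.2 (hp.2 i))] at hlip
  linarith [(abs_le.1 hlip).2, hu _ (update_mem_Icc hp hface) (Function.update_self i (u i) p)]

lemma IsForwardSolution.forall_lower_lt (hm : IsForwardSolution U m) (hU : ContDiff ℝ 1 U)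
    (hl : ∀ p ∈ Icc l u, ∀ i, p i = l i → 0 ≤ U p i) (hmu : ∀ t, 0 ≤ t → m t ≤ u)
    (h0 : ∀ i, l i < m 0 i) {t : ℝ} (ht : 0 ≤ t) (i : ι) : l i < m t i := by
  obtain ⟨L, hL⟩ := exists_lipschitzOnWith_Icc hU l u
  refine sub_pos.1 (forall_pos_of_neg_mul_le_deriv (z := fun i t => m t i - l i)
    (z' := fun i t => U (m t) i) (L := L) (fun j s hs => (hasDerivAt_pi.1 (hm s hs) j).sub_const _)
    (fun s hs hz j => neg_mul_sub_le_apply hL (fun p hp => hl p hp j) ⟨fun k => ?_, hmu s hs⟩)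
    (fun j => sub_pos.2 (h0 j)) ht i)
  exact sub_nonneg.1 (hz k)

lemma IsForwardSolution.forall_lt_and_lt (hm : IsForwardSolution U m) (hU : ContDiff ℝ 1 U)
    (hl : ∀ p ∈ Icc l u, ∀ i, p i = l i → 0 ≤ U p i)
    (hu : ∀ p ∈ Icc l u, ∀ i, p i = u i → U p i ≤ 0) (h0 : ∀ i, l i < m 0 i ∧ m 0 i < u i)
    {t : ℝ} (ht : 0 ≤ t) (i : ι) : l i < m t i ∧ m t i < u i := by
  obtain ⟨L, hL⟩ := exists_lipschitzOnWith_Icc hU l u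
  have hpos := forall_pos_of_neg_mul_le_deriv (L := L)
    (z := Sum.elim (fun i t => m t i - l i) fun i t => u i - m t i)
    (z' := Sum.elim (fun i t => U (m t) i) fun i t => -U (m t) i)
    (Sum.forall.2 ⟨fun j s hs => (hasDerivAt_pi.1 (hm s hs) j).sub_const _,
      fun j s hs => (hasDerivAt_pi.1 (hm s hs) j).const_sub _⟩)
    (fun s _ hz => ?_)
    (Sum.forall.2 ⟨fun j => sub_pos.2 (h0 j).1, fun j => sub_pos.2 (h0 j).2⟩) ht
  · exact ⟨sub_pos.1 (hpos (.inl i)), sub_pos.1 (hpos (.inr i))⟩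
  · have hmem : m s ∈ Icc l u :=
      ⟨fun k => sub_nonneg.1 (hz (.inl k)), fun k => sub_nonneg.1 (hz (.inr k))⟩
    exact Sum.forall.2 ⟨fun j => neg_mul_sub_le_apply hL (fun p hp => hl p hp j) hmem,
      fun j => neg_mul_sub_le_neg_apply hL (fun p hp => hu p hp j) hmem⟩

end Invariance

section LimitPoints

lemma integrableOn_Ioi_of_integral_le {h : ℝ → ℝ} {B : ℝ} (hcont : ContinuousOn h (Ici 0))
    (hnonneg : ∀ t, 0 ≤ t → 0 ≤ h t) (hB : ∀ T, 0 ≤ T → ∫ t in 0..T, h t ≤ B) :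
    IntegrableOn h (Ioi 0) := by
  have hint (T : ℝ) : IntervalIntegrable h volume 0 (max 0 T) :=
    (hcont.mono fun t ht => (le_min le_rfl (le_max_left 0 T)).trans ht.1).intervalIntegrable
  refine integrableOn_Ioi_of_intervalIntegral_norm_bounded B 0 (b := fun T : ℝ => max 0 T)
    (fun T => (hint T).1) (tendsto_atTop_mono (le_max_right 0) tendsto_id) (.of_forall fun T => ?_)
  refine (intervalIntegral.integral_congr fun t ht => ?_).trans_le (hB _ (le_max_left 0 T))
  rw [uIcc_of_le (le_max_left 0 T)] at ht
  exact Real.norm_of_nonneg (hnonneg t ht.1)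

/-- Barbalat's lemma. -/
lemma tendsto_zero_of_uniformContinuousOn_of_integral_le {h : ℝ → ℝ} {B : ℝ}
    (hunif : UniformContinuousOn h (Ici 0)) (hnonneg : ∀ t, 0 ≤ t → 0 ≤ h t)
    (hB : ∀ T, 0 ≤ T → ∫ t in 0..T, h t ≤ B) : Tendsto h atTop (𝓝 0) := by
  have hint {a b : ℝ} (ha : 0 ≤ a) (hb : 0 ≤ b) : IntervalIntegrable h volume a b :=
    (hunif.continuousOn.mono fun t ht => (le_min ha hb).trans ht.1).intervalIntegrable
  refine tendsto_order.2 ⟨fun c hc => ?_, fun ε hε => ?_⟩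
  · filter_upwards [eventually_ge_atTop 0] with t ht using hc.trans_le (hnonneg t ht)
  obtain ⟨δ, hδ, hclose⟩ := Metric.uniformContinuousOn_iff_le.1 hunif (ε / 2) (half_pos hε)
  have hF := intervalIntegral_tendsto_integral_Ioi 0
    (integrableOn_Ioi_of_integral_le hunif.continuousOn hnonneg hB) tendsto_id
  have hincrement : Tendsto (fun t => (∫ s in 0..t + δ, h s) - ∫ s in 0..t, h s) atTop (𝓝 0) := by
    simpa only [sub_self, Function.comp_def, id] using
      (hF.comp (tendsto_atTop_add_const_right _ δ tendsto_id)).sub hF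
  filter_upwards [hincrement.eventually_lt_const (show 0 < δ * (ε / 2) by positivity),
    eventually_ge_atTop 0] with t hsmall ht
  have htδ : t ≤ t + δ := le_add_of_nonneg_right hδ.le
  rw [intervalIntegral.integral_interval_sub_left (hint le_rfl (ht.trans htδ)) (hint le_rfl ht)]
    at hsmall
  have hlower : δ * (h t - ε / 2) ≤ ∫ s in t..t + δ, h s := by
    have hconst : ∫ _ in t..t + δ, (h t - ε / 2) = δ * (h t - ε / 2) := by
      rw [intervalIntegral.integral_const, add_sub_cancel_left, smul_eq_mul]
    rw [← hconst]
    refine intervalIntegral.integral_mono_on htδ intervalIntegrable_const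
      (hint ht (ht.trans htδ)) fun s hs => ?_
    have := hclose t ht s (ht.trans hs.1) (by
      rw [Real.dist_eq, abs_sub_comm, abs_of_nonneg (sub_nonneg.2 hs.1)]
      linarith [hs.2])
    linarith [(abs_le.1 this).2]
  linarith [lt_of_mul_lt_mul_left (hlower.trans_lt hsmall) hδ.le]

lemma IsForwardSolution.exists_lipschitzOnWith {E : Type*} [NormedAddCommGroup E]
    [NormedSpace ℝ E] [ProperSpace E] {U : E → E} {m : ℝ → E} (hm : IsForwardSolution U m)
    (hU : Continuous U) (hbdd : Bornology.IsBounded (m '' Ici 0)) :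
    ∃ L, LipschitzOnWith L m (Ici 0) := by
  obtain ⟨S, hS⟩ := hbdd.isCompact_closure.exists_bound_of_continuousOn hU.continuousOn
  refine ⟨S.toNNReal, (convex_Ici 0).lipschitzOnWith_of_nnnorm_hasDerivWithin_le
    (fun t ht => (hm t ht).hasDerivWithinAt) fun t ht => ?_⟩
  rw [← NNReal.coe_le_coe, coe_nnnorm]
  exact (hS _ (subset_closure (mem_image_of_mem m ht))).trans (Real.le_coe_toNNReal S)

lemma IsForwardSolution.mul_sub_le_apply_sub {ι : Type*} [Fintype ι] {U : (ι → ℝ) → ι → ℝ}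
    {m : ℝ → ι → ℝ} {i : ι} {a b c : ℝ} (hm : IsForwardSolution U m) (ha : 0 ≤ a) (hab : a ≤ b)
    (hc : ∀ t ∈ Icc a b, c ≤ U (m t) i) : c * (b - a) ≤ m b i - m a i := by
  have hderiv (t : ℝ) (ht : t ∈ Icc a b) : HasDerivAt (fun t => m t i) (U (m t) i) t :=
    hasDerivAt_pi.1 (hm t (ha.trans ht.1)) i
  refine (convex_Icc a b).mul_sub_le_image_sub_of_le_deriv (f := fun t => m t i)
    (fun t ht => (hderiv t ht).continuousAt.continuousWithinAt)
    (fun t ht => (hderiv t (interior_subset ht)).differentiableAt.differentiableWithinAt)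
    (fun t ht => ?_) a (left_mem_Icc.2 hab) b (right_mem_Icc.2 hab) hab
  rw [(hderiv t (interior_subset ht)).deriv]
  exact hc t (interior_subset ht)

lemma IsForwardSolution.apply_nonpos_of_mapClusterPt {ι : Type*} [Fintype ι]
    {U : (ι → ℝ) → ι → ℝ} {m : ℝ → ι → ℝ} {q : ι → ℝ} (hm : IsForwardSolution U m)
    (hU : Continuous U) (hbdd : Bornology.IsBounded (m '' Ici 0)) (hq : MapClusterPt q atTop m)
    {i : ι} (hle : ∀ t, 0 ≤ t → q i ≤ m t i) : U q i ≤ 0 := by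
  obtain ⟨L, hL⟩ := hm.exists_lipschitzOnWith hU hbdd
  by_contra! hpos
  have hnear : ∀ᶠ p in 𝓝 q, U q i / 2 < U p i :=
    ((continuous_apply i).comp hU).tendsto q |>.eventually_const_lt (half_lt_self hpos)
  obtain ⟨ε, hε, hball⟩ := Metric.eventually_nhds_iff.1 hnear
  set τ := ε / (2 * (L + 1))
  have hτ : 0 < τ := by positivity
  have hLτ : L * τ < ε / 2 := by
    have : 2 * (L + 1) * τ = ε := mul_div_cancel₀ _ (by positivity)
    linarith
  obtain ⟨t, hmt, ht⟩ := ((hq.frequently (Metric.ball_mem_nhds q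
    (show 0 < min (ε / 2) (U q i / 2 * τ) by positivity))).and_eventually
    (eventually_ge_atTop τ)).exists
  have hspeed (s : ℝ) (hs : s ∈ Icc (t - τ) t) : U q i / 2 < U (m s) i := by
    have hs₀ : 0 ≤ s := (sub_nonneg.2 ht).trans hs.1
    refine hball ?_
    calc dist (m s) q ≤ dist (m s) (m t) + dist (m t) q := dist_triangle _ _ _
      _ < L * τ + ε / 2 := by
          refine add_lt_add_of_le_of_lt ((hL.dist_le_mul s hs₀ t (hτ.le.trans ht)).trans ?_)
            (lt_of_lt_of_le hmt (min_le_left _ _))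
          rw [Real.dist_eq, abs_sub_comm, abs_of_nonneg (sub_nonneg.2 hs.2)]
          gcongr
          linarith [hs.1]
      _ ≤ ε := by linarith
  have hgrowth : U q i / 2 * τ ≤ m t i - m (t - τ) i := by
    simpa only [sub_sub_cancel] using hm.mul_sub_le_apply_sub (sub_nonneg.2 ht)
      (sub_le_self t hτ.le) fun s hs => (hspeed s hs).le
  have hclose : m t i - q i < U q i / 2 * τ :=
    calc m t i - q i ≤ dist (m t) q := (le_abs_self _).trans (dist_le_pi_dist (m t) q i)
      _ < _ := lt_of_lt_of_le hmt (min_le_right _ _)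
  linarith [hle (t - τ) (sub_nonneg.2 ht)]

lemma IsForwardSolution.tendsto_zero_of_hasCompactSupport {E : Type*} [NormedAddCommGroup E]
    [NormedSpace ℝ E] [ProperSpace E] {U : E → E} {m : ℝ → E} {g : E → ℝ} {B : ℝ}
    (hm : IsForwardSolution U m) (hU : Continuous U)
    (hbdd : Bornology.IsBounded (m '' Ici 0)) (hg : Continuous g) (hgc : HasCompactSupport g)
    (hnonneg : ∀ p, 0 ≤ g p) (hB : ∀ T, 0 ≤ T → ∫ t in 0..T, g (m t) ≤ B) :
    Tendsto (g ∘ m) atTop (𝓝 0) := by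
  obtain ⟨L, hL⟩ := hm.exists_lipschitzOnWith hU hbdd
  exact tendsto_zero_of_uniformContinuousOn_of_integral_le
    ((hgc.uniformContinuous_of_continuous hg).comp_uniformContinuousOn hL.uniformContinuousOn)
    (fun t _ => hnonneg (m t)) hB

lemma exists_rotated_bump {U : (Fin 2 → ℝ) → Fin 2 → ℝ} {q : Fin 2 → ℝ} {s : Set (Fin 2 → ℝ)}
    (hU : ContDiff ℝ 1 U) (hs : s ∈ 𝓝 q) :
    ∃ V : (Fin 2 → ℝ) → Fin 2 → ℝ, ContDiff ℝ 1 V ∧ HasCompactSupport V ∧ tsupport V ⊆ s ∧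
      (∀ p, 0 ≤ planarCross (V p) (U p)) ∧ (planarCross (V q) (U q) = 0 → U q = 0) := by
  obtain ⟨ε, hε, hball⟩ := Metric.nhds_basis_closedBall.mem_iff.1 hs
  let ψ : ContDiffBump q := ⟨ε / 2, ε, half_pos hε, half_lt_self hε⟩
  have hcross (p : Fin 2 → ℝ) :
      planarCross (ψ p • ![U p 1, -U p 0]) (U p) = ψ p * (U p 1 ^ 2 + U p 0 ^ 2) := by
    simp only [planarCross, Pi.smul_apply, smul_eq_mul, Matrix.cons_val_zero,
      Matrix.cons_val_one]
    ring
  refine ⟨fun p => ψ p • ![U p 1, -U p 0], ?_, ψ.hasCompactSupport.smul_right, ?_,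
    fun p => ?_, fun hq => ?_⟩
  · exact ψ.contDiff.smul (contDiff_pi.2 (Fin.forall_fin_two.2
      ⟨contDiff_pi.1 hU 1, (contDiff_pi.1 hU 0).neg⟩))
  · exact (tsupport_smul_subset_left _ _).trans (ψ.tsupport_eq.trans_subset hball)
  · rw [hcross]
    exact mul_nonneg ψ.nonneg (by positivity)
  · rw [hcross, ψ.one_of_mem_closedBall (Metric.mem_closedBall_self ψ.rIn_pos.le), one_mul] at hq
    obtain ⟨h₁, h₀⟩ := (add_eq_zero_iff_of_nonneg (sq_nonneg _) (sq_nonneg _)).1 hq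
    exact funext (Fin.forall_fin_two.2
      ⟨pow_eq_zero_iff two_ne_zero |>.1 h₀, pow_eq_zero_iff two_ne_zero |>.1 h₁⟩)

lemma IsForwardSolution.eq_zero_of_mapClusterPt_of_divergence_neg
    {U : (Fin 2 → ℝ) → Fin 2 → ℝ} {m : ℝ → Fin 2 → ℝ} {l u q : Fin 2 → ℝ}
    (hm : IsForwardSolution U m) (hU : ContDiff ℝ 1 U)
    (hUdiv : ∀ p ∈ Icc l u, divergence U p ≤ 0)
    (hmlu : ∀ t, 0 ≤ t → ∀ i, l i < m t i ∧ m t i < u i) (hq : MapClusterPt q atTop m)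
    (hneg : divergence U q < 0) : U q = 0 := by
  have hbdd : Bornology.IsBounded (m '' Ici 0) :=
    (isCompact_Icc (a := l) (b := u)).isBounded.subset (image_subset_iff.2 fun t ht =>
      ⟨fun i => (hmlu t ht i).1.le, fun i => (hmlu t ht i).2.le⟩)
  obtain ⟨V, hV, hVc, hVneg, hnonneg, hzero⟩ := exists_rotated_bump hU
    (((continuous_divergence hU).tendsto q).eventually_lt_const hneg)
  obtain ⟨C, hC, hVdiv⟩ := exists_abs_divergence_le_mul_neg_divergence hU hV hVc hVneg
  obtain ⟨B, hB⟩ := hm.exists_abs_integral_planarCross_le hU hV hVc hC hUdiv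
    (fun p hp => hVdiv p (hUdiv p hp)) hmlu
  have hcrossc : Continuous fun p => planarCross (V p) (U p) := by
    have hUc := hU.continuous
    have hVc := hV.continuous
    unfold planarCross
    fun_prop
  have hcross_supp : HasCompactSupport fun p => planarCross (V p) (U p) :=
    hVc.mono fun p hp hVp => hp (by simp [hVp, planarCross])
  have hlim := hm.tendsto_zero_of_hasCompactSupport hU.continuous hbdd hcrossc hcross_supp hnonneg
    fun T hT => (le_abs_self _).trans (hB T hT)
  have hcluster : ClusterPt (planarCross (V q) (U q)) (𝓝 0) :=
    (hq.continuousAt_comp hcrossc.continuousAt).clusterPt.mono hlim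
  exact hzero (eq_of_nhds_neBot hcluster)

end LimitPoints

section ROS

/-- The vector field of a return-on-spend autobidding system in the smooth limit: the utility
`U p i` of bidder `i` strictly decreases in the multiplier `p i > 1`, and is nonnegative when
`p i = 1`. -/
structure IsROSField {ι : Type*} [Fintype ι] [DecidableEq ι] (U : (ι → ℝ) → ι → ℝ) : Prop where
  contDiff : ContDiff ℝ 1 U
  fderiv_single_neg : ∀ (i : ι) (p : ι → ℝ), 1 < p i → fderiv ℝ U p (Pi.single i 1) i < 0
  nonneg_of_eq_one : ∀ (p : ι → ℝ) (i : ι), p i = 1 → 0 ≤ U p i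

namespace IsROSField

variable {ι : Type*} [Fintype ι] [DecidableEq ι] {U : (ι → ℝ) → ι → ℝ} {p l u : ι → ℝ} {i : ι}

lemma fderiv_single_nonpos (hU : IsROSField U) (hp : 1 ≤ p i) :
    fderiv ℝ U p (Pi.single i 1) i ≤ 0 := by
  have hcont : Continuous fun x => fderiv ℝ U (Function.update p i x) (Pi.single i 1) i := by
    have := hU.contDiff.continuous_fderiv one_ne_zero
    fun_prop
  have hright := hcont.continuousWithinAt (s := Ioi (p i)) (x := p i)
  rw [ContinuousWithinAt, Function.update_eq_self] at hright
  exact le_of_tendsto hright (eventually_mem_nhdsWithin.mono fun x hx =>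
    (hU.fderiv_single_neg i _ (by simpa using hp.trans_lt hx)).le)

lemma divergence_nonpos (hU : IsROSField U) (hp : ∀ i, 1 ≤ p i) : divergence U p ≤ 0 :=
  Finset.sum_nonpos fun i _ => hU.fderiv_single_nonpos (hp i)

lemma divergence_neg (hU : IsROSField U) (hp : ∀ i, 1 ≤ p i) (hi : 1 < p i) :
    divergence U p < 0 :=
  Finset.sum_neg' (fun j _ => hU.fderiv_single_nonpos (hp j))
    ⟨i, Finset.mem_univ i, hU.fderiv_single_neg i p hi⟩

lemma strictAntiOn_update (hU : IsROSField U) (p : ι → ℝ) (i : ι) :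
    StrictAntiOn (fun x => U (Function.update p i x) i) (Ici 1) := by
  have hderiv (x : ℝ) : HasDerivAt (fun x => U (Function.update p i x) i)
      (fderiv ℝ U (Function.update p i x) (Pi.single i 1) i) x :=
    hasDerivAt_pi.1 ((hU.contDiff.differentiable one_ne_zero _).hasFDerivAt.comp_hasDerivAt x
      (hasDerivAt_update p i x)) i
  refine strictAntiOn_of_deriv_neg (convex_Ici 1)
    (fun x _ => (hderiv x).continuousAt.continuousWithinAt) fun x hx => ?_
  rw [interior_Ici] at hx
  rw [(hderiv x).deriv]
  exact hU.fderiv_single_neg i _ (by simpa using hx)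

lemma apply_nonneg_of_update_eq_zero (hU : IsROSField U) {y : ℝ} (hp : 1 ≤ p i) (hpy : p i ≤ y)
    (hy : U (Function.update p i y) i = 0) : 0 ≤ U p i := by
  have := (hU.strictAntiOn_update p i).antitoneOn hp (hp.trans hpy) hpy
  simpa only [Function.update_eq_self, hy] using this

lemma apply_nonpos_of_update_eq_zero (hU : IsROSField U) {y : ℝ} (hy₁ : 1 ≤ y) (hyp : y ≤ p i)
    (hy : U (Function.update p i y) i = 0) : U p i ≤ 0 := by
  have := (hU.strictAntiOn_update p i).antitoneOn hy₁ (hy₁.trans hyp) hyp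
  simpa only [Function.update_eq_self, hy] using this

lemma forall_lt_and_lt_of_exists_update_eq_zero {m : ℝ → ι → ℝ} (hU : IsROSField U)
    (hm : IsForwardSolution U m) (hl : ∀ i, 1 ≤ l i)
    (hnull : ∀ p ∈ Icc l u, ∀ i, ∃ y ∈ Icc (l i) (u i), U (Function.update p i y) i = 0)
    (h0 : ∀ i, l i < m 0 i ∧ m 0 i < u i) {t : ℝ} (ht : 0 ≤ t) (i : ι) :
    l i < m t i ∧ m t i < u i := by
  refine hm.forall_lt_and_lt hU.contDiff (fun p hp j hj => ?_) (fun p hp j hj => ?_) h0 ht i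
  · obtain ⟨y, hy, hzero⟩ := hnull p hp j
    exact hU.apply_nonneg_of_update_eq_zero (hj ▸ hl j) (hj ▸ hy.1) hzero
  · obtain ⟨y, hy, hzero⟩ := hnull p hp j
    exact hU.apply_nonpos_of_update_eq_zero ((hl j).trans hy.1) (hj ▸ hy.2) hzero

lemma one_lt (hU : IsROSField U) {m : ℝ → ι → ℝ} (hm : IsForwardSolution U m)
    (hmu : ∀ t, 0 ≤ t → m t ≤ u) (h0 : ∀ i, 1 < m 0 i) {t : ℝ} (ht : 0 ≤ t) (i : ι) :
    1 < m t i :=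
  hm.forall_lower_lt (l := 1) hU.contDiff (fun p _ i => hU.nonneg_of_eq_one p i) hmu h0 ht i

end IsROSField

end ROS

section Convergence

lemma exists_mapClusterPt_apply_eq {X : Type*} [PseudoMetricSpace X] [ProperSpace X] {m : ℝ → X}
    {f : X → ℝ} {p q : X} {c : ℝ} (hf : Continuous f) (hm : ContinuousOn m (Ici 0))
    (hbdd : Bornology.IsBounded (m '' Ici 0)) (hp : MapClusterPt p atTop m)
    (hq : MapClusterPt q atTop m) (hpc : f p < c) (hcq : c < f q) :
    ∃ w, MapClusterPt w atTop m ∧ f w = c := by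
  have hcross : ∃ᶠ t in atTop, m t ∈ closure (m '' Ici 0) ∩ f ⁻¹' {c} := by
    refine frequently_atTop.2 fun T => ?_
    obtain ⟨s, hs, hsc⟩ := frequently_atTop.1
      (hp.frequently ((hf.tendsto p).eventually_lt_const hpc)) (max T 0)
    obtain ⟨t, ht, hct⟩ := frequently_atTop.1
      (hq.frequently ((hf.tendsto q).eventually_const_lt hcq)) s
    have hs₀ : Icc s t ⊆ Ici 0 := fun r hr => (le_max_right T 0).trans (hs.trans hr.1)
    obtain ⟨r, hr, hrc⟩ := intermediate_value_Icc ht (hf.comp_continuousOn (hm.mono hs₀))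
      ⟨hsc.le, hct.le⟩
    exact ⟨r, (le_max_left T 0).trans (hs.trans hr.1),
      subset_closure (mem_image_of_mem m (hs₀ hr)), hrc⟩
  obtain ⟨w, hw, hcluster⟩ := (hbdd.isCompact_closure.inter_right
    (isClosed_singleton.preimage hf)).exists_mapClusterPt_of_frequently hcross
  exact ⟨w, hcluster, hw.2⟩

lemma exists_continuousOn_leftInverse {X Y : Type*} [TopologicalSpace X] [TopologicalSpace Y]
    [T2Space Y] [Nonempty X] {f : X → Y} {K : Set X} (hK : IsCompact K) (hf : ContinuousOn f K)
    (hinj : InjOn f K) : ∃ g : Y → X, ContinuousOn g (f '' K) ∧ ∀ x ∈ K, g (f x) = x := by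
  have hleft (x : X) (hx : x ∈ K) : Function.invFunOn f K (f x) = x := hinj.leftInvOn_invFunOn hx
  refine ⟨Function.invFunOn f K, continuousOn_iff_isClosed.2 fun C hC =>
    ⟨f '' (K ∩ C), ((hK.inter_right hC).image_of_continuousOn
      (hf.mono inter_subset_left)).isClosed, ?_⟩, hleft⟩
  ext y
  constructor
  · rintro ⟨hy, x, hx, rfl⟩
    exact ⟨⟨x, ⟨hx, by rwa [mem_preimage, hleft x hx] at hy⟩, rfl⟩, mem_image_of_mem f hx⟩
  · rintro ⟨⟨x, ⟨hx, hxC⟩, rfl⟩, hy⟩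
    exact ⟨by rwa [mem_preimage, hleft x hx], hy⟩

lemma image_Icc_eq_uIcc_of_injOn {f : ℝ → ℝ} {a b : ℝ} (hab : a ≤ b)
    (hf : ContinuousOn f (Icc a b)) (hinj : InjOn f (Icc a b)) :
    f '' Icc a b = uIcc (f a) (f b) := by
  refine Subset.antisymm ?_ (uIcc_of_le hab ▸ intermediate_value_uIcc (uIcc_of_le hab ▸ hf))
  rcases hf.strictMonoOn_of_injOn_Icc' hab hinj with hmono | hanti
  · exact hmono.monotoneOn.image_Icc_subset.trans Icc_subset_uIcc
  · exact hanti.antitoneOn.image_Icc_subset.trans Icc_subset_uIcc'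

lemma mem_uIoo_of_mem_uIcc {α : Type*} [LinearOrder α] {x a b : α} (hx : x ∈ uIcc a b)
    (ha : x ≠ a) (hb : x ≠ b) : x ∈ uIoo a b := by
  refine ⟨lt_of_le_of_ne hx.1 fun h => ?_, lt_of_le_of_ne hx.2 fun h => ?_⟩
  · exact (min_choice a b).elim (fun h' => ha (h.symm.trans h')) fun h' => hb (h.symm.trans h')
  · exact (max_choice a b).elim (fun h' => ha (h.trans h')) fun h' => hb (h.trans h')

lemma exists_update_mem_of_injOn {Ω : Set (Fin 2 → ℝ)} {a b : Fin 2 → ℝ} (hΩ : IsCompact Ω)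
    (hinj : ∀ i, InjOn (fun p : Fin 2 → ℝ => p i) Ω) (ha : a ∈ Ω) (hb : b ∈ Ω) (hab : a 0 < b 0)
    (hcover : Icc (a 0) (b 0) ⊆ (fun p => p 0) '' Ω) :
    (∀ p ∈ Icc (a ⊓ b) (a ⊔ b), ∀ i, ∃ y ∈ uIcc (a i) (b i), Function.update p i y ∈ Ω) ∧
      ∃ w ∈ Ω, ∀ i, (a ⊓ b) i < w i ∧ w i < (a ⊔ b) i := by
  obtain ⟨g, hg, hgΩ⟩ := exists_continuousOn_leftInverse hΩ (continuous_apply 0).continuousOn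
    (hinj 0)
  have hmem (c : ℝ) (hc : c ∈ Icc (a 0) (b 0)) : g c ∈ Ω ∧ g c 0 = c := by
    obtain ⟨x, hx, rfl⟩ := hcover hc
    exact (hgΩ x hx).symm ▸ ⟨hx, rfl⟩
  have hψinj : InjOn (fun c => g c 1) (Icc (a 0) (b 0)) := fun c hc d hd hcd => by
    rw [← (hmem c hc).2, ← (hmem d hd).2, hinj 1 (hmem c hc).1 (hmem d hd).1 hcd]
  have himage : (fun c => g c 1) '' Icc (a 0) (b 0) = uIcc (a 1) (b 1) := by
    simpa only [hgΩ a ha, hgΩ b hb] using image_Icc_eq_uIcc_of_injOn (f := fun c => g c 1) hab.le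
      ((continuous_apply 1).comp_continuousOn (hg.mono hcover)) hψinj
  refine ⟨fun p hp => Fin.forall_fin_two.2 ⟨?_, ?_⟩, ?_⟩
  · obtain ⟨c, hc, hcp⟩ : p 1 ∈ (fun c => g c 1) '' Icc (a 0) (b 0) :=
      himage ▸ ⟨hp.1 1, hp.2 1⟩
    refine ⟨c, Icc_subset_uIcc hc, ?_⟩
    convert (hmem c hc).1
    exact funext (Fin.forall_fin_two.2 ⟨by simp [(hmem c hc).2], by simp [← hcp]⟩)
  · have hp₀ : p 0 ∈ Icc (a 0) (b 0) := uIcc_of_le hab.le ▸ ⟨hp.1 0, hp.2 0⟩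
    refine ⟨g (p 0) 1, himage ▸ mem_image_of_mem _ hp₀, ?_⟩
    convert (hmem _ hp₀).1
    exact funext (Fin.forall_fin_two.2 ⟨by simp [(hmem _ hp₀).2], by simp⟩)
  · obtain ⟨c, hac, hcb⟩ := exists_between hab
    have hc : c ∈ Icc (a 0) (b 0) := ⟨hac.le, hcb.le⟩
    obtain ⟨hcΩ, hc₀⟩ := hmem c hc
    have hne (x : Fin 2 → ℝ) (hx : x ∈ Ω) (hxc : x 0 ≠ c) : g c 1 ≠ x 1 :=
      fun h => hxc (hc₀ ▸ congrArg (· 0) (hinj 1 hcΩ hx h).symm)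
    exact ⟨g c, hcΩ, Fin.forall_fin_two.2
      ⟨hc₀.symm ▸ ⟨inf_lt_of_left_lt hac, lt_sup_of_lt_right hcb⟩,
        mem_uIoo_of_mem_uIcc (himage ▸ mem_image_of_mem _ hc) (hne a ha hac.ne)
          (hne b hb hcb.ne')⟩⟩

lemma IsForwardSolution.comp_add_const {E : Type*} [NormedAddCommGroup E] [NormedSpace ℝ E]
    {U : E → E} {m : ℝ → E} {s : ℝ} (hm : IsForwardSolution U m) (hs : 0 ≤ s) :
    IsForwardSolution U fun t => m (t + s) :=
  fun t ht => (hm (t + s) (add_nonneg ht hs)).comp_add_const t s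

namespace IsROSField

variable {U : (Fin 2 → ℝ) → Fin 2 → ℝ} {m : ℝ → Fin 2 → ℝ} {u p q : Fin 2 → ℝ}

lemma apply_eq_zero_of_mapClusterPt (hU : IsROSField U) (hm : IsForwardSolution U m)
    (hmu : ∀ t, 0 ≤ t → ∀ i, 1 < m t i ∧ m t i < u i) (hq : MapClusterPt q atTop m)
    (hq₁ : ∀ i, 1 ≤ q i) : U q = 0 := by
  by_cases hcorner : ∀ i, q i = 1
  · have hbdd : Bornology.IsBounded (m '' Ici 0) :=
      (isCompact_Icc (a := 1) (b := u)).isBounded.subset (image_subset_iff.2 fun t ht =>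
        ⟨fun i => (hmu t ht i).1.le, fun i => (hmu t ht i).2.le⟩)
    exact funext fun i => (hm.apply_nonpos_of_mapClusterPt hU.contDiff.continuous hbdd hq
      fun t ht => (hcorner i).trans_le (hmu t ht i).1.le).antisymm
        (hU.nonneg_of_eq_one q i (hcorner i))
  · obtain ⟨i, hi⟩ := not_forall.1 hcorner
    exact hm.eq_zero_of_mapClusterPt_of_divergence_neg hU.contDiff
      (fun p hp => hU.divergence_nonpos hp.1) hmu hq
      (hU.divergence_neg hq₁ (lt_of_le_of_ne' (hq₁ i) hi))

lemma one_le_and_apply_eq_zero_of_mapClusterPt (hU : IsROSField U) (hm : IsForwardSolution U m)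
    (h0 : ∀ i, 1 < m 0 i) (hbdd : Bornology.IsBounded (m '' Ici 0))
    (hq : MapClusterPt q atTop m) : (∀ i, 1 ≤ q i) ∧ U q = 0 := by
  obtain ⟨u, hu⟩ := hbdd.bddAbove
  have hmu (t : ℝ) (ht : 0 ≤ t) : m t ≤ u := hu (mem_image_of_mem m ht)
  have hm₁ (t : ℝ) (ht : 0 ≤ t) (i : Fin 2) : 1 < m t i := hU.one_lt hm hmu h0 ht i
  have hq₁ : q ∈ Ici 1 := isClosed_Ici.mem_of_mapClusterPt hq
    ((eventually_ge_atTop 0).mono fun t ht i => (hm₁ t ht i).le)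
  exact ⟨hq₁, hU.apply_eq_zero_of_mapClusterPt (u := u + 1) hm
    (fun t ht i => ⟨hm₁ t ht i, (hmu t ht i).trans_lt (lt_add_one _)⟩) hq hq₁⟩

lemma eq_of_apply_eq_zero (hU : IsROSField U) (hp : ∀ i, 1 ≤ p i) (hq : ∀ i, 1 ≤ q i)
    (hUp : U p = 0) (hUq : U q = 0) {j : Fin 2} (hj : p j = q j) : p = q := by
  obtain ⟨i, hij⟩ := exists_ne j
  have hothers (k : Fin 2) (hk : k ≠ i) : k = j := by omega
  have hupdate : Function.update p i (q i) = q :=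
    Function.update_eq_iff.2 ⟨rfl, fun k hk => hothers k hk ▸ hj⟩
  have hi : p i = q i := (hU.strictAntiOn_update p i).injOn (hp i) (hq i) (by
    simp only [Function.update_eq_self, hupdate, hUp, hUq])
  rw [← hupdate, ← hi, Function.update_eq_self]

/-- If `p 0 < q 0` for two cluster points, then there are cluster points `a`, `b` with
`p 0 < a 0 < b 0 < q 0`; the box with corners `a` and `b` captures the orbit for good, so that `p`
cannot be a cluster point. -/
lemma mapClusterPt_apply_zero_le (hU : IsROSField U) (hm : IsForwardSolution U m)
    (hbdd : Bornology.IsBounded (m '' Ici 0))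
    (heq : ∀ w, MapClusterPt w atTop m → (∀ i, 1 ≤ w i) ∧ U w = 0)
    (hp : MapClusterPt p atTop m) (hq : MapClusterPt q atTop m) : q 0 ≤ p 0 := by
  by_contra! hpq
  have hcoord {c : ℝ} (hpc : p 0 < c) (hcq : c < q 0) : ∃ w, MapClusterPt w atTop m ∧ w 0 = c :=
    exists_mapClusterPt_apply_eq (continuous_apply 0) hm.continuousOn hbdd hp hq hpc hcq
  obtain ⟨c₁, hpc₁, hc₁q⟩ := exists_between hpq
  obtain ⟨c₂, hc₁₂, hc₂q⟩ := exists_between hc₁q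
  obtain ⟨a, ha, rfl⟩ := hcoord hpc₁ hc₁q
  obtain ⟨b, hb, rfl⟩ := hcoord (hpc₁.trans hc₁₂) hc₂q
  have hΩ : IsCompact {w | MapClusterPt w atTop m} :=
    hbdd.isCompact_closure.of_isClosed_subset isClosed_setOfPred_clusterPt fun w hw =>
      isClosed_closure.mem_of_mapClusterPt hw ((eventually_ge_atTop 0).mono fun t ht =>
        subset_closure (mem_image_of_mem m ht))
  obtain ⟨hnull, w, hw, hwbox⟩ := exists_update_mem_of_injOn hΩ
    (fun i x hx y hy hxy => hU.eq_of_apply_eq_zero (heq x hx).1 (heq y hy).1 (heq x hx).2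
      (heq y hy).2 hxy) ha hb hc₁₂ fun c hc => hcoord (hpc₁.trans_le hc.1) (hc.2.trans_lt hc₂q)
  have henter : ∀ᶠ x in 𝓝 w, ∀ i, (a ⊓ b) i < x i ∧ x i < (a ⊔ b) i :=
    eventually_all.2 fun i => ((continuous_apply i).tendsto w).eventually
      (Ioo_mem_nhds (hwbox i).1 (hwbox i).2)
  obtain ⟨s, hs, hs₀⟩ := ((hw.frequently henter).and_eventually (eventually_ge_atTop 0)).exists
  have htrap {t : ℝ} (ht : 0 ≤ t) : a 0 < m (t + s) 0 := by
    have := (hU.forall_lt_and_lt_of_exists_update_eq_zero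
      (l := a ⊓ b) (u := a ⊔ b) (hm.comp_add_const hs₀)
      (fun i => le_inf ((heq a ha).1 i) ((heq b hb).1 i))
      (fun x hx i => (hnull x hx i).imp fun y hy => ⟨hy.1, congrFun (heq _ hy.2).2 i⟩)
      (by simpa only [zero_add] using hs) ht 0).1
    rwa [Pi.inf_apply, inf_eq_left.2 hc₁₂.le] at this
  obtain ⟨t, hta, hst⟩ := ((hp.frequently (((continuous_apply 0).tendsto p).eventually_lt_const
    hpc₁)).and_eventually (eventually_ge_atTop s)).exists
  have := htrap (sub_nonneg.2 hst)
  rw [sub_add_cancel] at this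
  exact this.not_gt hta

lemma eq_of_mapClusterPt (hU : IsROSField U) (hm : IsForwardSolution U m)
    (hbdd : Bornology.IsBounded (m '' Ici 0))
    (heq : ∀ w, MapClusterPt w atTop m → (∀ i, 1 ≤ w i) ∧ U w = 0)
    (hp : MapClusterPt p atTop m) (hq : MapClusterPt q atTop m) : p = q :=
  hU.eq_of_apply_eq_zero (heq p hp).1 (heq q hq).1 (heq p hp).2 (heq q hq).2
    ((hU.mapClusterPt_apply_zero_le hm hbdd heq hq hp).antisymm
      (hU.mapClusterPt_apply_zero_le hm hbdd heq hp hq))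

end IsROSField

end Convergence

end

/-- Two-bidder ROS convergence: if `U : ℝ² → ℝ²` is C¹ with
`∂Uᵢ/∂mᵢ(m) < 0` whenever `mᵢ > 1` and `Uᵢ(m) ≥ 0` whenever `mᵢ = 1`,
then every solution of `m' = U m` starting in `(1,∞)²` with bounded forward
orbit converges to an equilibrium `p ∈ [1,∞)²`. -/
theorem two_bidder_ros_convergence
    (U : (Fin 2 → ℝ) → (Fin 2 → ℝ))
    (hU : ContDiff ℝ 1 U)
    (hpartial : ∀ (i : Fin 2) (m : Fin 2 → ℝ), 1 < m i →
      fderiv ℝ U m (Pi.single i 1) i < 0)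
    (hbd : ∀ (m : Fin 2 → ℝ) (i : Fin 2), m i = 1 → 0 ≤ U m i)
    (m : ℝ → (Fin 2 → ℝ))
    (hm : ∀ t : ℝ, 0 ≤ t → HasDerivAt m (U (m t)) t)
    (h0 : ∀ i, 1 < m 0 i)
    (hbdd : Bornology.IsBounded (m '' Set.Ici (0 : ℝ))) :
    ∃ p : Fin 2 → ℝ, (∀ i, 1 ≤ p i) ∧ U p = 0 ∧
      Filter.Tendsto m Filter.atTop (nhds p) := by
  have hROS : IsROSField U := ⟨hU, hpartial, hbd⟩
  have hequilibrium (w : Fin 2 → ℝ) (hw : MapClusterPt w atTop m) :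
      (∀ i, 1 ≤ w i) ∧ U w = 0 :=
    hROS.one_le_and_apply_eq_zero_of_mapClusterPt hm h0 hbdd hw
  have hmem : ∀ᶠ t in atTop, m t ∈ closure (m '' Ici 0) :=
    (eventually_ge_atTop 0).mono fun t ht => subset_closure (mem_image_of_mem m ht)
  obtain ⟨p, -, hp⟩ := hbdd.isCompact_closure.exists_mapClusterPt_of_frequently hmem.frequently
  exact ⟨p, (hequilibrium p hp).1, (hequilibrium p hp).2,
    hbdd.isCompact_closure.tendsto_nhds_of_unique_mapClusterPt hmem fun q _ hq =>
      hROS.eq_of_mapClusterPt hm hbdd hequilibrium hq hp⟩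
end
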